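/- arXiv:1312.2568 — 2 statements merged into one kernel-verified Lean document; each statement's English description precedes it below -/
import Mathlib

section
/- Let d ≥ 3 be an integer, u_⋆(x) = (1+|x|²)^{−(d−2)/2}, f_0 = u_⋆, f_i(x) = x_i u_⋆(x)/(1+|x|²) for i = 1,…,d, and f_{d+1}(x) = (1−|x|²) u_⋆(x)/(1+|x|²). Define F[f] = ∫ |∇f|² dx − d(d+2) ∫ f² (1+|x|²)^{−2} dx and G[f] = (1/(d(d+2))) ∫ f² (1+|x|²)^{−2} dx − ∫ (f/(1+|x|²)²) (−Δ)^{−1}( f/(1+|x|²)² ) dx. Then: (i) for every g in L²(ℝ^d, (1+|x|²)^{−2} dx) satisfying ∫ g f_i (1+|x|²)^{−2} dx = 0 for all i = 0, 1, …, d+1, one has ∫ (g/(1+|x|²)²) (−Δ)^{−1}( g/(1+|x|²)² ) dx ≤ (1/((d+2)(d+4))) ∫ g² (1+|x|²)^{−2} dx; and (ii) for every f in D^{1,2}(ℝ^d) satisfying the same orthogonality conditions, (4/(d(d+2)(d+4))) ∫ f² (1+|x|²)^{−2} dx ≤ G[f] ≤ (1/(d(d+2)²(d+4))) F[f], and both inequalities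 in (ii) are achieved by some nonzero f in L²(ℝ^d, (1+|x|²)^{−2} dx). -/
open MeasureTheory Real

noncomputable section

/-- Surface area of the unit sphere `𝕊^{d-1} ⊆ ℝ^d`. -/
def sphereArea (d : ℕ) : ℝ := 2 * Real.pi ^ ((d : ℝ) / 2) / Real.Gamma ((d : ℝ) / 2)

/-- Green function of `-Δ` on `ℝ^d`, `d ≥ 3`: `G_d(x) = |x|^{2-d} / ((d-2)|𝕊^{d-1}|)`. -/
def greenKernel (d : ℕ) (x : EuclideanSpace ℝ (Fin d)) : ℝ :=
  ‖x‖ ^ ((2 : ℝ) - d) / (((d : ℝ) - 2) * sphereArea d)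

/-- `(−Δ)⁻¹ v`, the convolution of `v` with the Green function of `-Δ` on `ℝ^d`. -/
def invLap (d : ℕ) (v : EuclideanSpace ℝ (Fin d) → ℝ) (x : EuclideanSpace ℝ (Fin d)) : ℝ :=
  ∫ y, greenKernel d (x - y) * v y

/-- The Aubin–Talenti (optimal Sobolev) constant
`S_d = (1/(π d (d−2))) (Γ(d)/Γ(d/2))^{2/d}`. -/
def sobolevConst (d : ℕ) : ℝ :=
  1 / (Real.pi * d * ((d : ℝ) - 2)) *
    (Real.Gamma (d : ℝ) / Real.Gamma ((d : ℝ) / 2)) ^ ((2 : ℝ) / (d : ℝ))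

/-- Membership in `D^{1,2}(ℝ^d)`: a (weakly) differentiable function with
`∇u ∈ L²` and `u ∈ L^{2*}`, `2* = 2d/(d-2)`. -/
def MemD12 (d : ℕ) (u : EuclideanSpace ℝ (Fin d) → ℝ) : Prop :=
  Differentiable ℝ u ∧
  Integrable (fun x => ‖gradient u x‖ ^ 2) ∧
  Integrable (fun x => |u x| ^ (2 * (d : ℝ) / ((d : ℝ) - 2)))

/-- The `L^p` norm of `u`, written with real exponents: `(∫ |u|^p)^{1/p}`. -/
def lpNorm' {d : ℕ} (p : ℝ) (u : EuclideanSpace ℝ (Fin d) → ℝ) : ℝ :=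
  (∫ x, |u x| ^ p) ^ (1 / p)

/-- The Laplacian `Δu = ∑ ∂²u/∂x_i²`. -/
def lap (d : ℕ) (u : EuclideanSpace ℝ (Fin d) → ℝ) (x : EuclideanSpace ℝ (Fin d)) : ℝ :=
  ∑ i : Fin d, iteratedFDeriv ℝ 2 u x ![EuclideanSpace.single i 1, EuclideanSpace.single i 1]

/-- The Aubin–Talenti extremal function `u_⋆(x) = (1+|x|²)^{−(d−2)/2}`. -/
def uAT (d : ℕ) (x : EuclideanSpace ℝ (Fin d)) : ℝ :=
  (1 + ‖x‖ ^ 2) ^ (-(((d : ℝ) - 2) / 2))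

/-- `f_i(x) = x_i u_⋆(x)/(1+|x|²)`, `i = 1, …, d`. -/
def atFi (d : ℕ) (i : Fin d) (x : EuclideanSpace ℝ (Fin d)) : ℝ :=
  x i * uAT d x / (1 + ‖x‖ ^ 2)

/-- `f_{d+1}(x) = (1−|x|²) u_⋆(x)/(1+|x|²)`. -/
def atFlast (d : ℕ) (x : EuclideanSpace ℝ (Fin d)) : ℝ :=
  (1 - ‖x‖ ^ 2) * uAT d x / (1 + ‖x‖ ^ 2)

/-- Orthogonality, in `L²(ℝ^d, (1+|x|²)^{−2} dx)`, to `f_0 = u_⋆`, `f_1, …, f_d` and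
`f_{d+1}`. -/
def orthAT (d : ℕ) (f : EuclideanSpace ℝ (Fin d) → ℝ) : Prop :=
  (∫ x, f x * uAT d x / (1 + ‖x‖ ^ 2) ^ 2) = 0 ∧
  (∀ i : Fin d, (∫ x, f x * atFi d i x / (1 + ‖x‖ ^ 2) ^ 2) = 0) ∧
  (∫ x, f x * atFlast d x / (1 + ‖x‖ ^ 2) ^ 2) = 0

/-- The quadratic form `F`, the second-order expansion of the Sobolev deficit
around the Aubin–Talenti function. -/
def quadF (d : ℕ) (f : EuclideanSpace ℝ (Fin d) → ℝ) : ℝ :=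
  (∫ x, ‖gradient f x‖ ^ 2) -
    (d : ℝ) * ((d : ℝ) + 2) * ∫ x, f x ^ 2 / (1 + ‖x‖ ^ 2) ^ 2

/-- The quadratic form `G`, the second-order expansion of the Hardy-Littlewood-Sobolev
deficit around the Aubin–Talenti function. -/
def quadG (d : ℕ) (f : EuclideanSpace ℝ (Fin d) → ℝ) : ℝ :=
  1 / ((d : ℝ) * ((d : ℝ) + 2)) * (∫ x, f x ^ 2 / (1 + ‖x‖ ^ 2) ^ 2) -
    ∫ x, f x / (1 + ‖x‖ ^ 2) ^ 2 *
      invLap d (fun y => f y / (1 + ‖y‖ ^ 2) ^ 2) x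

/-- The conformal weight `1 + |x|²`. -/
def rho {d : ℕ} (x : EuclideanSpace ℝ (Fin d)) : ℝ := 1 + ‖x‖ ^ 2

/-- The partial derivative in direction `i`. -/
def pd {d : ℕ} (i : Fin d) (f : EuclideanSpace ℝ (Fin d) → ℝ) (x : EuclideanSpace ℝ (Fin d)) : ℝ :=
  fderiv ℝ f x (EuclideanSpace.single i 1)

lemma rho_pos {d : ℕ} (x : EuclideanSpace ℝ (Fin d)) : 0 < rho x := by unfold rho; positivity

lemma one_le_rho {d : ℕ} (x : EuclideanSpace ℝ (Fin d)) : 1 ≤ rho x := by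
  unfold rho; nlinarith [sq_nonneg ‖x‖]

lemma norm_le_rho_sqrt {d : ℕ} (x : EuclideanSpace ℝ (Fin d)) : ‖x‖ ≤ rho x ^ ((1 : ℝ) / 2) := by
  rw [← Real.sqrt_eq_rpow]
  apply Real.le_sqrt_of_sq_le
  unfold rho; linarith

lemma coord_le_norm {d : ℕ} (x : EuclideanSpace ℝ (Fin d)) (i : Fin d) : |x i| ≤ ‖x‖ := by
  simpa using PiLp.norm_apply_le x i

@[fun_prop]
lemma continuous_rho {d : ℕ} : Continuous (rho (d := d)) := by unfold rho; fun_prop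

@[fun_prop]
lemma continuous_rho_rpow {d : ℕ} (a : ℝ) :
    Continuous (fun x : EuclideanSpace ℝ (Fin d) => rho x ^ a) :=
  continuous_rho.rpow_const (fun x => Or.inl (rho_pos x).ne')

lemma rho_rpow_le {d : ℕ} (x : EuclideanSpace ℝ (Fin d)) {a b : ℝ} (h : a ≤ b) :
    rho x ^ a ≤ rho x ^ b := Real.rpow_le_rpow_of_exponent_le (one_le_rho x) h

lemma integrable_rho {d : ℕ} {a : ℝ} (ha : a < -((d : ℝ) / 2)) :
    Integrable (fun x : EuclideanSpace ℝ (Fin d) => rho x ^ a) := by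
  have := integrable_rpow_neg_one_add_norm_sq (E := EuclideanSpace ℝ (Fin d)) (μ := volume)
    (r := -(2 * a)) (by simp; linarith)
  convert this using 3
  · rfl
  · ring

/-- Peetre's inequality. -/
lemma rho_peetre {d : ℕ} (x y : EuclideanSpace ℝ (Fin d)) : rho y ≤ 2 * rho x * rho (y - x) := by
  unfold rho
  have h : ‖y‖ ≤ ‖x‖ + ‖y - x‖ := by
    calc ‖y‖ = ‖x + (y - x)‖ := by congr 1; abel
      _ ≤ _ := norm_add_le _ _
  have h2 : ‖y‖ ^ 2 ≤ (‖x‖ + ‖y - x‖) ^ 2 := by gcongr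
  nlinarith [sq_nonneg (‖x‖ - ‖y - x‖), mul_nonneg (sq_nonneg ‖x‖) (sq_nonneg ‖y - x‖),
    sq_nonneg ‖x‖, sq_nonneg ‖y - x‖]

lemma hasFDerivAt_normSq {d : ℕ} (x : EuclideanSpace ℝ (Fin d)) :
    HasFDerivAt (fun x : EuclideanSpace ℝ (Fin d) => ‖x‖ ^ 2) (2 • (innerSL ℝ x)) x :=
  (hasStrictFDerivAt_norm_sq x).hasFDerivAt

/-- Shifted and scaled version of the weight. -/
lemma hasFDerivAt_shift {d : ℕ} (a b : ℝ) (c : EuclideanSpace ℝ (Fin d))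
    (x : EuclideanSpace ℝ (Fin d)) :
    HasFDerivAt (fun y : EuclideanSpace ℝ (Fin d) => a + b * ‖y - c‖ ^ 2)
      (b • (2 • (innerSL ℝ (x - c)))) x := by
  have h := (hasFDerivAt_normSq (x - c)).comp x ((hasFDerivAt_id x).sub_const c)
  simpa using (h.const_mul b).const_add a

lemma hasFDerivAt_shift_rpow {d : ℕ} (a b : ℝ) (ha : 0 < a) (hb : 0 ≤ b)
    (c : EuclideanSpace ℝ (Fin d)) (s : ℝ)
    (x : EuclideanSpace ℝ (Fin d)) :
    HasFDerivAt (fun y : EuclideanSpace ℝ (Fin d) => (a + b * ‖y - c‖ ^ 2) ^ s)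
      ((s * (a + b * ‖x - c‖ ^ 2) ^ (s - 1)) • (b • (2 • (innerSL ℝ (x - c))))) x :=
  (hasFDerivAt_shift a b c x).rpow_const (Or.inl (by positivity))

lemma pd_shift_rpow {d : ℕ} (a b : ℝ) (ha : 0 < a) (hb : 0 ≤ b)
    (c : EuclideanSpace ℝ (Fin d)) (s : ℝ) (i : Fin d)
    (x : EuclideanSpace ℝ (Fin d)) :
    pd i (fun y : EuclideanSpace ℝ (Fin d) => (a + b * ‖y - c‖ ^ 2) ^ s) x =
      2 * s * b * (x i - c i) * (a + b * ‖x - c‖ ^ 2) ^ (s - 1) := by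
  unfold pd
  rw [(hasFDerivAt_shift_rpow a b ha hb c s x).fderiv]
  simp [EuclideanSpace.inner_single_right]
  ring

lemma pd_mul {d : ℕ} (i : Fin d) {f g : EuclideanSpace ℝ (Fin d) → ℝ}
    {x : EuclideanSpace ℝ (Fin d)}
    (hf : DifferentiableAt ℝ f x) (hg : DifferentiableAt ℝ g x) :
    pd i (fun y => f y * g y) x = f x * pd i g x + pd i f x * g x := by
  unfold pd
  rw [fderiv_fun_mul hf hg]
  simp; ring

lemma pd_add {d : ℕ} (i : Fin d) {f g : EuclideanSpace ℝ (Fin d) → ℝ}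
    {x : EuclideanSpace ℝ (Fin d)}
    (hf : DifferentiableAt ℝ f x) (hg : DifferentiableAt ℝ g x) :
    pd i (fun y => f y + g y) x = pd i f x + pd i g x := by
  unfold pd
  rw [fderiv_fun_add hf hg]
  simp

lemma pd_const_mul {d : ℕ} (i : Fin d) {f : EuclideanSpace ℝ (Fin d) → ℝ}
    {x : EuclideanSpace ℝ (Fin d)} (c : ℝ) (hf : DifferentiableAt ℝ f x) :
    pd i (fun y => c * f y) x = c * pd i f x := by
  unfold pd
  rw [fderiv_const_mul hf]
  simp

lemma pd_coord {d : ℕ} (i j : Fin d) (x : EuclideanSpace ℝ (Fin d)) (c : ℝ) :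
    pd i (fun y => y j - c) x = if i = j then 1 else 0 := by
  unfold pd
  have h : HasFDerivAt (fun y : EuclideanSpace ℝ (Fin d) => y j - c)
      (EuclideanSpace.proj j : EuclideanSpace ℝ (Fin d) →L[ℝ] ℝ) x :=
    (EuclideanSpace.proj j : EuclideanSpace ℝ (Fin d) →L[ℝ] ℝ).hasFDerivAt.sub_const c
  rw [h.fderiv]
  simp [eq_comm]

lemma measurable_pd {d : ℕ} (i : Fin d) (f : EuclideanSpace ℝ (Fin d) → ℝ) :
    Measurable (pd i f) := measurable_fderiv_apply_const ℝ f _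

/-- Gaussian-free cutoff `1/(1+ε|x|²)`. -/
def cut {d : ℕ} (ε : ℝ) (x : EuclideanSpace ℝ (Fin d)) : ℝ := (1 + ε * ‖x - 0‖ ^ 2) ^ (-1 : ℝ)

lemma cut_diff {d : ℕ} {ε : ℝ} (hε : 0 ≤ ε) : Differentiable ℝ (cut (d := d) ε) :=
  fun x => (hasFDerivAt_shift_rpow 1 ε one_pos hε 0 (-1) x).differentiableAt

lemma cut_le_one {d : ℕ} {ε : ℝ} (hε : 0 ≤ ε) (x : EuclideanSpace ℝ (Fin d)) :
    |cut ε x| ≤ 1 := by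
  unfold cut
  have h : 1 ≤ 1 + ε * ‖x - 0‖ ^ 2 := by
    have : 0 ≤ ε * ‖x - 0‖ ^ 2 := by positivity
    linarith
  rw [Real.rpow_neg_one, abs_of_nonneg (by positivity)]
  exact inv_le_one_of_one_le₀ h

lemma cut_le {d : ℕ} {ε : ℝ} (hε : 0 < ε) (hε1 : ε ≤ 1) (x : EuclideanSpace ℝ (Fin d)) :
    |cut ε x| ≤ ε⁻¹ * rho x ^ (-(1 / 2) : ℝ) := by
  have h1 : |cut ε x| ≤ ε⁻¹ * rho x ^ (-1 : ℝ) := by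
    unfold cut rho
    rw [Real.rpow_neg_one, Real.rpow_neg_one, abs_of_nonneg (by positivity), ← mul_inv]
    apply inv_anti₀ (by positivity)
    simp only [sub_zero]
    nlinarith [sq_nonneg ‖x‖]
  refine h1.trans ?_
  gcongr ?_ * ?_
  exact rho_rpow_le x (by norm_num)

lemma pd_cut {d : ℕ} {ε : ℝ} (hε : 0 ≤ ε) (i : Fin d) (x : EuclideanSpace ℝ (Fin d)) :
    pd i (cut ε) x = -2 * ε * x i * (1 + ε * ‖x‖ ^ 2) ^ (-2 : ℝ) := by
  have := pd_shift_rpow 1 ε one_pos hε 0 (-1) i x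
  simp only [sub_zero] at this
  unfold cut
  simp only [sub_zero]
  rw [this]
  norm_num

lemma pd_cut_le {d : ℕ} {ε : ℝ} (hε : 0 ≤ ε) (hε1 : ε ≤ 1) (i : Fin d)
    (x : EuclideanSpace ℝ (Fin d)) :
    |pd i (cut ε) x| ≤ 2 * rho x ^ (-(1 / 2) : ℝ) := by
  rw [pd_cut hε]
  have hA : 0 < 1 + ε * ‖x‖ ^ 2 := by positivity
  have hA1 : 1 ≤ 1 + ε * ‖x‖ ^ 2 := by
    have : 0 ≤ ε * ‖x‖ ^ 2 := by positivity
    linarith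
  have e2 : (1 + ε * ‖x‖ ^ 2) ^ (-2 : ℝ) = ((1 + ε * ‖x‖ ^ 2) ^ 2)⁻¹ := by
    rw [Real.rpow_neg hA.le]; norm_num
  have er : rho x ^ (-(1 / 2) : ℝ) = (rho x ^ ((1 : ℝ) / 2))⁻¹ := Real.rpow_neg (rho_pos x).le _
  have hr : 0 < rho x ^ ((1 : ℝ) / 2) := Real.rpow_pos_of_pos (rho_pos x) _
  have hrr : rho x ^ ((1 : ℝ) / 2) * rho x ^ ((1 : ℝ) / 2) = 1 + ‖x‖ ^ 2 := by
    rw [← Real.rpow_add (rho_pos x)]; norm_num; rfl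
  rw [e2, er, abs_mul, abs_of_nonneg (a := ((1 + ε * ‖x‖ ^ 2) ^ 2)⁻¹) (by positivity),
    ← div_eq_mul_inv, ← div_eq_mul_inv, div_le_div_iff₀ (by positivity) hr]
  have hx : |x i| ≤ rho x ^ ((1 : ℝ) / 2) := (coord_le_norm x i).trans (norm_le_rho_sqrt x)
  have : |-2 * ε * x i| = 2 * ε * |x i| := by
    rw [abs_mul, abs_mul, abs_of_nonneg hε]; norm_num
  rw [this]
  calc 2 * ε * |x i| * rho x ^ ((1 : ℝ) / 2)
      ≤ 2 * ε * rho x ^ ((1 : ℝ) / 2) * rho x ^ ((1 : ℝ) / 2) := by gcongr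
    _ = 2 * (ε * (1 + ‖x‖ ^ 2)) := by rw [← hrr]; ring
    _ ≤ 2 * (1 + ε * ‖x‖ ^ 2) ^ 2 := by nlinarith

lemma tendsto_pd_cut {d : ℕ} (i : Fin d) (x : EuclideanSpace ℝ (Fin d)) :
    Filter.Tendsto (fun n : ℕ => pd i (cut (1 / ((n : ℝ) + 1))) x) Filter.atTop (nhds 0) := by
  have h := tendsto_one_div_add_atTop_nhds_zero_nat (𝕜 := ℝ)
  have hc : Filter.Tendsto (fun ε : ℝ => -2 * ε * x i * (1 + ε * ‖x‖ ^ 2) ^ (-2 : ℝ))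
      (nhds 0) (nhds (-2 * 0 * x i * (1 + 0 * ‖x‖ ^ 2) ^ (-2 : ℝ))) := by
    apply ContinuousAt.tendsto
    apply ContinuousAt.mul (by fun_prop)
    apply ContinuousAt.rpow_const (by fun_prop) (Or.inl (by norm_num))
  have := hc.comp h
  simp only [mul_zero, zero_mul] at this
  refine this.congr fun n => ?_
  rw [pd_cut (by positivity)]; rfl

lemma tendsto_cut {d : ℕ} (x : EuclideanSpace ℝ (Fin d)) :
    Filter.Tendsto (fun n : ℕ => cut (1 / ((n : ℝ) + 1)) x) Filter.atTop (nhds 1) := by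
  have h := tendsto_one_div_add_atTop_nhds_zero_nat (𝕜 := ℝ)
  have hc : Filter.Tendsto (fun ε : ℝ => (1 + ε * ‖x - 0‖ ^ 2) ^ (-1 : ℝ))
      (nhds 0) (nhds ((1 + 0 * ‖x - 0‖ ^ 2) ^ (-1 : ℝ))) := by
    apply ContinuousAt.tendsto
    apply ContinuousAt.rpow_const (by fun_prop) (Or.inl (by norm_num))
  have := hc.comp h
  simp only [zero_mul, add_zero, Real.one_rpow] at this
  exact this

/-- Integration by parts on the whole space, with mild decay hypotheses. -/
lemma ibp {d : ℕ} (i : Fin d) {f v : EuclideanSpace ℝ (Fin d) → ℝ}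
    (hf : Differentiable ℝ f) (hv : Differentiable ℝ v)
    (h1 : Integrable (fun x => pd i f x * v x))
    (h2 : Integrable (fun x => f x * pd i v x))
    (h3 : Integrable (fun x => f x * v x * rho x ^ (-(1 / 2) : ℝ))) :
    ∫ x, f x * pd i v x = - ∫ x, pd i f x * v x := by
  have key : ∀ n : ℕ, ∫ x, cut (1 / ((n : ℝ) + 1)) x * (f x * pd i v x) =
      - ∫ x, (cut (1 / ((n : ℝ) + 1)) x * (pd i f x * v x) +
        pd i (cut (1 / ((n : ℝ) + 1))) x * (f x * v x)) := by
    intro n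
    set ε : ℝ := 1 / ((n : ℝ) + 1) with hε
    have hε0 : 0 < ε := by positivity
    have hε1 : ε ≤ 1 := by
      rw [hε, div_le_one (by positivity)]
      have : (0 : ℝ) ≤ n := by positivity
      linarith
    have hcd := cut_diff (d := d) hε0.le
    have i1 : Integrable (fun x => cut ε x * (pd i f x * v x)) :=
      h1.bdd_mul (c := 1) hcd.continuous.aestronglyMeasurable
        (Filter.Eventually.of_forall (cut_le_one hε0.le))
    have i2 : Integrable (fun x => cut ε x * (f x * pd i v x)) :=
      h2.bdd_mul (c := 1) hcd.continuous.aestronglyMeasurable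
        (Filter.Eventually.of_forall (cut_le_one hε0.le))
    have i3 : Integrable (fun x => pd i (cut ε) x * (f x * v x)) := by
      refine (h3.norm.const_mul 2).mono' ?_ (Filter.Eventually.of_forall fun x => ?_)
      · exact (measurable_pd i _).aestronglyMeasurable.mul
          (hf.continuous.mul hv.continuous).aestronglyMeasurable
      · have := pd_cut_le hε0.le hε1 i x
        rw [norm_mul, norm_mul _ (rho x ^ _), Real.norm_eq_abs,
          Real.norm_of_nonneg (Real.rpow_nonneg (rho_pos x).le _)]
        nlinarith [norm_nonneg (f x * v x)]
    have i4 : Integrable (fun x => cut ε x * (f x * v x)) := by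
      refine (h3.norm.const_mul ε⁻¹).mono' ?_ (Filter.Eventually.of_forall fun x => ?_)
      · exact (hcd.continuous.mul (hf.continuous.mul hv.continuous)).aestronglyMeasurable
      · have := cut_le hε0 hε1 x
        rw [norm_mul, norm_mul _ (rho x ^ _), Real.norm_eq_abs,
          Real.norm_of_nonneg (Real.rpow_nonneg (rho_pos x).le _)]
        nlinarith [norm_nonneg (f x * v x)]
    have hpd : ∀ x, pd i (fun y => cut ε y * f y) x = cut ε x * pd i f x + pd i (cut ε) x * f x :=
      fun x => pd_mul i (hcd x) (hf x)
    have := integral_mul_fderiv_eq_neg_fderiv_mul_of_integrable (μ := volume)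
      (f := fun y => cut ε y * f y) (g := v) (v := EuclideanSpace.single i (1 : ℝ)) ?_ ?_ ?_
      (fun x _ => (hcd x).mul (hf x)) (fun x _ => hv x)
    · calc _ = ∫ x, cut ε x * f x * fderiv ℝ v x (EuclideanSpace.single i (1 : ℝ)) := by
            congr 1; ext x; rw [mul_assoc]; rfl
        _ = _ := this
        _ = _ := by
            congr 2; ext x
            change pd i (fun y => cut ε y * f y) x * v x = _
            rw [hpd]; ring
    · refine (i1.add i3).congr (Filter.Eventually.of_forall fun x => ?_)
      change _ = pd i (fun y => cut ε y * f y) x * v x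
      rw [hpd]; simp only [Pi.add_apply]; ring
    · refine i2.congr (Filter.Eventually.of_forall fun x => ?_)
      change _ = cut ε x * f x * pd i v x
      ring
    · refine i4.congr (Filter.Eventually.of_forall fun x => ?_)
      change _ = cut ε x * f x * v x
      ring
  have hεb : ∀ n : ℕ, (0 : ℝ) ≤ 1 / ((n : ℝ) + 1) ∧ 1 / ((n : ℝ) + 1) ≤ 1 := by
    intro n
    refine ⟨by positivity, ?_⟩
    rw [div_le_one (by positivity)]
    have : (0 : ℝ) ≤ n := by positivity
    linarith
  have L1 : Filter.Tendsto (fun n : ℕ => ∫ x, cut (1 / ((n : ℝ) + 1)) x * (f x * pd i v x))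
      Filter.atTop (nhds (∫ x, f x * pd i v x)) := by
    apply tendsto_integral_of_dominated_convergence (fun x => ‖f x * pd i v x‖)
    · intro n
      exact (cut_diff (hεb n).1).continuous.aestronglyMeasurable.mul h2.1
    · exact h2.norm
    · intro n
      refine Filter.Eventually.of_forall fun x => ?_
      rw [norm_mul]
      have := cut_le_one (hεb n).1 x
      rw [← Real.norm_eq_abs] at this
      nlinarith [norm_nonneg (f x * pd i v x)]
    · refine Filter.Eventually.of_forall fun x => ?_
      simpa using (tendsto_cut x).mul_const (f x * pd i v x)
  have L2 : Filter.Tendsto (fun n : ℕ => - ∫ x, (cut (1 / ((n : ℝ) + 1)) x * (pd i f x * v x) +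
        pd i (cut (1 / ((n : ℝ) + 1))) x * (f x * v x)))
      Filter.atTop (nhds (- ∫ x, pd i f x * v x)) := by
    apply Filter.Tendsto.neg
    apply tendsto_integral_of_dominated_convergence
      (fun x => ‖pd i f x * v x‖ + 2 * ‖f x * v x * rho x ^ (-(1 / 2) : ℝ)‖)
    · intro n
      exact ((cut_diff (hεb n).1).continuous.aestronglyMeasurable.mul h1.1).add
        ((measurable_pd i _).aestronglyMeasurable.mul
          (hf.continuous.mul hv.continuous).aestronglyMeasurable)
    · exact h1.norm.add (h3.norm.const_mul 2)
    · intro n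
      refine Filter.Eventually.of_forall fun x => ?_
      have a1 := cut_le_one (hεb n).1 x
      have a2 := pd_cut_le (hεb n).1 (hεb n).2 i x
      refine (norm_add_le _ _).trans (add_le_add ?_ ?_)
      · rw [norm_mul, Real.norm_eq_abs]
        nlinarith [norm_nonneg (pd i f x * v x)]
      · rw [norm_mul, norm_mul _ (rho x ^ _), Real.norm_eq_abs,
          Real.norm_of_nonneg (Real.rpow_nonneg (rho_pos x).le _)]
        nlinarith [norm_nonneg (f x * v x)]
    · refine Filter.Eventually.of_forall fun x => ?_
      simpa using ((tendsto_cut x).mul_const (pd i f x * v x)).add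
        ((tendsto_pd_cut i x).mul_const (f x * v x))
  exact tendsto_nhds_unique (L1.congr key) L2

/-- `-Δ q = p / (1+|x|²)²`, with the decay of `q` and `p` of the same kind as for `u_⋆`. -/
structure Good (d : ℕ) (p q : EuclideanSpace ℝ (Fin d) → ℝ) : Prop where
  diff : Differentiable ℝ q
  diff2 : ∀ i, Differentiable ℝ (pd i q)
  b0 : ∃ C, ∀ x, |q x| ≤ C * rho x ^ (-(((d : ℝ) - 2) / 2))
  b1 : ∃ C, ∀ i x, |pd i q x| ≤ C * rho x ^ (-(((d : ℝ) - 1) / 2))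
  b2 : ∃ C, ∀ i x, |pd i (pd i q) x| ≤ C * rho x ^ (-((d : ℝ) / 2))
  bp : ∃ C, ∀ x, |p x| ≤ C * rho x ^ (-(((d : ℝ) - 2) / 2))
  cont : Continuous p
  eq : ∀ x, - ∑ i, pd i (pd i q) x = p x / rho x ^ 2

lemma integrable_of_rho_bound {d : ℕ} {a C : ℝ} (ha : a < -((d : ℝ) / 2))
    {F : EuclideanSpace ℝ (Fin d) → ℝ} (hF : AEStronglyMeasurable F)
    (h : ∀ x, |F x| ≤ C * rho x ^ a) : Integrable F :=
  ((integrable_rho ha).const_mul C).mono' hF (Filter.Eventually.of_forall h)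

lemma abs_mul_le_rho {d : ℕ} {a b C D u v : ℝ} {x : EuclideanSpace ℝ (Fin d)}
    (hu : |u| ≤ C * rho x ^ a) (hv : |v| ≤ D * rho x ^ b) :
    |u * v| ≤ (C * D) * rho x ^ (a + b) := by
  rw [abs_mul, Real.rpow_add (rho_pos x)]
  calc |u| * |v| ≤ (C * rho x ^ a) * (D * rho x ^ b) :=
        mul_le_mul hu hv (abs_nonneg _) ((abs_nonneg _).trans hu)
    _ = _ := by ring

lemma ibp_good {d : ℕ} {p q f : EuclideanSpace ℝ (Fin d) → ℝ} (h : Good d p q)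
    (hf : Differentiable ℝ f)
    (hf0 : Integrable (fun x => f x * rho x ^ (-((d : ℝ) / 2))))
    (hf1 : ∀ i, Integrable (fun x => pd i f x * pd i q x)) :
    ∫ x, f x * (p x / rho x ^ 2) = ∑ i, ∫ x, pd i f x * pd i q x := by
  obtain ⟨C1, hC1⟩ := h.b1
  obtain ⟨C2, hC2⟩ := h.b2
  have i2 : ∀ i, Integrable (fun x => f x * pd i (pd i q) x) := by
    intro i
    refine (hf0.norm.const_mul C2).mono' (hf.continuous.aestronglyMeasurable.mul
      (measurable_pd i _).aestronglyMeasurable) (Filter.Eventually.of_forall fun x => ?_)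
    rw [norm_mul, norm_mul, Real.norm_of_nonneg (Real.rpow_nonneg (rho_pos x).le _),
      Real.norm_eq_abs (pd i _ x)]
    nlinarith [hC2 i x, norm_nonneg (f x)]
  have i3 : ∀ i, Integrable (fun x => f x * pd i q x * rho x ^ (-(1 / 2) : ℝ)) := by
    intro i
    refine (hf0.norm.const_mul C1).mono' ((hf.continuous.mul
      (h.diff2 i).continuous).mul (continuous_rho_rpow _)).aestronglyMeasurable
      (Filter.Eventually.of_forall fun x => ?_)
    have e : rho x ^ (-((d : ℝ) / 2)) = rho x ^ (-(((d : ℝ) - 1) / 2)) * rho x ^ (-(1 / 2) : ℝ) := by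
      rw [← Real.rpow_add (rho_pos x)]; congr 1; ring
    rw [e]
    rw [norm_mul, norm_mul, norm_mul, norm_mul,
      Real.norm_of_nonneg (Real.rpow_nonneg (rho_pos x).le (-(1 / 2) : ℝ)),
      Real.norm_of_nonneg (Real.rpow_nonneg (rho_pos x).le (-(((d : ℝ) - 1) / 2))),
      Real.norm_eq_abs (pd i _ x)]
    have h0 : 0 ≤ ‖f x‖ * rho x ^ (-(1 / 2) : ℝ) :=
      mul_nonneg (norm_nonneg _) (Real.rpow_nonneg (rho_pos x).le _)
    nlinarith [hC1 i x]
  have e1 : ∀ x, f x * (p x / rho x ^ 2) = - ∑ i, f x * pd i (pd i q) x := by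
    intro x
    rw [← h.eq x, ← Finset.mul_sum]; ring
  simp_rw [e1]
  rw [integral_neg, integral_finsetSum _ (fun i _ => i2 i), ← Finset.sum_neg_distrib]
  refine Finset.sum_congr rfl fun i _ => ?_
  rw [ibp i hf (h.diff2 i) (hf1 i) (i2 i) (i3 i), neg_neg]

lemma Good.int0 {d : ℕ} (hd : 3 ≤ d) {p q : EuclideanSpace ℝ (Fin d) → ℝ} (h : Good d p q) :
    Integrable (fun x => q x * rho x ^ (-((d : ℝ) / 2))) := by
  obtain ⟨C, hC⟩ := h.b0
  have hd' : (3 : ℝ) ≤ d := by exact_mod_cast hd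
  refine integrable_of_rho_bound (a := -(((d : ℝ) - 2) / 2) + -((d : ℝ) / 2)) (C := C * 1)
    (by linarith) (h.diff.continuous.mul (continuous_rho_rpow _)).aestronglyMeasurable
    fun x => abs_mul_le_rho (hC x) ?_
  rw [abs_of_nonneg (Real.rpow_nonneg (rho_pos x).le _), one_mul]

lemma Good.int1 {d : ℕ} (hd : 3 ≤ d) {p q p' q' : EuclideanSpace ℝ (Fin d) → ℝ} (h : Good d p q)
    (h' : Good d p' q') (i : Fin d) : Integrable (fun x => pd i q x * pd i q' x) := by
  obtain ⟨C, hC⟩ := h.b1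
  obtain ⟨C', hC'⟩ := h'.b1
  have hd' : (3 : ℝ) ≤ d := by exact_mod_cast hd
  exact integrable_of_rho_bound (a := -(((d : ℝ) - 1) / 2) + -(((d : ℝ) - 1) / 2)) (C := C * C')
    (by linarith) ((measurable_pd i _).mul (measurable_pd i _)).aestronglyMeasurable
    fun x => abs_mul_le_rho (hC i x) (hC' i x)

lemma Good.dirichlet {d : ℕ} (hd : 3 ≤ d) {p q p' q' : EuclideanSpace ℝ (Fin d) → ℝ}
    (h : Good d p q) (h' : Good d p' q') :
    ∫ x, q' x * (p x / rho x ^ 2) = ∑ i, ∫ x, pd i q' x * pd i q x :=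
  ibp_good h h'.diff (h'.int0 hd) (fun i => h'.int1 hd h i)

lemma Good.symm {d : ℕ} (hd : 3 ≤ d) {p q p' q' : EuclideanSpace ℝ (Fin d) → ℝ}
    (h : Good d p q) (h' : Good d p' q') :
    ∫ x, q' x * (p x / rho x ^ 2) = ∫ x, q x * (p' x / rho x ^ 2) := by
  rw [h.dirichlet hd h', h'.dirichlet hd h]
  simp_rw [mul_comm]

lemma Good.add {d : ℕ} {p q p' q' : EuclideanSpace ℝ (Fin d) → ℝ}
    (h : Good d p q) (h' : Good d p' q') :
    Good d (fun x => p x + p' x) (fun x => q x + q' x) := by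
  have e1 : ∀ i, pd i (fun x => q x + q' x) = fun x => pd i q x + pd i q' x := by
    intro i; ext x; exact pd_add i (h.diff x) (h'.diff x)
  have e2 : ∀ i x, pd i (pd i (fun x => q x + q' x)) x = pd i (pd i q) x + pd i (pd i q') x := by
    intro i x; rw [e1]; exact pd_add i (h.diff2 i x) (h'.diff2 i x)
  obtain ⟨C0, hC0⟩ := h.b0
  obtain ⟨C1, hC1⟩ := h.b1
  obtain ⟨C2, hC2⟩ := h.b2
  obtain ⟨Cp, hCp⟩ := h.bp
  obtain ⟨D0, hD0⟩ := h'.b0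
  obtain ⟨D1, hD1⟩ := h'.b1
  obtain ⟨D2, hD2⟩ := h'.b2
  obtain ⟨Dp, hDp⟩ := h'.bp
  refine ⟨h.diff.add h'.diff, fun i => ?_, ⟨C0 + D0, fun x => ?_⟩, ⟨C1 + D1, fun i x => ?_⟩,
    ⟨C2 + D2, fun i x => ?_⟩, ⟨Cp + Dp, fun x => ?_⟩, h.cont.add h'.cont, fun x => ?_⟩
  · rw [e1]; exact (h.diff2 i).add (h'.diff2 i)
  · rw [add_mul]; exact (abs_add_le _ _).trans (add_le_add (hC0 x) (hD0 x))
  · rw [add_mul, e1]; exact (abs_add_le _ _).trans (add_le_add (hC1 i x) (hD1 i x))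
  · rw [add_mul, e2]; exact (abs_add_le _ _).trans (add_le_add (hC2 i x) (hD2 i x))
  · rw [add_mul]; exact (abs_add_le _ _).trans (add_le_add (hCp x) (hDp x))
  · simp_rw [e2]
    rw [Finset.sum_add_distrib, add_div, ← h.eq, ← h'.eq]; ring

lemma Good.const_mul {d : ℕ} {p q : EuclideanSpace ℝ (Fin d) → ℝ}
    (h : Good d p q) (c : ℝ) :
    Good d (fun x => c * p x) (fun x => c * q x) := by
  have e1 : ∀ i, pd i (fun x => c * q x) = fun x => c * pd i q x := by
    intro i; ext x; exact pd_const_mul i c (h.diff x)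
  have e2 : ∀ i x, pd i (pd i (fun x => c * q x)) x = c * pd i (pd i q) x := by
    intro i x; rw [e1]; exact pd_const_mul i c (h.diff2 i x)
  obtain ⟨C0, hC0⟩ := h.b0
  obtain ⟨C1, hC1⟩ := h.b1
  obtain ⟨C2, hC2⟩ := h.b2
  obtain ⟨Cp, hCp⟩ := h.bp
  refine ⟨h.diff.const_mul c, fun i => ?_, ⟨|c| * C0, fun x => ?_⟩, ⟨|c| * C1, fun i x => ?_⟩,
    ⟨|c| * C2, fun i x => ?_⟩, ⟨|c| * Cp, fun x => ?_⟩, h.cont.const_mul c, fun x => ?_⟩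
  · rw [e1]; exact (h.diff2 i).const_mul c
  · rw [abs_mul, mul_assoc]; exact mul_le_mul_of_nonneg_left (hC0 x) (abs_nonneg c)
  · rw [e1, abs_mul, mul_assoc]; exact mul_le_mul_of_nonneg_left (hC1 i x) (abs_nonneg c)
  · rw [e2, abs_mul, mul_assoc]; exact mul_le_mul_of_nonneg_left (hC2 i x) (abs_nonneg c)
  · rw [abs_mul, mul_assoc]; exact mul_le_mul_of_nonneg_left (hCp x) (abs_nonneg c)
  · simp_rw [e2]
    rw [← Finset.mul_sum, mul_div_assoc, ← h.eq]; ring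

/-- The regularised Green function. -/
def regG (d : ℕ) (ε : ℝ) (x y : EuclideanSpace ℝ (Fin d)) : ℝ :=
  (ε ^ 2 + 1 * ‖y - x‖ ^ 2) ^ (-(((d : ℝ) - 2) / 2))

lemma regA_lower {d : ℕ} {ε : ℝ} (hε : 0 < ε) (hε1 : ε ≤ 1) (x : EuclideanSpace ℝ (Fin d)) :
    ∃ κ > 0, ∀ y, κ * rho y ≤ ε ^ 2 + 1 * ‖y - x‖ ^ 2 := by
  refine ⟨ε ^ 2 / (2 * rho x), by have := rho_pos x; positivity, fun y => ?_⟩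
  have h1 : ε ^ 2 * rho (y - x) ≤ ε ^ 2 + 1 * ‖y - x‖ ^ 2 := by
    unfold rho
    have : ε ^ 2 ≤ 1 := by nlinarith
    nlinarith [sq_nonneg ‖y - x‖]
  refine le_trans ?_ h1
  have h2 := rho_peetre x y
  rw [div_mul_eq_mul_div, div_le_iff₀ (by have := rho_pos x; positivity)]
  nlinarith [sq_nonneg ε]

lemma regA_rpow {d : ℕ} {ε : ℝ} (hε : 0 < ε) (hε1 : ε ≤ 1) (x : EuclideanSpace ℝ (Fin d))
    (a : ℝ) (ha : a ≤ 0) :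
    ∃ C, ∀ y, (ε ^ 2 + 1 * ‖y - x‖ ^ 2) ^ a ≤ C * rho y ^ a := by
  obtain ⟨κ, hκ, h⟩ := regA_lower hε hε1 x
  refine ⟨κ ^ a, fun y => ?_⟩
  rw [← Real.mul_rpow hκ.le (rho_pos y).le]
  exact Real.rpow_le_rpow_of_nonpos (mul_pos hκ (rho_pos y)) (h y) ha

lemma regA_coord {d : ℕ} {ε : ℝ} (x y : EuclideanSpace ℝ (Fin d)) (i : Fin d) :
    (y i - x i) ^ 2 ≤ ε ^ 2 + 1 * ‖y - x‖ ^ 2 := by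
  have := coord_le_norm (y - x) i
  have h2 : |(y - x) i| ^ 2 ≤ ‖y - x‖ ^ 2 := by gcongr
  rw [sq_abs] at h2
  simp only [PiLp.sub_apply] at h2
  nlinarith [sq_nonneg ε]

lemma sum_coord_sq {d : ℕ} (z : EuclideanSpace ℝ (Fin d)) : ∑ i, (z i) ^ 2 = ‖z‖ ^ 2 := by
  rw [EuclideanSpace.norm_sq_eq]; simp

lemma good_reg {d : ℕ} (hd : 3 ≤ d) {ε : ℝ} (hε : 0 < ε) (hε1 : ε ≤ 1)
    (x : EuclideanSpace ℝ (Fin d)) :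
    Good d (fun y => rho y ^ 2 * ((d : ℝ) * ((d : ℝ) - 2) * ε ^ 2 *
      (ε ^ 2 + 1 * ‖y - x‖ ^ 2) ^ (-(((d : ℝ) + 2) / 2)))) (regG d ε x) := by
  have hd' : (3 : ℝ) ≤ d := by exact_mod_cast hd
  have hA : ∀ y : EuclideanSpace ℝ (Fin d), 0 < ε ^ 2 + 1 * ‖y - x‖ ^ 2 := fun y => by positivity
  have hdA : ∀ (a : ℝ), Differentiable ℝ
      (fun y : EuclideanSpace ℝ (Fin d) => (ε ^ 2 + 1 * ‖y - x‖ ^ 2) ^ a) := fun a y =>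
    (hasFDerivAt_shift_rpow (ε ^ 2) 1 (by positivity) zero_le_one x a y).differentiableAt
  have hdc : ∀ i : Fin d, Differentiable ℝ (fun y : EuclideanSpace ℝ (Fin d) => y i - x i) := by
    intro i
    exact (EuclideanSpace.proj i : EuclideanSpace ℝ (Fin d) →L[ℝ] ℝ).differentiable.sub_const _
  have e1 : ∀ i, pd i (regG d ε x) = fun y => (-((d : ℝ) - 2)) * ((y i - x i) *
      (ε ^ 2 + 1 * ‖y - x‖ ^ 2) ^ (-((d : ℝ) / 2))) := by
    intro i; ext y
    unfold regG
    rw [pd_shift_rpow (ε ^ 2) 1 (by positivity) zero_le_one]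
    have : -(((d : ℝ) - 2) / 2) - 1 = -((d : ℝ) / 2) := by ring
    rw [this]; ring
  have e2 : ∀ i y, pd i (pd i (regG d ε x)) y = (-((d : ℝ) - 2)) *
      ((ε ^ 2 + 1 * ‖y - x‖ ^ 2) ^ (-((d : ℝ) / 2)) - d * (y i - x i) ^ 2 *
      (ε ^ 2 + 1 * ‖y - x‖ ^ 2) ^ (-(((d : ℝ) + 2) / 2))) := by
    intro i y
    rw [e1, pd_const_mul i _ ((hdc i y).fun_mul (hdA _ y)), pd_mul i (hdc i y) (hdA _ y), pd_coord,
      pd_shift_rpow (ε ^ 2) 1 (by positivity) zero_le_one]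
    have : -((d : ℝ) / 2) - 1 = -(((d : ℝ) + 2) / 2) := by ring
    rw [this, if_pos rfl]; ring
  obtain ⟨K0, hK0⟩ := regA_rpow hε hε1 x (-(((d : ℝ) - 2) / 2)) (by linarith)
  obtain ⟨K1, hK1⟩ := regA_rpow hε hε1 x (-(((d : ℝ) - 1) / 2)) (by linarith)
  obtain ⟨K2, hK2⟩ := regA_rpow hε hε1 x (-((d : ℝ) / 2)) (by linarith)
  obtain ⟨K3, hK3⟩ := regA_rpow hε hε1 x (-(((d : ℝ) + 2) / 2)) (by linarith)
  refine ⟨hdA _, fun i => ?_, ⟨K0, fun y => ?_⟩, ⟨((d : ℝ) - 2) * K1, fun i y => ?_⟩,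
    ⟨((d : ℝ) - 2) * ((1 + d) * K2), fun i y => ?_⟩,
    ⟨(d : ℝ) * ((d : ℝ) - 2) * ε ^ 2 * K3, fun y => ?_⟩, ?_, fun y => ?_⟩
  · rw [e1]; exact ((hdc i).mul (hdA _)).const_mul _
  · unfold regG; rw [abs_of_nonneg (Real.rpow_nonneg (hA y).le _)]; exact hK0 y
  · rw [e1]
    simp only []
    rw [abs_mul, abs_neg, abs_of_nonneg (by linarith : (0 : ℝ) ≤ (d : ℝ) - 2), mul_assoc, abs_mul,
      abs_of_nonneg (Real.rpow_nonneg (hA y).le _)]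
    gcongr ?_ * ?_
    · linarith
    refine le_trans ?_ (hK1 y)
    have hy : |y i - x i| ≤ (ε ^ 2 + 1 * ‖y - x‖ ^ 2) ^ ((1 : ℝ) / 2) := by
      rw [← Real.sqrt_eq_rpow]; exact Real.abs_le_sqrt (regA_coord x y i)
    calc |y i - x i| * (ε ^ 2 + 1 * ‖y - x‖ ^ 2) ^ (-((d : ℝ) / 2))
        ≤ (ε ^ 2 + 1 * ‖y - x‖ ^ 2) ^ ((1 : ℝ) / 2) *
          (ε ^ 2 + 1 * ‖y - x‖ ^ 2) ^ (-((d : ℝ) / 2)) := by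
          gcongr
      _ = _ := by rw [← Real.rpow_add (hA y)]; congr 1; ring
  · rw [e2, abs_mul, abs_neg, abs_of_nonneg (by linarith : (0 : ℝ) ≤ (d : ℝ) - 2),
      mul_assoc ((d : ℝ) - 2) ((1 + (d : ℝ)) * K2)]
    gcongr ?_ * ?_
    · linarith
    have h1 : (y i - x i) ^ 2 * (ε ^ 2 + 1 * ‖y - x‖ ^ 2) ^ (-(((d : ℝ) + 2) / 2)) ≤
        (ε ^ 2 + 1 * ‖y - x‖ ^ 2) ^ (-((d : ℝ) / 2)) := by
      calc _ ≤ (ε ^ 2 + 1 * ‖y - x‖ ^ 2) * (ε ^ 2 + 1 * ‖y - x‖ ^ 2) ^ (-(((d : ℝ) + 2) / 2)) := by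
            gcongr; exact regA_coord x y i
        _ = _ := by
          nth_rewrite 1 [← Real.rpow_one (ε ^ 2 + 1 * ‖y - x‖ ^ 2)]
          rw [← Real.rpow_add (hA y)]; congr 1; ring
    have h2 : 0 ≤ (y i - x i) ^ 2 * (ε ^ 2 + 1 * ‖y - x‖ ^ 2) ^ (-(((d : ℝ) + 2) / 2)) :=
      mul_nonneg (sq_nonneg _) (Real.rpow_nonneg (hA y).le _)
    have h3 : 0 ≤ (ε ^ 2 + 1 * ‖y - x‖ ^ 2) ^ (-((d : ℝ) / 2)) := Real.rpow_nonneg (hA y).le _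
    have h4 := hK2 y
    rw [abs_le]
    constructor <;> nlinarith
  · rw [abs_of_nonneg]
    · have e : rho y ^ (-(((d : ℝ) - 2) / 2)) = rho y ^ 2 * rho y ^ (-(((d : ℝ) + 2) / 2)) := by
        rw [← Real.rpow_natCast, ← Real.rpow_add (rho_pos y)]; congr 1; push_cast; ring
      rw [e]
      have := hK3 y
      have h0 : 0 ≤ (d : ℝ) * ((d : ℝ) - 2) * ε ^ 2 :=
        mul_nonneg (mul_nonneg (by linarith) (by linarith)) (sq_nonneg _)
      calc rho y ^ 2 * ((d : ℝ) * ((d : ℝ) - 2) * ε ^ 2 *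
              (ε ^ 2 + 1 * ‖y - x‖ ^ 2) ^ (-(((d : ℝ) + 2) / 2)))
          ≤ rho y ^ 2 * ((d : ℝ) * ((d : ℝ) - 2) * ε ^ 2 *
              (K3 * rho y ^ (-(((d : ℝ) + 2) / 2)))) := by gcongr
        _ = _ := by ring
    · have := Real.rpow_nonneg (hA y).le (-(((d : ℝ) + 2) / 2))
      have h0 : 0 ≤ (d : ℝ) * ((d : ℝ) - 2) * ε ^ 2 :=
        mul_nonneg (mul_nonneg (by linarith) (by linarith)) (sq_nonneg _)
      positivity
  · exact (continuous_rho.pow 2).mul ((hdA _).continuous.const_mul _)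
  · simp_rw [e2]
    have hr := (rho_pos y).ne'
    rw [mul_div_cancel_left₀ _ (pow_ne_zero 2 hr), ← Finset.mul_sum, Finset.sum_sub_distrib]
    have hs : ∑ i : Fin d, (d : ℝ) * (y i - x i) ^ 2 *
        (ε ^ 2 + 1 * ‖y - x‖ ^ 2) ^ (-(((d : ℝ) + 2) / 2)) = d * ‖y - x‖ ^ 2 *
        (ε ^ 2 + 1 * ‖y - x‖ ^ 2) ^ (-(((d : ℝ) + 2) / 2)) := by
      rw [← Finset.sum_mul, ← Finset.mul_sum, ← sum_coord_sq (y - x)]; simp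
    have hA2 : (ε ^ 2 + 1 * ‖y - x‖ ^ 2) ^ (-((d : ℝ) / 2)) = (ε ^ 2 + 1 * ‖y - x‖ ^ 2) *
        (ε ^ 2 + 1 * ‖y - x‖ ^ 2) ^ (-(((d : ℝ) + 2) / 2)) := by
      nth_rewrite 2 [← Real.rpow_one (ε ^ 2 + 1 * ‖y - x‖ ^ 2)]
      rw [← Real.rpow_add (hA y)]; congr 1; ring
    rw [hs, hA2]
    simp only [Finset.sum_const, Finset.card_univ, Fintype.card_fin, nsmul_eq_mul]
    ring

lemma radial_integral {d : ℕ} (hd : 3 ≤ d) :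
    ∫ r in Set.Ioi (0 : ℝ), r ^ (d - 1) * (1 + r ^ 2) ^ (-(((d : ℝ) + 2) / 2)) = 1 / (d : ℝ) := by
  have hd' : (3 : ℝ) ≤ d := by exact_mod_cast hd
  have hder : ∀ r ∈ Set.Ici (0 : ℝ), HasDerivAt
      (fun r : ℝ => (1 / (d : ℝ)) * (r ^ d * (1 + r ^ 2) ^ (-((d : ℝ) / 2))))
      (r ^ (d - 1) * (1 + r ^ 2) ^ (-(((d : ℝ) + 2) / 2))) r := by
    intro r _
    have hA : 0 < 1 + r ^ 2 := by positivity
    have h1 : HasDerivAt (fun r : ℝ => 1 + r ^ 2) (2 * r) r := by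
      simpa using (hasDerivAt_pow 2 r).const_add 1
    have h2 := h1.rpow_const (p := -((d : ℝ) / 2)) (Or.inl hA.ne')
    have h3 := ((hasDerivAt_pow d r).mul h2).const_mul (1 / (d : ℝ))
    refine h3.congr_deriv ?_
    have e1 : -((d : ℝ) / 2) - 1 = -(((d : ℝ) + 2) / 2) := by ring
    have e2 : (1 + r ^ 2) ^ (-((d : ℝ) / 2)) = (1 + r ^ 2) * (1 + r ^ 2) ^ (-(((d : ℝ) + 2) / 2)) := by
      nth_rewrite 2 [← Real.rpow_one (1 + r ^ 2)]
      rw [← Real.rpow_add hA]; congr 1; ring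
    have e3 : r ^ d = r ^ (d - 1) * r := by rw [← pow_succ]; congr 1; omega
    rw [e1, e2, e3]
    field_simp
    ring
  have ht : Filter.Tendsto (fun r : ℝ => (1 / (d : ℝ)) * (r ^ d * (1 + r ^ 2) ^ (-((d : ℝ) / 2))))
      Filter.atTop (nhds ((1 / (d : ℝ)) * 1)) := by
    apply Filter.Tendsto.const_mul
    have h1 : Filter.Tendsto (fun r : ℝ => (1 + (r ^ 2)⁻¹) ^ (-((d : ℝ) / 2))) Filter.atTop
        (nhds ((1 + 0) ^ (-((d : ℝ) / 2)))) := by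
      apply Filter.Tendsto.rpow_const _ (Or.inl (by norm_num))
      apply Filter.Tendsto.const_add
      exact tendsto_inv_atTop_zero.comp (Filter.tendsto_pow_atTop (by norm_num))
    rw [add_zero, Real.one_rpow] at h1
    refine h1.congr' ?_
    filter_upwards [Filter.eventually_gt_atTop 0] with r hr
    have e : 1 + r ^ 2 = r ^ 2 * (1 + (r ^ 2)⁻¹) := by field_simp; ring
    have e4 : (r ^ 2) ^ (-((d : ℝ) / 2)) = (r ^ d)⁻¹ := by
      rw [← Real.rpow_natCast, ← Real.rpow_mul hr.le, ← Real.rpow_natCast r d, ← Real.rpow_neg hr.le]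
      congr 1; push_cast; ring
    rw [e, Real.mul_rpow (by positivity) (by positivity), e4, ← mul_assoc,
      mul_inv_cancel₀ (by positivity), one_mul]
  rw [integral_Ioi_of_hasDerivAt_of_nonneg' hder ?_ ht]
  · have : d ≠ 0 := by omega
    simp [this]
  · intro r hr
    have : (0 : ℝ) < r := hr
    positivity

lemma sphereArea_eq {d : ℕ} (hd : 3 ≤ d) :
    sphereArea d = d * (volume (α := EuclideanSpace ℝ (Fin d))).real (Metric.ball 0 1) := by
  haveI : Nonempty (Fin d) := ⟨⟨0, by omega⟩⟩
  have hd' : (3 : ℝ) ≤ d := by exact_mod_cast hd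
  unfold sphereArea Measure.real
  rw [EuclideanSpace.volume_ball]
  simp only [Fintype.card_fin]
  have hG : 0 < Real.Gamma ((d : ℝ) / 2) := Real.Gamma_pos_of_pos (by linarith)
  rw [Real.Gamma_add_one (by linarith)]
  have hp : √π ^ d = π ^ ((d : ℝ) / 2) := by
    rw [Real.sqrt_eq_rpow, ← Real.rpow_natCast, ← Real.rpow_mul Real.pi_pos.le]; congr 1; ring
  rw [hp, ENNReal.ofReal_one, one_pow, one_mul, ENNReal.toReal_ofReal (by positivity)]
  field_simp

lemma sphereArea_pos {d : ℕ} (hd : 3 ≤ d) : 0 < sphereArea d := by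
  have hd' : (3 : ℝ) ≤ d := by exact_mod_cast hd
  have hG : 0 < Real.Gamma ((d : ℝ) / 2) := Real.Gamma_pos_of_pos (by linarith)
  unfold sphereArea
  positivity

lemma bubble_integral {d : ℕ} (hd : 3 ≤ d) :
    ∫ z : EuclideanSpace ℝ (Fin d), rho z ^ (-(((d : ℝ) + 2) / 2)) = sphereArea d / d := by
  haveI : Nonempty (Fin d) := ⟨⟨0, by omega⟩⟩
  have hd' : (3 : ℝ) ≤ d := by exact_mod_cast hd
  have := integral_fun_norm_addHaar (volume (α := EuclideanSpace ℝ (Fin d)))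
    (fun r : ℝ => (1 + r ^ 2) ^ (-(((d : ℝ) + 2) / 2)))
  simp only [finrank_euclideanSpace, Fintype.card_fin, smul_eq_mul, nsmul_eq_mul] at this
  rw [radial_integral hd] at this
  unfold rho
  rw [this, sphereArea_eq hd]
  field_simp

lemma reg_subst {d : ℕ} (hd : 3 ≤ d) {ε : ℝ} (hε : 0 < ε) (x : EuclideanSpace ℝ (Fin d))
    (q : EuclideanSpace ℝ (Fin d) → ℝ) :
    ∫ y, ε ^ 2 * (ε ^ 2 + 1 * ‖y - x‖ ^ 2) ^ (-(((d : ℝ) + 2) / 2)) * q y =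
      ∫ z, rho z ^ (-(((d : ℝ) + 2) / 2)) * q (x + ε • z) := by
  have h1 := Measure.integral_comp_smul (volume (α := EuclideanSpace ℝ (Fin d)))
    (fun y => ε ^ 2 * (ε ^ 2 + 1 * ‖y‖ ^ 2) ^ (-(((d : ℝ) + 2) / 2)) * q (x + y)) ε
  have h2 := integral_add_left_eq_self (μ := (volume (α := EuclideanSpace ℝ (Fin d))))
    (fun y => ε ^ 2 * (ε ^ 2 + 1 * ‖y - x‖ ^ 2) ^ (-(((d : ℝ) + 2) / 2)) * q y) x
  simp only [add_sub_cancel_left] at h2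
  rw [← h2]
  simp only [finrank_euclideanSpace, Fintype.card_fin, smul_eq_mul] at h1
  have hne : |(ε ^ d)⁻¹| ≠ 0 := by positivity
  rw [← mul_right_inj' hne, ← h1, abs_of_pos (by positivity), ← integral_const_mul]
  congr 1; ext z
  have e : ε ^ 2 + 1 * ‖ε • z‖ ^ 2 = ε ^ 2 * rho z := by
    rw [norm_smul, Real.norm_of_nonneg hε.le]; unfold rho; ring
  have e4 : (ε ^ 2) ^ (-(((d : ℝ) + 2) / 2)) = (ε ^ d)⁻¹ * (ε ^ 2)⁻¹ := by
    rw [← mul_inv, ← pow_add, ← Real.rpow_natCast, ← Real.rpow_mul hε.le, ← Real.rpow_natCast,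
      ← Real.rpow_neg hε.le]
    congr 1; push_cast; ring
  rw [e, Real.mul_rpow (by positivity) (rho_pos z).le, e4]
  field_simp

lemma green_kernel_nonneg {d : ℕ} (hd : 3 ≤ d) (z : EuclideanSpace ℝ (Fin d)) :
    0 ≤ greenKernel d z := by
  have hd' : (3 : ℝ) ≤ d := by exact_mod_cast hd
  have := sphereArea_pos hd
  unfold greenKernel
  have h2 : 0 ≤ (d : ℝ) - 2 := by linarith
  positivity

lemma measurable_greenKernel (d : ℕ) : Measurable (greenKernel d) := by
  unfold greenKernel; fun_prop

lemma locint_norm {d : ℕ} (hd : 3 ≤ d) :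
    IntegrableOn (fun z : EuclideanSpace ℝ (Fin d) => ‖z‖ ^ ((2 : ℝ) - d)) (Metric.ball 0 1) := by
  haveI : Nonempty (Fin d) := ⟨⟨0, by omega⟩⟩
  have h := locallyIntegrable_of_norm_le_rpow (μ := volume (α := EuclideanSpace ℝ (Fin d)))
    (f := fun z : EuclideanSpace ℝ (Fin d) => ‖z‖ ^ ((2 : ℝ) - d)) (C := 1) (α := (d : ℝ) - 2)
    (by simp; omega) (by simp) (Filter.Eventually.of_forall fun z => by
      rw [Real.norm_of_nonneg (by positivity), one_mul]
      apply le_of_eq; congr 1; ring) (by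
      apply Measurable.aestronglyMeasurable; fun_prop)
  exact (h.integrableOn_isCompact (isCompact_closedBall 0 1)).mono_set Metric.ball_subset_closedBall

lemma green_integrable {d : ℕ} (hd : 3 ≤ d) (x : EuclideanSpace ℝ (Fin d)) :
    Integrable (fun y => ‖x - y‖ ^ ((2 : ℝ) - d) * rho y ^ (-(((d : ℝ) + 2) / 2))) := by
  have hd' : (3 : ℝ) ≤ d := by exact_mod_cast hd
  have h1 : Integrable (fun y => (Metric.ball (0 : EuclideanSpace ℝ (Fin d)) 1).indicator
      (fun z => ‖z‖ ^ ((2 : ℝ) - d)) (x - y)) :=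
    ((integrable_indicator_iff Metric.isOpen_ball.measurableSet).mpr (locint_norm hd)).comp_sub_left x
  have h2 : Integrable (fun y : EuclideanSpace ℝ (Fin d) => rho y ^ (-(((d : ℝ) + 2) / 2))) :=
    integrable_rho (by linarith)
  refine (h1.add h2).mono' ?_ (Filter.Eventually.of_forall fun y => ?_)
  · apply Measurable.aestronglyMeasurable
    apply Measurable.mul (by fun_prop) (continuous_rho_rpow _).measurable
  · have hr0 : 0 ≤ rho y ^ (-(((d : ℝ) + 2) / 2)) := Real.rpow_nonneg (rho_pos y).le _
    have hr1 : rho y ^ (-(((d : ℝ) + 2) / 2)) ≤ 1 :=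
      Real.rpow_le_one_of_one_le_of_nonpos (one_le_rho y) (by linarith)
    have hn : 0 ≤ ‖x - y‖ ^ ((2 : ℝ) - d) := by positivity
    rw [Real.norm_of_nonneg (mul_nonneg hn hr0)]
    simp only [Pi.add_apply]
    by_cases hb : x - y ∈ Metric.ball (0 : EuclideanSpace ℝ (Fin d)) 1
    · rw [Set.indicator_of_mem hb]
      nlinarith
    · rw [Set.indicator_of_notMem hb, zero_add]
      have : 1 ≤ ‖x - y‖ := by simpa using hb
      have : ‖x - y‖ ^ ((2 : ℝ) - d) ≤ 1 :=
        Real.rpow_le_one_of_one_le_of_nonpos this (by linarith)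
      nlinarith

/-- Decay bound for `p / ρ²`. -/
lemma Good.bp2 {d : ℕ} {p q : EuclideanSpace ℝ (Fin d) → ℝ} (h : Good d p q) :
    ∃ C, 0 ≤ C ∧ ∀ x, |p x / rho x ^ 2| ≤ C * rho x ^ (-(((d : ℝ) + 2) / 2)) := by
  obtain ⟨C, hC⟩ := h.bp
  have hC0 : 0 ≤ C := by
    have := (abs_nonneg _).trans (hC 0)
    have h1 : rho (0 : EuclideanSpace ℝ (Fin d)) = 1 := by simp [rho]
    rw [h1, Real.one_rpow, mul_one] at this; exact this
  refine ⟨C, hC0, fun x => ?_⟩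
  have e : rho x ^ (-(((d : ℝ) - 2) / 2)) = rho x ^ 2 * rho x ^ (-(((d : ℝ) + 2) / 2)) := by
    rw [← Real.rpow_natCast, ← Real.rpow_add (rho_pos x)]; congr 1; push_cast; ring
  have := hC x
  have hr := rho_pos x
  rw [abs_div, abs_of_pos (by positivity : 0 < rho x ^ 2), div_le_iff₀ (by positivity)]
  rw [e] at this; linarith

lemma Good.green_int {d : ℕ} (hd : 3 ≤ d) {p q : EuclideanSpace ℝ (Fin d) → ℝ} (h : Good d p q)
    (x : EuclideanSpace ℝ (Fin d)) :
    Integrable (fun y => ‖x - y‖ ^ ((2 : ℝ) - d) * (p y / rho y ^ 2)) := by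
  obtain ⟨C, hC0, hC⟩ := h.bp2
  refine ((green_integrable hd x).const_mul C).mono' ?_ (Filter.Eventually.of_forall fun y => ?_)
  · apply Measurable.aestronglyMeasurable
    apply Measurable.mul (by fun_prop)
    exact (h.cont.measurable).div (continuous_rho.pow 2).measurable
  · have hn : 0 ≤ ‖x - y‖ ^ ((2 : ℝ) - d) := by positivity
    rw [norm_mul, Real.norm_of_nonneg hn, Real.norm_eq_abs]
    nlinarith [hC y]

/-- Green's representation formula. -/
lemma Good.green {d : ℕ} (hd : 3 ≤ d) {p q : EuclideanSpace ℝ (Fin d) → ℝ} (h : Good d p q)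
    (x : EuclideanSpace ℝ (Fin d)) :
    ∫ y, greenKernel d (x - y) * (p y / rho y ^ 2) = q x := by
  have hd' : (3 : ℝ) ≤ d := by exact_mod_cast hd
  have hS := sphereArea_pos hd
  have hεb : ∀ n : ℕ, (0 : ℝ) < 1 / ((n : ℝ) + 1) ∧ 1 / ((n : ℝ) + 1) ≤ 1 := by
    intro n
    refine ⟨by positivity, ?_⟩
    rw [div_le_one (by positivity)]
    have : (0 : ℝ) ≤ n := by positivity
    linarith
  have hε0 := tendsto_one_div_add_atTop_nhds_zero_nat (𝕜 := ℝ)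
  have key : ∀ n : ℕ, ∫ y, regG d (1 / ((n : ℝ) + 1)) x y * (p y / rho y ^ 2) =
      (d : ℝ) * ((d : ℝ) - 2) *
        ∫ z, rho z ^ (-(((d : ℝ) + 2) / 2)) * q (x + (1 / ((n : ℝ) + 1)) • z) := by
    intro n
    rw [h.symm hd (good_reg hd (hεb n).1 (hεb n).2 x), ← reg_subst hd (hεb n).1,
      ← integral_const_mul]
    congr 1; ext y
    have := (rho_pos y).ne'
    field_simp
  obtain ⟨C, hC0, hC⟩ := h.bp2
  have L1 : Filter.Tendsto (fun n : ℕ => ∫ y, regG d (1 / ((n : ℝ) + 1)) x y * (p y / rho y ^ 2))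
      Filter.atTop (nhds (∫ y, ‖x - y‖ ^ ((2 : ℝ) - d) * (p y / rho y ^ 2))) := by
    have hreg : ∀ y, y ≠ x → ‖x - y‖ ^ ((2 : ℝ) - d) =
        (0 ^ 2 + 1 * ‖y - x‖ ^ 2) ^ (-(((d : ℝ) - 2) / 2)) := by
      intro y _
      rw [norm_sub_rev, zero_pow two_ne_zero, zero_add, one_mul, ← Real.rpow_natCast,
        ← Real.rpow_mul (norm_nonneg _)]
      congr 1; push_cast; ring
    have hae : ∀ᵐ y : EuclideanSpace ℝ (Fin d), y ≠ x := by
      haveI : Nonempty (Fin d) := ⟨⟨0, by omega⟩⟩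
      haveI : Nontrivial (EuclideanSpace ℝ (Fin d)) := inferInstance
      rw [ae_iff]; simp
    apply tendsto_integral_of_dominated_convergence
      (fun y => ‖‖x - y‖ ^ ((2 : ℝ) - d) * (p y / rho y ^ 2)‖)
    · intro n
      exact ((good_reg hd (hεb n).1 (hεb n).2 x).diff.continuous.measurable.mul
        ((h.cont.measurable).div (continuous_rho.pow 2).measurable)).aestronglyMeasurable
    · exact (h.green_int hd x).norm
    · intro n
      filter_upwards [hae] with y hy
      have hpos : 0 < ‖y - x‖ := norm_pos_iff.mpr (sub_ne_zero.mpr hy)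
      rw [norm_mul, norm_mul]
      gcongr ?_ * _
      rw [hreg y hy]
      unfold regG
      rw [Real.norm_of_nonneg (by positivity), Real.norm_of_nonneg (by positivity)]
      apply Real.rpow_le_rpow_of_nonpos (by positivity) _ (by linarith)
      have : 0 ≤ (1 / ((n : ℝ) + 1)) ^ 2 := by positivity
      linarith
    · filter_upwards [hae] with y hy
      have hpos : 0 < ‖y - x‖ := norm_pos_iff.mpr (sub_ne_zero.mpr hy)
      apply Filter.Tendsto.mul_const
      rw [hreg y hy]
      unfold regG
      apply Filter.Tendsto.rpow_const _ (Or.inl (by positivity))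
      exact (hε0.pow 2).add_const _
  obtain ⟨D, hD⟩ := h.b0
  have hD1 : ∀ y, |q y| ≤ D := by
    intro y
    have hr1 : rho y ^ (-(((d : ℝ) - 2) / 2)) ≤ 1 :=
      Real.rpow_le_one_of_one_le_of_nonpos (one_le_rho y) (by linarith)
    have hr0 : 0 < rho y ^ (-(((d : ℝ) - 2) / 2)) := Real.rpow_pos_of_pos (rho_pos y) _
    have h0 := (abs_nonneg _).trans (hD y)
    have hD0 : 0 ≤ D := by
      by_contra hneg
      nlinarith
    nlinarith [hD y]
  have L2 : Filter.Tendsto (fun n : ℕ => (d : ℝ) * ((d : ℝ) - 2) *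
        ∫ z, rho z ^ (-(((d : ℝ) + 2) / 2)) * q (x + (1 / ((n : ℝ) + 1)) • z))
      Filter.atTop (nhds ((d : ℝ) * ((d : ℝ) - 2) *
        ∫ z : EuclideanSpace ℝ (Fin d), rho z ^ (-(((d : ℝ) + 2) / 2)) * q x)) := by
    apply Filter.Tendsto.const_mul
    apply tendsto_integral_of_dominated_convergence
      (fun z => rho z ^ (-(((d : ℝ) + 2) / 2)) * D)
    · intro n
      have := h.diff.continuous
      exact (Continuous.mul (continuous_rho_rpow _) (by fun_prop)).aestronglyMeasurable
    · exact (integrable_rho (by linarith)).mul_const D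
    · intro n
      refine Filter.Eventually.of_forall fun z => ?_
      have hr0 : 0 ≤ rho z ^ (-(((d : ℝ) + 2) / 2)) := Real.rpow_nonneg (rho_pos z).le _
      rw [norm_mul, Real.norm_of_nonneg hr0, Real.norm_eq_abs]
      exact mul_le_mul_of_nonneg_left (hD1 _) hr0
    · refine Filter.Eventually.of_forall fun z => ?_
      apply Filter.Tendsto.const_mul
      have hc : Filter.Tendsto (fun ε : ℝ => q (x + ε • z)) (nhds 0) (nhds (q (x + (0 : ℝ) • z))) := by
        have := h.diff.continuous
        exact (by fun_prop : Continuous (fun ε : ℝ => q (x + ε • z))).tendsto 0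
      rw [zero_smul, add_zero] at hc
      exact hc.comp hε0
  have E := tendsto_nhds_unique (L1.congr key) L2
  rw [integral_mul_const, bubble_integral hd] at E
  have : ∀ y, greenKernel d (x - y) * (p y / rho y ^ 2) = (((d : ℝ) - 2) * sphereArea d)⁻¹ *
      (‖x - y‖ ^ ((2 : ℝ) - d) * (p y / rho y ^ 2)) := by
    intro y; unfold greenKernel; ring
  simp_rw [this]
  rw [integral_const_mul, E]
  have h2 : (d : ℝ) - 2 ≠ 0 := by linarith
  field_simp

/-- Evaluation of a polynomial at a point of Euclidean space. -/
def evP {d : ℕ} (P : MvPolynomial (Fin d) ℝ) (x : EuclideanSpace ℝ (Fin d)) : ℝ :=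
  MvPolynomial.eval (fun i => x i) P

lemma differentiable_coord {d : ℕ} (i : Fin d) :
    Differentiable ℝ (fun y : EuclideanSpace ℝ (Fin d) => y i) :=
  (EuclideanSpace.proj i : EuclideanSpace ℝ (Fin d) →L[ℝ] ℝ).differentiable

lemma pd_coord' {d : ℕ} (i j : Fin d) (x : EuclideanSpace ℝ (Fin d)) :
    pd i (fun y => y j) x = if i = j then 1 else 0 := by
  have := pd_coord i j x 0
  simpa using this

lemma evP_diff_pd {d : ℕ} (P : MvPolynomial (Fin d) ℝ) :
    Differentiable ℝ (evP P) ∧ ∀ i x, pd i (evP P) x = evP (MvPolynomial.pderiv i P) x := by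
  induction P using MvPolynomial.induction_on with
  | C a =>
    have : evP (d := d) (MvPolynomial.C a) = fun _ => a := by ext x; simp [evP]
    rw [this]
    refine ⟨differentiable_const _, fun i x => ?_⟩
    simp [evP, pd]
  | add p q hp hq =>
    have : evP (p + q) = fun x => evP p x + evP q x := by ext x; simp [evP]
    rw [this]
    refine ⟨hp.1.add hq.1, fun i x => ?_⟩
    rw [pd_add i (hp.1 x) (hq.1 x), hp.2, hq.2]
    simp [evP]
  | mul_X p j hp =>
    have : evP (p * MvPolynomial.X j) = fun x => evP p x * x j := by ext x; simp [evP]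
    rw [this]
    refine ⟨hp.1.mul (differentiable_coord j), fun i x => ?_⟩
    rw [pd_mul i (hp.1 x) (differentiable_coord j x), hp.2, pd_coord']
    simp [evP, MvPolynomial.pderiv_mul, MvPolynomial.pderiv_X, Pi.single_apply]
    by_cases h : i = j
    · simp [h]; ring
    · simp [h, Ne.symm h]; ring

lemma evP_bound {d : ℕ} {P : MvPolynomial (Fin d) ℝ} {m : ℕ} (hP : P.IsHomogeneous m) :
    ∃ C, ∀ x, |evP P x| ≤ C * rho x ^ ((m : ℝ) / 2) := by
  refine ⟨∑ a ∈ P.support, |P.coeff a|, fun x => ?_⟩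
  unfold evP
  rw [MvPolynomial.eval_eq', Finset.sum_mul]
  refine (Finset.abs_sum_le_sum_abs _ _).trans (Finset.sum_le_sum fun a ha => ?_)
  rw [abs_mul]
  refine mul_le_mul_of_nonneg_left ?_ (abs_nonneg _)
  rw [Finset.abs_prod]
  have hdeg : ∑ i, a i = m := by
    have : Finsupp.degree a = m := by
      by_contra h
      exact (MvPolynomial.mem_support_iff.mp ha) (hP.coeff_eq_zero h)
    rw [← this, Finsupp.degree_eq_sum]
  calc ∏ i, |x i ^ a i| ≤ ∏ i, ‖x‖ ^ a i := by
        refine Finset.prod_le_prod (fun i _ => abs_nonneg _) fun i _ => ?_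
        rw [abs_pow]; exact pow_le_pow_left₀ (abs_nonneg _) (coord_le_norm x i) _
    _ = ‖x‖ ^ m := by rw [Finset.prod_pow_eq_pow_sum, hdeg]
    _ ≤ (rho x ^ ((1 : ℝ) / 2)) ^ m := by gcongr; exact norm_le_rho_sqrt x
    _ = _ := by
        rw [← Real.rpow_natCast, ← Real.rpow_mul (rho_pos x).le]; congr 1; ring

lemma pderiv_homog_zero {d : ℕ} {P : MvPolynomial (Fin d) ℝ} (hP : P.IsHomogeneous 0) (i : Fin d) :
    MvPolynomial.pderiv i P = 0 := by
  have : P.totalDegree = 0 := by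
    have := hP.totalDegree_le; omega
  rw [MvPolynomial.totalDegree_eq_zero_iff_eq_C.mp this]; simp

lemma evP_bound1 {d : ℕ} {P : MvPolynomial (Fin d) ℝ} {m : ℕ} (hP : P.IsHomogeneous m) (i : Fin d) :
    ∃ C, ∀ x, |evP (MvPolynomial.pderiv i P) x| ≤ C * rho x ^ (((m : ℝ) - 1) / 2) := by
  cases m with
  | zero => exact ⟨0, fun x => by rw [pderiv_homog_zero hP i]; simp [evP]⟩
  | succ m =>
    obtain ⟨C, hC⟩ := evP_bound (hP.pderiv (i := i))
    refine ⟨C, fun x => ?_⟩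
    simpa using hC x

lemma evP_bound2 {d : ℕ} {P : MvPolynomial (Fin d) ℝ} {m : ℕ} (hP : P.IsHomogeneous m) (i : Fin d) :
    ∃ C, ∀ x, |evP (MvPolynomial.pderiv i (MvPolynomial.pderiv i P)) x| ≤
      C * rho x ^ (((m : ℝ) - 2) / 2) := by
  cases m with
  | zero => exact ⟨0, fun x => by rw [pderiv_homog_zero hP i]; simp [evP]⟩
  | succ m =>
    obtain ⟨C, hC⟩ := evP_bound1 (hP.pderiv (i := i)) i
    refine ⟨C, fun x => ?_⟩
    have e : ((m + 1 : ℕ) : ℝ) - 2 = ((m + 1 - 1 : ℕ) : ℝ) - 1 := by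
      rw [Nat.add_sub_cancel]; push_cast; ring
    rw [e]; exact hC x

/-- The generator `P(x) (1+|x|²)^{-(k+(d-2)/2)}`. -/
def gen {d : ℕ} (P : MvPolynomial (Fin d) ℝ) (k : ℕ) (x : EuclideanSpace ℝ (Fin d)) : ℝ :=
  evP P x * rho x ^ (-((k : ℝ) + ((d : ℝ) - 2) / 2))

lemma rho_rpow_diff_pd {d : ℕ} (b : ℝ) :
    Differentiable ℝ (fun x : EuclideanSpace ℝ (Fin d) => rho x ^ b) ∧
    ∀ i x, pd i (fun x : EuclideanSpace ℝ (Fin d) => rho x ^ b) x = 2 * b * x i * rho x ^ (b - 1) := by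
  have e : (fun x : EuclideanSpace ℝ (Fin d) => rho x ^ b) =
      fun y => (1 + 1 * ‖y - 0‖ ^ 2) ^ b := by
    ext y; unfold rho; simp
  refine ⟨?_, fun i x => ?_⟩
  · rw [e]; intro x
    exact (hasFDerivAt_shift_rpow 1 1 one_pos zero_le_one 0 b x).differentiableAt
  · rw [e, pd_shift_rpow 1 1 one_pos zero_le_one 0 b i x]
    unfold rho; simp

lemma gen_continuous {d : ℕ} (P : MvPolynomial (Fin d) ℝ) (k : ℕ) : Continuous (gen P k) :=
  (evP_diff_pd P).1.continuous.mul (continuous_rho_rpow _)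

lemma gen_bound {d : ℕ} {P : MvPolynomial (Fin d) ℝ} {m k : ℕ} (hP : P.IsHomogeneous m)
    (hmk : m ≤ k) : ∃ C, ∀ x, |gen P k x| ≤ C * rho x ^ (-(((d : ℝ) - 2) / 2)) := by
  obtain ⟨C, hC⟩ := evP_bound hP
  have hC0 : 0 ≤ C := by
    have := (abs_nonneg _).trans (hC 0)
    have h1 : rho (0 : EuclideanSpace ℝ (Fin d)) = 1 := by simp [rho]
    rw [h1, Real.one_rpow, mul_one] at this; exact this
  refine ⟨C, fun x => ?_⟩
  have h := abs_mul_le_rho (hC x) (D := 1) (v := rho x ^ (-((k : ℝ) + ((d : ℝ) - 2) / 2)))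
    (b := -((k : ℝ) + ((d : ℝ) - 2) / 2)) (by
      rw [abs_of_nonneg (Real.rpow_nonneg (rho_pos x).le _), one_mul])
  unfold gen
  refine h.trans ?_
  rw [mul_one]
  refine mul_le_mul_of_nonneg_left (rho_rpow_le x ?_) hC0
  have : (m : ℝ) ≤ k := by exact_mod_cast hmk
  have : (0 : ℝ) ≤ k := by positivity
  linarith

/-- Lower-order part in the Laplacian of a generator. -/
def lowPart {d : ℕ} (P : MvPolynomial (Fin d) ℝ) (m k : ℕ) (x : EuclideanSpace ℝ (Fin d)) : ℝ :=
  (4 * ((k : ℝ) + ((d : ℝ) - 2) / 2) * ((m : ℝ) - k)) * gen P (k - 1) x -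
    gen (∑ i, MvPolynomial.pderiv i (MvPolynomial.pderiv i P)) (k - 2) x

/-- The eigenvalues. -/
def lam (d k : ℕ) : ℝ := (2 * (k : ℝ) + d - 2) * (2 * (k : ℝ) + d)

lemma lap_homog {d : ℕ} {P : MvPolynomial (Fin d) ℝ} {m : ℕ} (hP : P.IsHomogeneous m) :
    (∑ i, MvPolynomial.pderiv i (MvPolynomial.pderiv i P)).IsHomogeneous (m - 2) :=
  MvPolynomial.IsHomogeneous.sum _ _ _ fun i _ => (hP.pderiv (i := i)).pderiv

lemma lap_homog_low {d : ℕ} {P : MvPolynomial (Fin d) ℝ} {m : ℕ} (hP : P.IsHomogeneous m)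
    (hm : m < 2) : (∑ i, MvPolynomial.pderiv i (MvPolynomial.pderiv i P)) = 0 := by
  refine Finset.sum_eq_zero fun i _ => ?_
  exact pderiv_homog_zero (by have := hP.pderiv (i := i); convert this using 1; omega) i

lemma abs_add3 {a b c A B C : ℝ} (ha : |a| ≤ A) (hb : |b| ≤ B) (hc : |c| ≤ C) :
    |a + b + c| ≤ A + B + C := by
  have := abs_add_le (a + b) c
  have := abs_add_le a b
  linarith

lemma rho_self_abs {d : ℕ} (x : EuclideanSpace ℝ (Fin d)) (b : ℝ) :
    |rho x ^ b| ≤ 1 * rho x ^ b := by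
  rw [abs_of_nonneg (Real.rpow_nonneg (rho_pos x).le _), one_mul]

lemma coord_rho_abs {d : ℕ} (x : EuclideanSpace ℝ (Fin d)) (i : Fin d) :
    |x i| ≤ 1 * rho x ^ ((1 : ℝ) / 2) := by
  rw [one_mul]; exact (coord_le_norm x i).trans (norm_le_rho_sqrt x)

lemma good_gen {d : ℕ} (hd : 3 ≤ d) {P : MvPolynomial (Fin d) ℝ} {m k : ℕ}
    (hP : P.IsHomogeneous m) (hmk : m ≤ k) :
    Good d (fun x => lam d k * gen P k x + lowPart P m k x) (gen P k) := by
  have hd' : (3 : ℝ) ≤ d := by exact_mod_cast hd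
  have hmk' : (m : ℝ) ≤ k := by exact_mod_cast hmk
  have hk0 : (0 : ℝ) ≤ k := by positivity
  set b : ℝ := -((k : ℝ) + ((d : ℝ) - 2) / 2) with hb
  have e0 : gen P k = fun x => evP P x * rho x ^ b := rfl
  have hdP := fun Q : MvPolynomial (Fin d) ℝ => (evP_diff_pd Q).1
  have hdr := fun b : ℝ => (rho_rpow_diff_pd (d := d) b).1
  have hdm : ∀ (Q : MvPolynomial (Fin d) ℝ) (c : ℝ), Differentiable ℝ (fun x => evP Q x * rho x ^ c) :=
    fun Q c => (hdP Q).mul (hdr c)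
  have hpm : ∀ (Q : MvPolynomial (Fin d) ℝ) (c : ℝ) i x, pd i (fun x => evP Q x * rho x ^ c) x =
      evP Q x * (2 * c * x i * rho x ^ (c - 1)) + evP (MvPolynomial.pderiv i Q) x * rho x ^ c := by
    intro Q c i x
    rw [pd_mul i (hdP Q x) (hdr c x), (evP_diff_pd Q).2, (rho_rpow_diff_pd c).2]
  have e1 : ∀ i, pd i (gen P k) = fun x => (2 * b) * (x i * (evP P x * rho x ^ (b - 1))) +
      evP (MvPolynomial.pderiv i P) x * rho x ^ b := by
    intro i; ext x
    rw [e0, hpm]; ring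
  have hdx : ∀ i, Differentiable ℝ (fun x : EuclideanSpace ℝ (Fin d) =>
      x i * (evP P x * rho x ^ (b - 1))) := fun i => (differentiable_coord i).mul (hdm P _)
  have e2 : ∀ i x, pd i (pd i (gen P k)) x =
      4 * b * (b - 1) * (x i * x i * evP P x * rho x ^ (b - 2)) +
      (2 * b * (evP P x * rho x ^ (b - 1)) +
      4 * b * (x i * evP (MvPolynomial.pderiv i P) x * rho x ^ (b - 1))) +
      evP (MvPolynomial.pderiv i (MvPolynomial.pderiv i P)) x * rho x ^ b := by
    intro i x
    rw [e1, pd_add i ((hdx i x).const_mul _) (hdm _ _ x), pd_const_mul i _ (hdx i x),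
      pd_mul i (differentiable_coord i x) (hdm _ _ x), pd_coord', hpm, hpm, if_pos rfl]
    have : b - 1 - 1 = b - 2 := by ring
    rw [this]; ring
  obtain ⟨B0, hB0⟩ := evP_bound hP
  choose B1 hB1 using fun i => evP_bound1 hP i
  choose B2 hB2 using fun i => evP_bound2 hP i
  have hr1 : ∀ (x : EuclideanSpace ℝ (Fin d)) {c C D A : ℝ}, |A| ≤ C * rho x ^ c → c ≤ D → |A| ≤ |C| * rho x ^ D := by
    intro x c C D A h h'
    refine h.trans ?_
    have := rho_rpow_le x h'
    have h3 := Real.rpow_nonneg (rho_pos x).le c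
    calc C * rho x ^ c ≤ |C| * rho x ^ c := mul_le_mul_of_nonneg_right (le_abs_self C) h3
      _ ≤ _ := by gcongr
  have hsum : ∀ (B : Fin d → ℝ) i, |B i| ≤ ∑ j, |B j| := fun B i =>
    Finset.single_le_sum (f := fun j => |B j|) (fun j _ => abs_nonneg _) (Finset.mem_univ i)
  have hr2 : ∀ (x : EuclideanSpace ℝ (Fin d)) {C c A : ℝ} (a : ℝ), |A| ≤ C * rho x ^ c → |a * A| ≤ |a| * C * rho x ^ c := by
    intro x C c A a h
    rw [abs_mul, mul_assoc]; exact mul_le_mul_of_nonneg_left h (abs_nonneg _)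
  -- bound p
  have hlow : ∃ C, ∀ x, |lowPart P m k x| ≤ C * rho x ^ (-(((d : ℝ) - 2) / 2)) := by
    obtain ⟨D2, hD2⟩ : ∃ C, ∀ x, |gen (∑ i, MvPolynomial.pderiv i (MvPolynomial.pderiv i P)) (k - 2) x|
        ≤ C * rho x ^ (-(((d : ℝ) - 2) / 2)) := by
      exact gen_bound (lap_homog hP) (by omega)
    obtain ⟨D1, hD1⟩ : ∃ C, ∀ x, |(4 * ((k : ℝ) + ((d : ℝ) - 2) / 2) * ((m : ℝ) - k)) * gen P (k - 1) x|
        ≤ C * rho x ^ (-(((d : ℝ) - 2) / 2)) := by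
      rcases hmk.lt_or_eq with h | h
      · obtain ⟨C, hC⟩ := gen_bound (k := k - 1) hP (by omega)
        exact ⟨_, fun x => hr2 x _ (hC x)⟩
      · exact ⟨0, fun x => by rw [h]; simp⟩
    refine ⟨D1 + D2, fun x => ?_⟩
    unfold lowPart
    rw [add_mul]
    exact (abs_sub _ _).trans (add_le_add (hD1 x) (hD2 x))
  obtain ⟨Cl, hCl⟩ := hlow
  obtain ⟨Cg, hCg⟩ := gen_bound hP hmk
  refine ⟨hdm P b, fun i => ?_, ⟨Cg, hCg⟩,
    ⟨|2 * b| * |B0| + ∑ j, |B1 j|, fun i x => ?_⟩,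
    ⟨|4 * b * (b - 1)| * |B0| + (|2 * b| * |B0| + |4 * b| * ∑ j, |B1 j|) + ∑ j, |B2 j|, fun i x => ?_⟩,
    ⟨|lam d k| * Cg + Cl, fun x => ?_⟩, ?_, fun x => ?_⟩
  · rw [e1]; exact ((hdx i).const_mul _).add (hdm _ _)
  · rw [e1]
    simp only
    rw [add_mul]
    refine (abs_add_le _ _).trans (add_le_add ?_ ?_)
    · apply hr2 x
      have := hr1 x (D := -(((d : ℝ) - 1) / 2)) (abs_mul_le_rho (coord_rho_abs x i) (abs_mul_le_rho (hB0 x) (rho_self_abs x (b - 1))))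
        (by linarith)
      simpa using this
    · have := hr1 x (D := -(((d : ℝ) - 1) / 2)) (abs_mul_le_rho (hB1 i x) (rho_self_abs x b)) (by linarith)
      refine this.trans (mul_le_mul_of_nonneg_right ?_ (Real.rpow_nonneg (rho_pos x).le _))
      simpa using hsum B1 i
  · rw [e2, add_mul, add_mul, add_mul]
    have hr0 := Real.rpow_nonneg (rho_pos x).le (-((d : ℝ) / 2))
    refine abs_add3 ?_ ((abs_add_le _ _).trans (add_le_add ?_ ?_)) ?_
    · apply hr2 x
      have := hr1 x (D := -((d : ℝ) / 2)) (abs_mul_le_rho (abs_mul_le_rho (abs_mul_le_rho (coord_rho_abs x i)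
        (coord_rho_abs x i)) (hB0 x)) (rho_self_abs x (b - 2))) (by linarith)
      simpa using this
    · apply hr2 x
      have := hr1 x (D := -((d : ℝ) / 2)) (abs_mul_le_rho (hB0 x) (rho_self_abs x (b - 1))) (by linarith)
      simpa using this
    · apply hr2 x
      have := hr1 x (D := -((d : ℝ) / 2)) (abs_mul_le_rho (abs_mul_le_rho (coord_rho_abs x i) (hB1 i x)) (rho_self_abs x (b - 1)))
        (by linarith)
      refine this.trans (mul_le_mul_of_nonneg_right ?_ hr0)
      simpa using hsum B1 i
    · have := hr1 x (D := -((d : ℝ) / 2)) (abs_mul_le_rho (hB2 i x) (rho_self_abs x b)) (by linarith)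
      refine this.trans (mul_le_mul_of_nonneg_right ?_ hr0)
      simpa using hsum B2 i
  · rw [add_mul]
    refine (abs_add_le _ _).trans (add_le_add (hr2 x _ (hCg x)) (hCl x))
  · exact ((gen_continuous P k).const_mul _).add
      (((gen_continuous P _).const_mul _).sub (gen_continuous _ _))
  · have hr := rho_pos x
    have hrp : ∀ c : ℝ, rho x ^ (c + 1) = rho x * rho x ^ c := by
      intro c; rw [Real.rpow_add hr, Real.rpow_one]; ring
    have heuler : ∑ i, x i * evP (MvPolynomial.pderiv i P) x = m * evP P x := by
      have := congrArg (MvPolynomial.eval (fun i => x i)) hP.sum_X_mul_pderiv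
      simpa [evP] using this
    have hlapP : evP (∑ i, MvPolynomial.pderiv i (MvPolynomial.pderiv i P)) x =
        ∑ i, evP (MvPolynomial.pderiv i (MvPolynomial.pderiv i P)) x := by
      simp [evP]
    have hS : ∑ i, pd i (pd i (gen P k)) x =
        4 * b * (b - 1) * (rho x - 1) * evP P x * rho x ^ (b - 2) +
        (2 * b * d + 4 * b * m) * evP P x * rho x ^ (b - 1) +
        evP (∑ i, MvPolynomial.pderiv i (MvPolynomial.pderiv i P)) x * rho x ^ b := by
      simp_rw [e2, Finset.sum_add_distrib]
      have s1 : ∑ i : Fin d, 4 * b * (b - 1) * (x i * x i * evP P x * rho x ^ (b - 2)) =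
          4 * b * (b - 1) * (rho x - 1) * evP P x * rho x ^ (b - 2) := by
        have : rho x - 1 = ∑ i, x i ^ 2 := by rw [sum_coord_sq]; unfold rho; ring
        rw [this, Finset.mul_sum, Finset.sum_mul, Finset.sum_mul]
        refine Finset.sum_congr rfl fun i _ => by ring
      have s2 : ∑ i : Fin d, 4 * b * (x i * evP (MvPolynomial.pderiv i P) x * rho x ^ (b - 1)) =
          4 * b * m * evP P x * rho x ^ (b - 1) := by
        rw [mul_assoc (4 * b) (m : ℝ), ← heuler, Finset.mul_sum, Finset.sum_mul]
        refine Finset.sum_congr rfl fun i _ => by ring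
      rw [s1, s2, hlapP, Finset.sum_mul]
      simp only [Finset.sum_const, Finset.card_univ, Fintype.card_fin, nsmul_eq_mul]
      ring
    have f1 : (4 * ((k : ℝ) + ((d : ℝ) - 2) / 2) * ((m : ℝ) - k)) * gen P (k - 1) x =
        (-4 * b * ((m : ℝ) - k)) * (evP P x * rho x ^ (b + 1)) := by
      rcases Nat.eq_zero_or_pos k with h | h
      · have h1 : m = 0 := by omega
        subst h; subst h1; simp
      · unfold gen
        rw [Nat.cast_sub h, hb]
        have : -((k : ℝ) - (1 : ℕ) + ((d : ℝ) - 2) / 2) = -((k : ℝ) + ((d : ℝ) - 2) / 2) + 1 := by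
          push_cast; ring
        rw [this]; ring
    have f2 : gen (∑ i, MvPolynomial.pderiv i (MvPolynomial.pderiv i P)) (k - 2) x =
        evP (∑ i, MvPolynomial.pderiv i (MvPolynomial.pderiv i P)) x * rho x ^ (b + 2) := by
      by_cases h : m < 2
      · rw [lap_homog_low hP h]; simp [gen, evP]
      · unfold gen
        rw [Nat.cast_sub (by omega : 2 ≤ k), hb]
        have : -((k : ℝ) - (2 : ℕ) + ((d : ℝ) - 2) / 2) = -((k : ℝ) + ((d : ℝ) - 2) / 2) + 2 := by
          push_cast; ring
        rw [this]
    rw [eq_div_iff (by positivity), hS]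
    unfold lowPart
    rw [f1, f2, e0]
    have g1 : rho x ^ b = rho x ^ 2 * rho x ^ (b - 2) := by
      rw [← Real.rpow_natCast, ← Real.rpow_add hr]; congr 1; push_cast; ring
    have g2 : rho x ^ (b - 1) = rho x * rho x ^ (b - 2) := by
      rw [← hrp]; congr 1; ring
    have g3 : rho x ^ (b + 1) = rho x ^ 3 * rho x ^ (b - 2) := by
      rw [← Real.rpow_natCast, ← Real.rpow_add hr]; congr 1; push_cast; ring
    have g4 : rho x ^ (b + 2) = rho x ^ 4 * rho x ^ (b - 2) := by
      rw [← Real.rpow_natCast, ← Real.rpow_add hr]; congr 1; push_cast; ring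
    have hd2 : (d : ℝ) = -2 * b - 2 * k + 2 := by rw [hb]; ring
    simp only []
    rw [g1, g2, g3, g4]
    unfold lam
    rw [hd2]
    ring

section abstractLemma
open scoped InnerProductSpace
variable {H : Type*} [NormedAddCommGroup H] [InnerProductSpace ℝ H]

/-- The span of the first `n` levels. -/
def levelSpan (S : ℕ → Set H) (n : ℕ) : Submodule ℝ H := Submodule.span ℝ (⋃ k < n, S k)

lemma levelSpan_mono (S : ℕ → Set H) {m n : ℕ} (h : m ≤ n) : levelSpan S m ≤ levelSpan S n := by
  apply Submodule.span_mono
  intro x hx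
  simp only [Set.mem_iUnion] at hx ⊢
  obtain ⟨k, hk, hx⟩ := hx
  exact ⟨k, by omega, hx⟩

lemma levelSpan_mem (S : ℕ → Set H) {k n : ℕ} (h : k < n) {x : H} (hx : x ∈ S k) :
    x ∈ levelSpan S n :=
  Submodule.subset_span (by simp only [Set.mem_iUnion]; exact ⟨k, h, hx⟩)

lemma levelSpan_succ_induction (S : ℕ → Set H) (n : ℕ) (M : Submodule ℝ H)
    (h0 : levelSpan S n ≤ M) (h1 : ∀ x ∈ S n, x ∈ M) : levelSpan S (n + 1) ≤ M := by
  apply Submodule.span_le.mpr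
  intro x hx
  simp only [Set.mem_iUnion] at hx
  obtain ⟨k, hk, hx⟩ := hx
  rcases Nat.lt_succ_iff_lt_or_eq.mp hk with h | h
  · exact h0 (levelSpan_mem S h hx)
  · subst h; exact h1 x hx

lemma levelSpan_T (S : ℕ → Set H) (T : H →L[ℝ] H) (l : ℕ → ℝ) (hl : ∀ n, 0 < l n)
    (hS : ∀ n, ∀ h ∈ S n, ∃ r ∈ levelSpan S n, T (l n • h + r) = h) (n : ℕ) :
    (∀ x ∈ levelSpan S n, T x ∈ levelSpan S n) := by
  induction n with
  | zero =>
    intro x hx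
    have : levelSpan S 0 = ⊥ := by simp [levelSpan]
    rw [this] at hx ⊢
    rw [Submodule.mem_bot] at hx ⊢
    rw [hx, map_zero]
  | succ n ih =>
    have := levelSpan_succ_induction S n ((levelSpan S (n + 1)).comap (T : H →ₗ[ℝ] H))
      (fun x hx => levelSpan_mono S (Nat.le_succ n) (ih x hx)) ?_
    · intro x hx; exact this hx
    · intro x hx
      obtain ⟨r, hr, e⟩ := hS n x hx
      have e2 : T x = (l n)⁻¹ • (x - T r) := by
        rw [map_add, map_smul] at e
        rw [eq_inv_smul_iff₀ (hl n).ne']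
        exact eq_sub_of_add_eq e
      change T x ∈ levelSpan S (n + 1)
      rw [e2]
      exact Submodule.smul_mem _ _ (Submodule.sub_mem _ (levelSpan_mem S (Nat.lt_succ_self n) hx)
        (levelSpan_mono S (Nat.le_succ n) (ih r hr)))

lemma levelSpan_T_sub (S : ℕ → Set H) (T : H →L[ℝ] H) (l : ℕ → ℝ) (hl : ∀ n, 0 < l n)
    (hS : ∀ n, ∀ h ∈ S n, ∃ r ∈ levelSpan S n, T (l n • h + r) = h) (n : ℕ) :
    (∀ x ∈ levelSpan S (n + 1), T x - (l n)⁻¹ • x ∈ levelSpan S n) := by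
  have hT := levelSpan_T S T l hl hS
  have := levelSpan_succ_induction S n ((levelSpan S n).comap
    ((T - (l n)⁻¹ • ContinuousLinearMap.id ℝ H : H →L[ℝ] H) : H →ₗ[ℝ] H))
      (fun x hx => ?_) ?_
  · intro x hx; exact this hx
  · exact Submodule.sub_mem _ (hT n x hx) (Submodule.smul_mem _ _ hx)
  · intro x hx
    obtain ⟨r, hr, e⟩ := hS n x hx
    have e2 : T x - (l n)⁻¹ • x = -((l n)⁻¹ • T r) := by
      rw [map_add, map_smul] at e
      have : T x = (l n)⁻¹ • (x - T r) := by
        rw [eq_inv_smul_iff₀ (hl n).ne']; exact eq_sub_of_add_eq e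
      rw [this, smul_sub]; abel
    change T x - (l n)⁻¹ • x ∈ levelSpan S n
    rw [e2]
    exact Submodule.neg_mem _ (Submodule.smul_mem _ _ (hT n r hr))

lemma spectral_bound [CompleteSpace H] (S : ℕ → Set H) (T : H →L[ℝ] H)
    (hsymm : ∀ x y, ⟪T x, y⟫_ℝ = ⟪x, T y⟫_ℝ)
    (l : ℕ → ℝ) (hl : ∀ n, 0 < l n) (hmono : Monotone l)
    (hS : ∀ n, ∀ h ∈ S n, ∃ r ∈ levelSpan S n, T (l n • h + r) = h)
    (hdense : Dense {x : H | ∃ n, x ∈ levelSpan S n})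
    (g : H) (hg : ∀ k < 2, ∀ v ∈ S k, ⟪g, v⟫_ℝ = 0) :
    ⟪T g, g⟫_ℝ ≤ (l 2)⁻¹ * ‖g‖ ^ 2 := by
  set V : ℕ → Submodule ℝ H := fun n => (levelSpan S n).topologicalClosure with hV
  have hVm : ∀ {m n}, m ≤ n → V m ≤ V n := fun h =>
    Submodule.topologicalClosure_mono (levelSpan_mono S h)
  have hTV : ∀ n, ∀ x ∈ V n, T x ∈ V n := by
    intro n x hx
    have := map_mem_closure T.continuous hx (t := (levelSpan S n : Set H))
      (fun y hy => levelSpan_T S T l hl hS n y hy)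
    exact this
  have hTV2 : ∀ n, ∀ x ∈ V (n + 1), T x - (l n)⁻¹ • x ∈ V n := by
    intro n x hx
    have := map_mem_closure (f := fun x => T x - (l n)⁻¹ • x) (by fun_prop) hx
      (t := (levelSpan S n : Set H)) (fun y hy => levelSpan_T_sub S T l hl hS n y hy)
    exact this
  have hcs : ∀ n, CompleteSpace (V n) := fun n => by
    exact (Submodule.isClosed_topologicalClosure _).completeSpace_coe
  have claim : ∀ N, ∀ p ∈ V (N + 2), (∀ v ∈ V 2, ⟪p, v⟫_ℝ = 0) →
      ⟪T p, p⟫_ℝ ≤ (l 2)⁻¹ * ‖p‖ ^ 2 := by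
    intro N
    induction N with
    | zero =>
      intro p hp hpv
      have : p = 0 := inner_self_eq_zero.mp (hpv p hp)
      simp [this]
    | succ N ih =>
      intro p hp hpv
      have := hcs (N + 2)
      set p' : H := (V (N + 2)).starProjection p with hp'
      set e : H := p - p' with he
      have hp'V : p' ∈ V (N + 2) := Submodule.starProjection_apply_mem _ _
      have heo : ∀ v ∈ V (N + 2), ⟪e, v⟫_ℝ = 0 := by
        intro v hv
        have : e ∈ (V (N + 2))ᗮ := Submodule.sub_starProjection_mem_orthogonal p
        exact Submodule.inner_left_of_mem_orthogonal hv this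
      have heV : e ∈ V (N + 2 + 1) := Submodule.sub_mem _ (by simpa [add_right_comm] using hp) (hVm (by omega) hp'V)
      have hpe : p = p' + e := by rw [he]; abel
      have h1 : ⟪T p', p'⟫_ℝ ≤ (l 2)⁻¹ * ‖p'‖ ^ 2 := by
        apply ih p' hp'V
        intro v hv
        have h1 := heo v (hVm (by omega) hv)
        have h2 := hpv v hv
        rw [hpe, inner_add_left, h1, add_zero] at h2
        exact h2
      have h2 : ⟪T p', e⟫_ℝ = 0 := by rw [real_inner_comm]; exact heo _ (hTV _ _ hp'V)
      have h3 : ⟪T e, p'⟫_ℝ = 0 := by rw [hsymm, heo _ (hTV _ _ hp'V)]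
      have h4 : ⟪T e, e⟫_ℝ = (l (N + 2))⁻¹ * ‖e‖ ^ 2 := by
        have h5 := heo _ (hTV2 (N + 2) e heV)
        rw [inner_sub_right, inner_smul_right, real_inner_self_eq_norm_sq, real_inner_comm] at h5
        linarith
      have h6 : ⟪p', e⟫_ℝ = 0 := by rw [real_inner_comm]; exact heo _ hp'V
      have h7 : ‖p‖ ^ 2 = ‖p'‖ ^ 2 + ‖e‖ ^ 2 := by
        rw [hpe, norm_add_sq_real, h6]; ring
      have h8 : (l (N + 2))⁻¹ ≤ (l 2)⁻¹ := inv_anti₀ (hl 2) (hmono (by omega))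
      have h9 : ⟪T p, p⟫_ℝ = ⟪T p', p'⟫_ℝ + ⟪T e, e⟫_ℝ := by
        rw [hpe, map_add, inner_add_left, inner_add_right, inner_add_right, h2, h3]; ring
      rw [h9, h4, h7]
      nlinarith [sq_nonneg ‖e‖]
  have := hcs 2
  have hall : ∀ w : H, ⟪T (w - (V 2).starProjection w), w - (V 2).starProjection w⟫_ℝ ≤
      (l 2)⁻¹ * ‖w - (V 2).starProjection w‖ ^ 2 := by
    have hcl : IsClosed {w : H | ⟪T (w - (V 2).starProjection w), w - (V 2).starProjection w⟫_ℝ ≤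
      (l 2)⁻¹ * ‖w - (V 2).starProjection w‖ ^ 2} := by
      apply isClosed_le <;> fun_prop
    have hsub : {x : H | ∃ n, x ∈ levelSpan S n} ⊆ {w : H | ⟪T (w - (V 2).starProjection w), w - (V 2).starProjection w⟫_ℝ ≤
      (l 2)⁻¹ * ‖w - (V 2).starProjection w‖ ^ 2} := by
      rintro w ⟨n, hw⟩
      apply claim n
      · exact Submodule.sub_mem _ (Submodule.le_topologicalClosure _ (levelSpan_mono S (by omega) hw))
          (hVm (by omega) (Submodule.starProjection_apply_mem _ _))
      · intro v hv
        exact Submodule.inner_left_of_mem_orthogonal hv (Submodule.sub_starProjection_mem_orthogonal w)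
    intro w
    have : w ∈ closure {x : H | ∃ n, x ∈ levelSpan S n} := hdense w
    exact hcl.closure_subset_iff.mpr hsub this
  have hg0 : (V 2).starProjection g = 0 := by
    rw [Submodule.starProjection_apply, Submodule.coe_eq_zero, Submodule.orthogonalProjectionOnto_eq_zero_iff]
    rw [Submodule.orthogonal_closure]
    rw [Submodule.mem_orthogonal']
    intro v hv
    refine Submodule.span_induction (p := fun v _ => ⟪g, v⟫_ℝ = 0) ?_ (by simp) ?_ ?_ hv
    · intro x hx
      simp only [Set.mem_iUnion] at hx
      obtain ⟨k, hk, hx⟩ := hx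
      exact hg k hk x hx
    · intro x y _ _ hx hy; rw [inner_add_right, hx, hy, add_zero]
    · intro a x _ hx; rw [inner_smul_right, hx, mul_zero]
  have := hall g
  rwa [hg0, sub_zero] at this

end abstractLemma

/-- Weight `u_⋆ / (1+|x|²)²`. -/
def wt {d : ℕ} (x : EuclideanSpace ℝ (Fin d)) : ℝ := rho x ^ (-(((d : ℝ) - 2) / 2)) / rho x ^ 2

/-- The weighted measure `(1+|x|²)^{-d} dx`. -/
def muD (d : ℕ) : Measure (EuclideanSpace ℝ (Fin d)) :=
  volume.withDensity (fun x => ENNReal.ofReal (rho x ^ (-(d : ℝ))))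

/-- The coupling given by the Green function. -/
def kapD (d : ℕ) : Measure (EuclideanSpace ℝ (Fin d) × EuclideanSpace ℝ (Fin d)) :=
  (volume.prod volume).withDensity (fun z => ENNReal.ofReal
    (lam d 0 * greenKernel d (z.1 - z.2) * wt z.1 * wt z.2))

lemma wt_pos {d : ℕ} (x : EuclideanSpace ℝ (Fin d)) : 0 < wt x := by
  have := rho_pos x
  unfold wt; positivity

lemma u_pos {d : ℕ} (x : EuclideanSpace ℝ (Fin d)) : 0 < rho x ^ (-(((d : ℝ) - 2) / 2)) :=
  Real.rpow_pos_of_pos (rho_pos x) _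

lemma u_wt {d : ℕ} (x : EuclideanSpace ℝ (Fin d)) :
    rho x ^ (-(((d : ℝ) - 2) / 2)) * wt x = rho x ^ (-(d : ℝ)) := by
  have hr := rho_pos x
  unfold wt
  rw [← mul_div_assoc, div_eq_iff (by positivity), ← Real.rpow_natCast, ← Real.rpow_add hr,
    ← Real.rpow_add hr]
  congr 1; push_cast; ring

lemma continuous_wt {d : ℕ} : Continuous (wt (d := d)) := by
  unfold wt
  exact (continuous_rho_rpow _).div (continuous_rho.pow 2) fun x => pow_ne_zero 2 (rho_pos x).ne'

lemma lam_pos {d : ℕ} (hd : 3 ≤ d) (k : ℕ) : 0 < lam d k := by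
  have hd' : (3 : ℝ) ≤ d := by exact_mod_cast hd
  have hk0 : (0 : ℝ) ≤ k := by positivity
  unfold lam
  exact mul_pos (by linarith) (by linarith)

lemma lam_mono {d : ℕ} (hd : 3 ≤ d) : Monotone (lam d) := by
  intro m n h
  have hd' : (3 : ℝ) ≤ d := by exact_mod_cast hd
  have hk0 : (0 : ℝ) ≤ m := by positivity
  have : (m : ℝ) ≤ n := by exact_mod_cast h
  unfold lam
  exact mul_le_mul (by linarith) (by linarith) (by linarith) (by linarith)

lemma good_u {d : ℕ} (hd : 3 ≤ d) :
    Good d (fun x => lam d 0 * rho x ^ (-(((d : ℝ) - 2) / 2))) (fun x => rho x ^ (-(((d : ℝ) - 2) / 2))) := by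
  have h := good_gen hd (P := 1) (m := 0) (k := 0) (MvPolynomial.isHomogeneous_one _ _) le_rfl
  have e : gen (d := d) 1 0 = fun x => rho x ^ (-(((d : ℝ) - 2) / 2)) := by
    ext x; simp [gen, evP]
  have e2 : (fun x => lam d 0 * gen (d := d) 1 0 x + lowPart 1 0 0 x) =
      fun x => lam d 0 * rho x ^ (-(((d : ℝ) - 2) / 2)) := by
    ext x; rw [e]; simp [lowPart, gen, evP]
  rw [e2, e] at h
  exact h

lemma kdens_measurable (d : ℕ) : Measurable (fun z : EuclideanSpace ℝ (Fin d) × EuclideanSpace ℝ (Fin d) =>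
    lam d 0 * greenKernel d (z.1 - z.2) * wt z.1 * wt z.2) := by
  have h1 := measurable_greenKernel d
  have h2 := (continuous_wt (d := d)).measurable
  fun_prop

lemma kdens_nonneg {d : ℕ} (hd : 3 ≤ d) (z : EuclideanSpace ℝ (Fin d) × EuclideanSpace ℝ (Fin d)) :
    0 ≤ lam d 0 * greenKernel d (z.1 - z.2) * wt z.1 * wt z.2 :=
  mul_nonneg (mul_nonneg (mul_nonneg (lam_pos hd 0).le (green_kernel_nonneg hd _)) (wt_pos _).le)
    (wt_pos _).le

lemma greenKernel_comm {d : ℕ} (x y : EuclideanSpace ℝ (Fin d)) :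
    greenKernel d (x - y) = greenKernel d (y - x) := by
  unfold greenKernel; rw [norm_sub_rev]

lemma mp_fst {d : ℕ} (hd : 3 ≤ d) : MeasurePreserving Prod.fst (kapD d) (muD d) := by
  refine ⟨measurable_fst, ?_⟩
  refine Measure.ext fun s hs => ?_
  rw [Measure.map_apply measurable_fst hs]
  unfold kapD muD
  rw [withDensity_apply _ (measurable_fst hs), withDensity_apply _ hs, ← Set.prod_univ,
    setLIntegral_prod _ (kdens_measurable d).ennreal_ofReal.aemeasurable]
  refine lintegral_congr fun x => ?_
  rw [Measure.restrict_univ]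
  have hG := (good_u hd).green hd x
  have hIntegr : Integrable (fun y => lam d 0 * greenKernel d (x - y) * wt x * wt y) := by
    have := ((good_u hd).green_int hd x).const_mul ((((d : ℝ) - 2) * sphereArea d)⁻¹ * wt x)
    refine this.congr (Filter.Eventually.of_forall fun y => ?_)
    unfold greenKernel; simp only [wt]; ring
  rw [← ofReal_integral_eq_lintegral_ofReal hIntegr (Filter.Eventually.of_forall fun y => kdens_nonneg hd (x, y))]
  congr 1
  rw [← u_wt x, ← hG, ← integral_mul_const]
  refine integral_congr_ae (Filter.Eventually.of_forall fun y => ?_)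
  simp only [wt]; ring

lemma mp_swap {d : ℕ} : MeasurePreserving Prod.swap (kapD d) (kapD d) := by
  refine ⟨measurable_swap, ?_⟩
  refine Measure.ext fun s hs => ?_
  rw [Measure.map_apply measurable_swap hs]
  unfold kapD
  rw [withDensity_apply _ (measurable_swap hs), withDensity_apply _ hs]
  have h := (Measure.measurePreserving_swap (μ := (volume : Measure (EuclideanSpace ℝ (Fin d))))
    (ν := (volume : Measure (EuclideanSpace ℝ (Fin d))))).setLIntegral_comp_preimage hs
    (kdens_measurable d).ennreal_ofReal
  rw [← h]
  refine lintegral_congr fun z => ?_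
  congr 1
  simp only [Prod.fst_swap, Prod.snd_swap]
  rw [greenKernel_comm]; ring

lemma mp_snd {d : ℕ} (hd : 3 ≤ d) : MeasurePreserving Prod.snd (kapD d) (muD d) := by
  have := (mp_fst hd).comp (mp_swap (d := d))
  exact this

instance muD_finite (d : ℕ) : IsFiniteMeasure (muD d) := by
  unfold muD
  rcases Nat.eq_zero_or_pos d with h | h
  · subst h
    apply isFiniteMeasure_withDensity_ofReal
    simp only [Nat.cast_zero, neg_zero, Real.rpow_zero]
    have : IsFiniteMeasure (volume : Measure (EuclideanSpace ℝ (Fin 0))) := by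
      refine ⟨?_⟩
      have : (Set.univ : Set (EuclideanSpace ℝ (Fin 0))) = Metric.closedBall 0 1 := by
        ext x; simp [Subsingleton.elim x 0]
      rw [this]
      exact measure_closedBall_lt_top
    exact hasFiniteIntegral_const _
  · apply isFiniteMeasure_withDensity_ofReal
    have : (0 : ℝ) < d := by exact_mod_cast h
    exact (integrable_rho (by linarith)).2

lemma muD_dens_meas (d : ℕ) : Measurable
    (fun x : EuclideanSpace ℝ (Fin d) => ENNReal.ofReal (rho x ^ (-(d : ℝ)))) :=
  (continuous_rho_rpow _).measurable.ennreal_ofReal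

lemma integral_muD {d : ℕ} (f : EuclideanSpace ℝ (Fin d) → ℝ) :
    ∫ x, f x ∂(muD d) = ∫ x, rho x ^ (-(d : ℝ)) * f x := by
  unfold muD
  rw [integral_withDensity_eq_integral_toReal_smul (muD_dens_meas d) (by simp)]
  refine integral_congr_ae (Filter.Eventually.of_forall fun x => ?_)
  simp only [smul_eq_mul]
  rw [ENNReal.toReal_ofReal (Real.rpow_nonneg (rho_pos x).le _)]

lemma integrable_muD {d : ℕ} (f : EuclideanSpace ℝ (Fin d) → ℝ) :
    Integrable f (muD d) ↔ Integrable (fun x => f x * rho x ^ (-(d : ℝ))) := by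
  unfold muD
  rw [integrable_withDensity_iff (muD_dens_meas d) (by simp)]
  have : (fun x => f x * (ENNReal.ofReal (rho x ^ (-(d : ℝ)))).toReal) = fun x => f x * rho x ^ (-(d : ℝ)) := by
    ext x; rw [ENNReal.toReal_ofReal (Real.rpow_nonneg (rho_pos x).le _)]
  rw [this]

lemma muD_ac (d : ℕ) : muD d ≪ volume := withDensity_absolutelyContinuous _ _

lemma ac_muD (d : ℕ) : volume ≪ muD d :=
  withDensity_absolutelyContinuous' (muD_dens_meas d).aemeasurable
    (Filter.Eventually.of_forall fun x => by
      simp only [ne_eq, ENNReal.ofReal_eq_zero, not_le]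
      exact Real.rpow_pos_of_pos (rho_pos x) _)

lemma inner_toLp {α : Type*} [MeasurableSpace α] {μ : Measure α} {a b : α → ℝ}
    (ha : MemLp a 2 μ) (hb : MemLp b 2 μ) :
    inner ℝ (ha.toLp a) (hb.toLp b) = ∫ x, a x * b x ∂μ := by
  rw [L2.inner_def]
  refine integral_congr_ae ?_
  filter_upwards [ha.coeFn_toLp, hb.coeFn_toLp] with x h1 h2
  rw [h1, h2]; simp [mul_comm]

lemma exists_T {d : ℕ} (hd : 3 ≤ d) : ∃ T : Lp ℝ 2 (muD d) →L[ℝ] Lp ℝ 2 (muD d),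
    (∀ a b, inner ℝ (T a) b = inner ℝ a (T b)) ∧
    ∀ (a b : EuclideanSpace ℝ (Fin d) → ℝ) (ha : MemLp a 2 (muD d)) (hb : MemLp b 2 (muD d)),
      inner ℝ (T (ha.toLp a)) (hb.toLp b) =
        ∫ x, b x * wt x * invLap d (fun y => a y * wt y) x := by
  set A := Lp.compMeasurePreservingₗᵢ ℝ (E := ℝ) (p := 2) Prod.snd (mp_snd hd) with hA
  set B := Lp.compMeasurePreservingₗᵢ ℝ (E := ℝ) (p := 2) Prod.fst (mp_fst hd) with hB
  set T' : Lp ℝ 2 (muD d) →L[ℝ] Lp ℝ 2 (muD d) :=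
    (ContinuousLinearMap.adjoint B.toContinuousLinearMap).comp A.toContinuousLinearMap with hT'
  have key : ∀ (a b : EuclideanSpace ℝ (Fin d) → ℝ) (ha : MemLp a 2 (muD d)) (hb : MemLp b 2 (muD d)),
      inner ℝ (T' (ha.toLp a)) (hb.toLp b) = ∫ z, a z.2 * b z.1 ∂(kapD d) := by
    intro a b ha hb
    rw [hT', ContinuousLinearMap.comp_apply, ContinuousLinearMap.adjoint_inner_left]
    have e1 : A.toContinuousLinearMap (ha.toLp a) = (ha.comp_measurePreserving (mp_snd hd)).toLp _ :=
      Lp.toLp_compMeasurePreserving ha (mp_snd hd)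
    have e2 : B.toContinuousLinearMap (hb.toLp b) = (hb.comp_measurePreserving (mp_fst hd)).toLp _ :=
      Lp.toLp_compMeasurePreserving hb (mp_fst hd)
    rw [e1, e2, inner_toLp]
    rfl
  have hsw : ∀ (a b : EuclideanSpace ℝ (Fin d) → ℝ) (ha : MemLp a 2 (muD d)) (hb : MemLp b 2 (muD d)),
      ∫ z, a z.2 * b z.1 ∂(kapD d) = ∫ z, b z.2 * a z.1 ∂(kapD d) := by
    intro a b ha hb
    have h : MeasurePreserving (MeasurableEquiv.prodComm (α := EuclideanSpace ℝ (Fin d)) (β := EuclideanSpace ℝ (Fin d)))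
        (kapD d) (kapD d) := mp_swap
    rw [← h.integral_comp' (fun z => b z.2 * a z.1)]
    refine integral_congr_ae (Filter.Eventually.of_forall fun z => ?_)
    exact mul_comm _ _
  have hl0 := lam_pos hd 0
  refine ⟨(lam d 0)⁻¹ • T', fun a b => ?_, fun a b ha hb => ?_⟩
  · simp only [smul_apply, inner_smul_left, inner_smul_right]
    congr 1
    have ha := Lp.memLp a
    have hb := Lp.memLp b
    rw [← Lp.toLp_coeFn a ha, ← Lp.toLp_coeFn b hb, key, real_inner_comm, key]
    exact hsw _ _ ha hb
  · simp only [smul_apply, inner_smul_left]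
    rw [key]
    have hIntegr : Integrable (fun z => a z.2 * b z.1) (kapD d) :=
      (ha.comp_measurePreserving (mp_snd hd)).integrable_mul (hb.comp_measurePreserving (mp_fst hd))
    unfold kapD at hIntegr ⊢
    rw [integrable_withDensity_iff (kdens_measurable d).ennreal_ofReal (by simp)] at hIntegr
    rw [integral_withDensity_eq_integral_toReal_smul (kdens_measurable d).ennreal_ofReal (by simp)]
    have e : ∀ z : EuclideanSpace ℝ (Fin d) × EuclideanSpace ℝ (Fin d),
        (ENNReal.ofReal (lam d 0 * greenKernel d (z.1 - z.2) * wt z.1 * wt z.2)).toReal =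
        lam d 0 * greenKernel d (z.1 - z.2) * wt z.1 * wt z.2 := fun z =>
      ENNReal.toReal_ofReal (kdens_nonneg hd z)
    simp_rw [e] at hIntegr ⊢
    rw [integral_prod _ (by simpa only [smul_eq_mul, mul_comm] using hIntegr), ← integral_const_mul]
    refine integral_congr_ae (Filter.Eventually.of_forall fun x => ?_)
    simp only [smul_eq_mul, invLap]
    rw [← integral_const_mul, ← integral_const_mul]
    refine integral_congr_ae (Filter.Eventually.of_forall fun y => ?_)
    simp
    field_simp

/-- Quotient by `u_⋆`. -/
def quo {d : ℕ} (f : EuclideanSpace ℝ (Fin d) → ℝ) (x : EuclideanSpace ℝ (Fin d)) : ℝ :=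
  f x / rho x ^ (-(((d : ℝ) - 2) / 2))

/-- `v` represents `f / u_⋆`. -/
def RepU {d : ℕ} (v : Lp ℝ 2 (muD d)) (f : EuclideanSpace ℝ (Fin d) → ℝ) : Prop :=
  v =ᵐ[muD d] quo f

lemma RepU.memLp {d : ℕ} {v : Lp ℝ 2 (muD d)} {f : EuclideanSpace ℝ (Fin d) → ℝ} (h : RepU v f) :
    MemLp (quo f) 2 (muD d) := (memLp_congr_ae h).mp (Lp.memLp v)

lemma RepU.eq_toLp {d : ℕ} {v : Lp ℝ 2 (muD d)} {f : EuclideanSpace ℝ (Fin d) → ℝ} (h : RepU v f) :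
    v = h.memLp.toLp (quo f) := Lp.ext (h.trans h.memLp.coeFn_toLp.symm)

lemma RepU.unique {d : ℕ} {v w : Lp ℝ 2 (muD d)} {f : EuclideanSpace ℝ (Fin d) → ℝ} (h : RepU v f)
    (h' : RepU w f) : v = w := Lp.ext (h.trans h'.symm)

lemma RepU.add {d : ℕ} {v w : Lp ℝ 2 (muD d)} {f g : EuclideanSpace ℝ (Fin d) → ℝ} (h : RepU v f)
    (h' : RepU w g) : RepU (v + w) (fun x => f x + g x) := by
  unfold RepU at *
  filter_upwards [h, h', Lp.coeFn_add v w] with x h1 h2 h3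
  rw [h3, Pi.add_apply, h1, h2]; simp only [quo, add_div]

lemma RepU.smul {d : ℕ} {v : Lp ℝ 2 (muD d)} {f : EuclideanSpace ℝ (Fin d) → ℝ} (c : ℝ) (h : RepU v f) :
    RepU (c • v) (fun x => c * f x) := by
  unfold RepU at *
  filter_upwards [h, Lp.coeFn_smul c v] with x h1 h3
  rw [h3, Pi.smul_apply, h1]; simp only [quo, smul_eq_mul, mul_div_assoc]

lemma exists_rep {d : ℕ} {f : EuclideanSpace ℝ (Fin d) → ℝ} (h : MemLp (quo f) 2 (muD d)) :
    ∃ v, RepU v f := ⟨h.toLp, h.coeFn_toLp⟩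

lemma continuous_quo {d : ℕ} {f : EuclideanSpace ℝ (Fin d) → ℝ} (h : Continuous f) :
    Continuous (quo f) := h.div (continuous_rho_rpow _) fun x => (u_pos x).ne'

lemma memLp_quo {d : ℕ} {f : EuclideanSpace ℝ (Fin d) → ℝ} (h : Continuous f)
    (hb : ∃ C, ∀ x, |f x| ≤ C * rho x ^ (-(((d : ℝ) - 2) / 2))) : MemLp (quo f) 2 (muD d) := by
  obtain ⟨C, hC⟩ := hb
  refine MemLp.of_bound (continuous_quo h).aestronglyMeasurable C (Filter.Eventually.of_forall fun x => ?_)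
  unfold quo
  rw [norm_div, Real.norm_of_nonneg (u_pos x).le, div_le_iff₀ (u_pos x)]
  exact hC x

lemma RepU.inner_eq {d : ℕ} {v w : Lp ℝ 2 (muD d)} {f g : EuclideanSpace ℝ (Fin d) → ℝ} (h : RepU v f)
    (h' : RepU w g) : inner ℝ v w = ∫ x, f x * g x / rho x ^ 2 := by
  rw [h.eq_toLp, h'.eq_toLp, inner_toLp, integral_muD]
  refine integral_congr_ae (Filter.Eventually.of_forall fun x => ?_)
  simp only [quo]
  rw [← u_wt, wt]
  have := (u_pos x).ne'
  field_simp

lemma quo_wt {d : ℕ} (f : EuclideanSpace ℝ (Fin d) → ℝ) (x : EuclideanSpace ℝ (Fin d)) :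
    quo f x * wt x = f x / rho x ^ 2 := by
  simp only [quo, wt]
  have := (u_pos x).ne'
  field_simp

/-- The properties of the operator. -/
structure IsT {d : ℕ} (T : Lp ℝ 2 (muD d) →L[ℝ] Lp ℝ 2 (muD d)) : Prop where
  symm : ∀ a b, inner ℝ (T a) b = inner ℝ a (T b)
  form : ∀ {v w : Lp ℝ 2 (muD d)} {f g : EuclideanSpace ℝ (Fin d) → ℝ}, RepU v f → RepU w g →
    inner ℝ (T v) w = ∫ x, g x / rho x ^ 2 * invLap d (fun y => f y / rho y ^ 2) x

lemma exists_isT {d : ℕ} (hd : 3 ≤ d) : ∃ T : Lp ℝ 2 (muD d) →L[ℝ] Lp ℝ 2 (muD d), IsT T := by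
  obtain ⟨T, h1, h2⟩ := exists_T hd
  refine ⟨T, h1, fun {v w f g} hv hw => ?_⟩
  rw [hv.eq_toLp, hw.eq_toLp, h2]
  simp_rw [quo_wt]

lemma rep_quo {d : ℕ} (w : Lp ℝ 2 (muD d)) : RepU w (fun x => w x * rho x ^ (-(((d : ℝ) - 2) / 2))) := by
  refine Filter.Eventually.of_forall fun x => ?_
  simp only [quo]
  rw [mul_div_cancel_right₀ _ (u_pos x).ne']

lemma IsT.good {d : ℕ} (hd : 3 ≤ d) {T : Lp ℝ 2 (muD d) →L[ℝ] Lp ℝ 2 (muD d)} (hT : IsT T)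
    {p q : EuclideanSpace ℝ (Fin d) → ℝ} (h : Good d p q) {v w : Lp ℝ 2 (muD d)} (hv : RepU v p)
    (hw : RepU w q) : T v = w := by
  refine ext_inner_right ℝ fun b => ?_
  rw [hT.form hv (rep_quo b), hw.inner_eq (rep_quo b)]
  refine integral_congr_ae (Filter.Eventually.of_forall fun x => ?_)
  have := h.green hd x
  simp only [invLap]
  rw [this]; ring

lemma Good.rep_p {d : ℕ} {p q : EuclideanSpace ℝ (Fin d) → ℝ} (h : Good d p q) : ∃ v, RepU v p :=
  exists_rep (memLp_quo h.cont h.bp)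

lemma Good.rep_q {d : ℕ} {p q : EuclideanSpace ℝ (Fin d) → ℝ} (h : Good d p q) : ∃ v, RepU v q :=
  exists_rep (memLp_quo h.diff.continuous h.b0)

/-- The level sets of generators in the Hilbert space. -/
def genSet (d : ℕ) (k : ℕ) : Set (Lp ℝ 2 (muD d)) :=
  {v | ∃ m ≤ k, ∃ P : MvPolynomial (Fin d) ℝ, P.IsHomogeneous m ∧ RepU v (gen P k)}

lemma rep_gen {d : ℕ} {P : MvPolynomial (Fin d) ℝ} {m k : ℕ} (hP : P.IsHomogeneous m)
    (hmk : m ≤ k) : ∃ v ∈ genSet d k, RepU v (gen P k) := by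
  obtain ⟨v, hv⟩ := exists_rep (memLp_quo (gen_continuous P k) (gen_bound hP hmk))
  exact ⟨v, ⟨m, hmk, P, hP, hv⟩, hv⟩

lemma rep_lowPart {d : ℕ} {P : MvPolynomial (Fin d) ℝ} {m k : ℕ} (hP : P.IsHomogeneous m)
    (hmk : m ≤ k) : ∃ r ∈ levelSpan (genSet d) k, RepU r (lowPart P m k) := by
  obtain ⟨v1, h1, hv1⟩ : ∃ v ∈ levelSpan (genSet d) k, RepU v
      (fun x => (4 * ((k : ℝ) + ((d : ℝ) - 2) / 2) * ((m : ℝ) - k)) * gen P (k - 1) x) := by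
    rcases hmk.lt_or_eq with h | h
    · obtain ⟨v, hv, hr⟩ := rep_gen (k := k - 1) hP (by omega)
      exact ⟨_, Submodule.smul_mem _ _ (levelSpan_mem _ (by omega) hv), hr.smul _⟩
    · refine ⟨0, Submodule.zero_mem _, ?_⟩
      refine (Lp.coeFn_zero ℝ 2 (muD d)).trans (Filter.Eventually.of_forall fun x => ?_)
      simp [quo, h]
  obtain ⟨v2, h2, hv2⟩ : ∃ v ∈ levelSpan (genSet d) k, RepU v
      (gen (∑ i, MvPolynomial.pderiv i (MvPolynomial.pderiv i P)) (k - 2)) := by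
    by_cases h : m < 2
    · refine ⟨0, Submodule.zero_mem _, ?_⟩
      refine (Lp.coeFn_zero ℝ 2 (muD d)).trans (Filter.Eventually.of_forall fun x => ?_)
      rw [lap_homog_low hP h]
      simp [quo, gen, evP]
    · obtain ⟨v, hv, hr⟩ := rep_gen (k := k - 2) (lap_homog hP) (by omega)
      exact ⟨_, levelSpan_mem _ (by omega) hv, hr⟩
  refine ⟨v1 + (-1 : ℝ) • v2, Submodule.add_mem _ h1 (Submodule.smul_mem _ _ h2), ?_⟩
  have := hv1.add (hv2.smul (-1))
  convert this using 2 with x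
  unfold lowPart; ring

lemma IsT.level {d : ℕ} (hd : 3 ≤ d) {T : Lp ℝ 2 (muD d) →L[ℝ] Lp ℝ 2 (muD d)} (hT : IsT T)
    (n : ℕ) : ∀ h ∈ genSet d n, ∃ r ∈ levelSpan (genSet d) n, T (lam d n • h + r) = h := by
  rintro h ⟨m, hm, P, hP, hr⟩
  obtain ⟨r, hrm, hrr⟩ := rep_lowPart hP hm
  exact ⟨r, hrm, hT.good hd (good_gen hd hP hm) ((hr.smul _).add hrr) hr⟩

/-- The submodule of right-hand sides for which we can solve classically. -/
def goodSub (d : ℕ) (hd : 3 ≤ d) : Submodule ℝ (Lp ℝ 2 (muD d)) where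
  carrier := {v | ∃ p q, Good d p q ∧ RepU v p}
  zero_mem' := by
    obtain ⟨v, hv⟩ := (good_u hd).rep_p
    refine ⟨_, _, (good_u hd).const_mul 0, ?_⟩
    have := hv.smul 0
    rwa [zero_smul] at this
  add_mem' := by
    rintro a b ⟨p, q, h, hr⟩ ⟨p', q', h', hr'⟩
    exact ⟨_, _, h.add h', hr.add hr'⟩
  smul_mem' := by
    rintro c a ⟨p, q, h, hr⟩
    exact ⟨_, _, h.const_mul c, hr.smul c⟩

lemma levelSpan_le_goodSub {d : ℕ} (hd : 3 ≤ d) (n : ℕ) : levelSpan (genSet d) n ≤ goodSub d hd := by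
  induction n with
  | zero => simp [levelSpan]
  | succ n ih =>
    refine levelSpan_succ_induction _ n _ ih ?_
    rintro x ⟨m, hm, P, hP, hr⟩
    obtain ⟨r, hrm, hrr⟩ := rep_lowPart hP hm
    have h1 : lam d n • x + r ∈ goodSub d hd := ⟨_, _, good_gen hd hP hm, (hr.smul _).add hrr⟩
    have h2 := Submodule.smul_mem _ (lam d n)⁻¹ (Submodule.sub_mem _ h1 (ih hrm))
    rwa [add_sub_cancel_right, inv_smul_smul₀ (lam_pos hd n).ne'] at h2

/-- The compact parameter space. -/
abbrev CK (d : ℕ) : Type := Option (Fin d) → Set.Icc (-1 : ℝ) 1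

lemma ck_mem {d : ℕ} (x : EuclideanSpace ℝ (Fin d)) (j : Option (Fin d)) :
    (j.elim 1 fun i => x i) / rho x ∈ Set.Icc (-1 : ℝ) 1 := by
  rw [Set.mem_Icc, ← abs_le, abs_div, abs_of_pos (rho_pos x), div_le_one (rho_pos x)]
  cases j with
  | none => simpa using one_le_rho x
  | some i =>
    simp only [Option.elim]
    refine (coord_le_norm x i).trans ?_
    unfold rho
    nlinarith [sq_nonneg (‖x‖ - 1)]

/-- The embedding into the compact space. -/
def ckMap {d : ℕ} (x : EuclideanSpace ℝ (Fin d)) : CK d := fun j => ⟨_, ck_mem x j⟩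

lemma continuous_ckMap {d : ℕ} : Continuous (ckMap (d := d)) := by
  refine continuous_pi fun j => Continuous.subtype_mk ?_ _
  refine Continuous.div ?_ continuous_rho fun x => (rho_pos x).ne'
  cases j with
  | none => exact continuous_const
  | some i => simp only [Option.elim]; fun_prop

/-- The left inverse. -/
def ckInv {d : ℕ} (y : CK d) : EuclideanSpace ℝ (Fin d) :=
  WithLp.toLp 2 fun i => (y (some i) : ℝ) / (y none : ℝ)

lemma measurable_ckInv {d : ℕ} : Measurable (ckInv (d := d)) := by
  unfold ckInv
  fun_prop

lemma ckInv_ckMap {d : ℕ} (x : EuclideanSpace ℝ (Fin d)) : ckInv (ckMap x) = x := by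
  ext i
  have := (rho_pos x).ne'
  simp only [ckInv, ckMap, Option.elim]
  field_simp

/-- Coordinates as continuous maps. -/
def ckCoord (d : ℕ) (j : Option (Fin d)) : C(CK d, ℝ) := ⟨fun y => (y j : ℝ), by fun_prop⟩

lemma gen_eq {d : ℕ} (P : MvPolynomial (Fin d) ℝ) (k : ℕ) (x : EuclideanSpace ℝ (Fin d)) :
    gen P k x = evP P x / rho x ^ k * rho x ^ (-(((d : ℝ) - 2) / 2)) := by
  unfold gen
  rw [neg_add, rpow_add (rho_pos x), rpow_neg (rho_pos x).le, rpow_natCast]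
  ring

lemma quo_gen {d : ℕ} (P : MvPolynomial (Fin d) ℝ) (k : ℕ) (x : EuclideanSpace ℝ (Fin d)) :
    quo (gen P k) x = evP P x / rho x ^ k := by
  unfold quo
  rw [gen_eq, mul_div_cancel_right₀ _ (u_pos x).ne']

lemma ck_monomials {d : ℕ} (p : C(CK d, ℝ))
    (hp : p ∈ Submonoid.closure (Set.range (ckCoord d))) :
    ∃ m k, m ≤ k ∧ ∃ P : MvPolynomial (Fin d) ℝ, P.IsHomogeneous m ∧
      ∀ x, p (ckMap x) = quo (gen P k) x := by
  induction hp using Submonoid.closure_induction with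
  | mem p hp =>
    obtain ⟨j, rfl⟩ := hp
    cases j with
    | none =>
      refine ⟨0, 1, by norm_num, 1, MvPolynomial.isHomogeneous_one _ _, fun x => ?_⟩
      rw [quo_gen]; simp [evP, ckCoord, ckMap]
    | some i =>
      refine ⟨1, 1, le_rfl, MvPolynomial.X i, MvPolynomial.isHomogeneous_X _ _, fun x => ?_⟩
      rw [quo_gen]; simp [evP, ckCoord, ckMap]
  | one =>
    refine ⟨0, 0, le_rfl, 1, MvPolynomial.isHomogeneous_one _ _, fun x => ?_⟩
    rw [quo_gen]; simp [evP]
  | mul p q _ _ h h' =>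
    obtain ⟨m, k, hmk, P, hP, e⟩ := h
    obtain ⟨m', k', hmk', P', hP', e'⟩ := h'
    refine ⟨m + m', k + k', by omega, P * P', hP.mul hP', fun x => ?_⟩
    rw [ContinuousMap.mul_apply, e, e', quo_gen, quo_gen, quo_gen]
    simp only [evP, map_mul, pow_add]
    rw [div_mul_div_comm]

lemma ck_adjoin_dense (d : ℕ) :
    (Algebra.adjoin ℝ (Set.range (ckCoord d))).topologicalClosure = ⊤ := by
  apply ContinuousMap.subalgebra_topologicalClosure_eq_top_of_separatesPoints
  intro y z hyz
  obtain ⟨j, hj⟩ := Function.ne_iff.mp hyz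
  refine ⟨_, ⟨ckCoord d j, Algebra.subset_adjoin ⟨j, rfl⟩, rfl⟩, ?_⟩
  simpa [ckCoord, Subtype.ext_iff] using hj

lemma levelSpan_dense {d : ℕ} : Dense {v : Lp ℝ 2 (muD d) | ∃ n, v ∈ levelSpan (genSet d) n} := by
  set W : Submodule ℝ (Lp ℝ 2 (muD d)) := ⨆ n, levelSpan (genSet d) n with hW
  have hWe : {v : Lp ℝ 2 (muD d) | ∃ n, v ∈ levelSpan (genSet d) n} = (W : Set _) := by
    ext v
    rw [SetLike.mem_coe, hW, Submodule.mem_iSup_of_directed]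
    · rfl
    · exact Monotone.directed_le fun a b h => levelSpan_mono _ h
  rw [hWe]
  set ν := (muD d).map ckMap with hν
  have hmp : MeasurePreserving ckMap (muD d) ν := continuous_ckMap.measurable.measurePreserving _
  haveI : IsFiniteMeasure ν := by rw [hν]; infer_instance
  let C : Lp ℝ 2 ν →ₗᵢ[ℝ] Lp ℝ 2 (muD d) := Lp.compMeasurePreservingₗᵢ ℝ ckMap hmp
  have hC : ∀ w : Lp ℝ 2 ν, C w =ᵐ[muD d] w ∘ ckMap := fun w => Lp.coeFn_compMeasurePreserving w hmp
  have hsurj : Function.Surjective C := by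
    intro v
    have hm : Measurable (v ∘ ckInv) := (Lp.stronglyMeasurable v).measurable.comp measurable_ckInv
    have e : (v ∘ ckInv) ∘ ckMap = v := by
      ext x; simp [ckInv_ckMap]
    have h2 : MemLp (v ∘ ckInv) 2 ν := by
      rw [hν, memLp_map_measure_iff hm.aestronglyMeasurable continuous_ckMap.measurable.aemeasurable, e]
      exact Lp.memLp v
    refine ⟨h2.toLp, Lp.ext ((hC _).trans ?_)⟩
    have := hmp.quasiMeasurePreserving.ae_eq_comp h2.coeFn_toLp
    rwa [e] at this
  let Φ : C(CK d, ℝ) →L[ℝ] Lp ℝ 2 (muD d) := C.toContinuousLinearMap.comp (ContinuousMap.toLp 2 ν ℝ)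
  have hΦd : DenseRange Φ := by
    have h1 : DenseRange (ContinuousMap.toLp 2 ν ℝ : C(CK d, ℝ) →L[ℝ] Lp ℝ 2 ν) :=
      ContinuousMap.toLp_denseRange ℝ ν ℝ (by norm_num)
    exact hsurj.denseRange.comp h1 C.continuous
  have hΦ : ∀ p, p ∈ Algebra.adjoin ℝ (Set.range (ckCoord d)) → Φ p ∈ W := by
    intro p hp
    rw [← Subalgebra.mem_toSubmodule, Algebra.adjoin_eq_span] at hp
    have : Submodule.span ℝ (Submonoid.closure (Set.range (ckCoord d)) : Set C(CK d, ℝ)) ≤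
        W.comap Φ.toLinearMap := by
      rw [Submodule.span_le]
      intro p hp
      obtain ⟨m, k, hmk, P, hP, e⟩ := ck_monomials p hp
      have h3 : Φ p ∈ genSet d k := by
        refine ⟨m, hmk, P, hP, ?_⟩
        refine (hC _).trans ?_
        have := hmp.quasiMeasurePreserving.ae_eq_comp (ContinuousMap.coeFn_toLp (p := 2) (𝕜 := ℝ) ν p)
        refine this.trans (Filter.Eventually.of_forall fun x => e x)
      exact le_iSup (fun n => levelSpan (genSet d) n) (k + 1) (levelSpan_mem _ (Nat.lt_succ_self k) h3)
    exact this hp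
  have hA : Dense (Algebra.adjoin ℝ (Set.range (ckCoord d)) : Set C(CK d, ℝ)) := by
    have := ck_adjoin_dense d
    rw [← SetLike.coe_set_eq, Subalgebra.topologicalClosure_coe] at this
    exact dense_iff_closure_eq.mpr (by simpa using this)
  refine (hΦd.dense_image Φ.continuous hA).mono ?_
  rintro _ ⟨p, hp, rfl⟩
  exact hΦ p hp

lemma RepU.sum {d : ℕ} {ι : Type*} (s : Finset ι) {v : ι → Lp ℝ 2 (muD d)}
    {f : ι → EuclideanSpace ℝ (Fin d) → ℝ} (h : ∀ i, RepU (v i) (f i)) :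
    RepU (∑ i ∈ s, v i) (fun x => ∑ i ∈ s, f i x) := by
  classical
  induction s using Finset.induction_on with
  | empty =>
    refine (Lp.coeFn_zero ℝ 2 (muD d)).trans (Filter.Eventually.of_forall fun x => ?_)
    simp [quo]
  | insert a s ha ih =>
    have := (h a).add ih
    simp only [Finset.sum_insert ha]
    exact this

lemma rep_of_integrable {d : ℕ} {g : EuclideanSpace ℝ (Fin d) → ℝ}
    (hm : AEStronglyMeasurable g volume)
    (hi : Integrable (fun x => g x ^ 2 / (1 + ‖x‖ ^ 2) ^ 2)) : ∃ v, RepU v g := by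
  apply exists_rep
  have hq : AEStronglyMeasurable (quo g) (muD d) := by
    refine AEStronglyMeasurable.mono_ac (muD_ac d) ?_
    have : quo g = fun x => g x * (rho x ^ (-(((d : ℝ) - 2) / 2)))⁻¹ := by
      ext x; simp [quo, div_eq_mul_inv]
    rw [this]
    exact hm.mul ((continuous_rho_rpow _).inv₀ fun x => (u_pos x).ne').aestronglyMeasurable
  rw [memLp_two_iff_integrable_sq hq, integrable_muD]
  refine hi.congr (Filter.Eventually.of_forall fun x => ?_)
  simp only [quo]
  rw [← u_wt, wt]
  have := (u_pos x).ne'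
  have h2 := (rho_pos x).ne'
  change g x ^ 2 / rho x ^ 2 = _
  field_simp

lemma gen_const {d : ℕ} (c : ℝ) (k : ℕ) (x : EuclideanSpace ℝ (Fin d)) :
    gen (MvPolynomial.C c) k x = c * gen 1 k x := by
  simp [gen, evP]

lemma homog_zero_eq {d : ℕ} {P : MvPolynomial (Fin d) ℝ} (hP : P.IsHomogeneous 0) :
    P = MvPolynomial.C (P.coeff 0) := by
  have : P.totalDegree = 0 := by
    have := hP.totalDegree_le; omega
  exact MvPolynomial.totalDegree_eq_zero_iff_eq_C.mp this

lemma gen_linear {d : ℕ} {P : MvPolynomial (Fin d) ℝ} (hP : P.IsHomogeneous 1) :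
    ∃ c : Fin d → ℝ, ∀ x, gen P 1 x = ∑ i, c i * gen (MvPolynomial.X i) 1 x := by
  refine ⟨fun i => (MvPolynomial.pderiv i P).coeff 0, fun x => ?_⟩
  have h := hP.sum_X_mul_pderiv
  rw [one_smul] at h
  have h2 : evP P x = ∑ i, x i * (MvPolynomial.pderiv i P).coeff 0 := by
    conv_lhs => rw [← h]
    simp only [evP, map_sum, map_mul, MvPolynomial.eval_X]
    refine Finset.sum_congr rfl fun i _ => ?_
    rw [homog_zero_eq (hP.pderiv (i := i))]
    simp
  unfold gen
  rw [h2, Finset.sum_mul]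
  refine Finset.sum_congr rfl fun i _ => ?_
  simp only [evP, MvPolynomial.eval_X]; ring

lemma uAT_eq {d : ℕ} (x : EuclideanSpace ℝ (Fin d)) : uAT d x = gen 1 0 x := by
  rw [gen_eq]; simp [evP, uAT, rho]

lemma atFi_eq {d : ℕ} (i : Fin d) (x : EuclideanSpace ℝ (Fin d)) :
    atFi d i x = gen (MvPolynomial.X i) 1 x := by
  rw [gen_eq]; simp [evP, uAT, rho, atFi]; ring

lemma atFlast_eq {d : ℕ} (x : EuclideanSpace ℝ (Fin d)) :
    atFlast d x = 2 * gen 1 1 x + (-1) * gen 1 0 x := by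
  rw [gen_eq, gen_eq]
  have := (rho_pos x).ne'
  simp only [evP, uAT, atFlast, map_one, pow_one, pow_zero]
  change (1 - ‖x‖ ^ 2) * rho x ^ (-(((d : ℝ) - 2) / 2)) / rho x = _
  have h : 1 - ‖x‖ ^ 2 = 2 - rho x := by unfold rho; ring
  rw [h]; field_simp; ring

lemma orth_levels {d : ℕ} {v : Lp ℝ 2 (muD d)} {g : EuclideanSpace ℝ (Fin d) → ℝ} (hv : RepU v g)
    (ho : orthAT d g) : ∀ k < 2, ∀ w ∈ genSet d k, inner ℝ v w = 0 := by
  obtain ⟨w0, -, r0⟩ := rep_gen (d := d) (P := 1) (m := 0) (k := 0) (MvPolynomial.isHomogeneous_one _ _) le_rfl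
  obtain ⟨w1, -, r1⟩ := rep_gen (d := d) (P := 1) (m := 0) (k := 1) (MvPolynomial.isHomogeneous_one _ _) zero_le_one
  have hX : ∀ i : Fin d, ∃ w, RepU w (gen (MvPolynomial.X i) 1) := fun i => by
    obtain ⟨w, -, r⟩ := rep_gen (d := d) (P := MvPolynomial.X i) (m := 1) (k := 1) (MvPolynomial.isHomogeneous_X _ _) le_rfl
    exact ⟨w, r⟩
  choose wi ri using hX
  obtain ⟨h0, hi, hl⟩ := ho
  have o0 : inner ℝ v w0 = 0 := by
    rw [hv.inner_eq r0, ← h0]; simp only [uAT_eq, rho]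
  have oi : ∀ i, inner ℝ v (wi i) = 0 := fun i => by
    rw [hv.inner_eq (ri i), ← hi i]; simp only [atFi_eq, rho]
  have ol : inner ℝ v w1 = 0 := by
    have : inner ℝ v ((2 : ℝ) • w1 + (-1 : ℝ) • w0) = 0 := by
      rw [hv.inner_eq ((r1.smul 2).add (r0.smul (-1))), ← hl]; simp only [atFlast_eq, rho]
    rw [inner_add_right, real_inner_smul_right, real_inner_smul_right, o0] at this
    linarith
  rintro k hk w ⟨m, hm, P, hP, hr⟩
  have hcase : m = 0 ∨ (m = 1 ∧ k = 1) := by omega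
  rcases hcase with rfl | ⟨rfl, rfl⟩
  · rw [homog_zero_eq hP] at hr
    have hr' : RepU w (fun x => P.coeff 0 * gen 1 k x) := by
      have : gen (d := d) (MvPolynomial.C (P.coeff 0)) k = (fun x => P.coeff 0 * gen 1 k x) := by
        ext x; exact gen_const _ _ _
      rwa [this] at hr
    have hk' : k = 0 ∨ k = 1 := by omega
    rcases hk' with rfl | rfl
    · rw [hr'.unique (r0.smul _), real_inner_smul_right, o0, mul_zero]
    · rw [hr'.unique (r1.smul _), real_inner_smul_right, ol, mul_zero]
  · obtain ⟨c, hc⟩ := gen_linear hP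
    have hr' : RepU w (fun x => ∑ i, c i * gen (MvPolynomial.X i) 1 x) := by
      rwa [show gen P 1 = _ from funext hc] at hr
    rw [hr'.unique (RepU.sum Finset.univ fun i => (ri i).smul (c i)), inner_sum]
    refine Finset.sum_eq_zero fun i _ => ?_
    rw [real_inner_smul_right, oi, mul_zero]

lemma lam_two (d : ℕ) : lam d 2 = ((d : ℝ) + 2) * ((d : ℝ) + 4) := by
  unfold lam; push_cast; ring

lemma lam_one (d : ℕ) : lam d 1 = (d : ℝ) * ((d : ℝ) + 2) := by
  unfold lam; push_cast; ring

lemma RepU.norm_sq {d : ℕ} {v : Lp ℝ 2 (muD d)} {g : EuclideanSpace ℝ (Fin d) → ℝ} (hv : RepU v g) :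
    ‖v‖ ^ 2 = ∫ x, g x ^ 2 / (1 + ‖x‖ ^ 2) ^ 2 := by
  rw [← real_inner_self_eq_norm_sq, hv.inner_eq hv]
  simp only [rho, pow_two (g _)]

lemma part_i_rep {d : ℕ} (hd : 3 ≤ d) {T : Lp ℝ 2 (muD d) →L[ℝ] Lp ℝ 2 (muD d)} (hT : IsT T)
    {v : Lp ℝ 2 (muD d)} {g : EuclideanSpace ℝ (Fin d) → ℝ} (hv : RepU v g) (ho : orthAT d g) :
    inner ℝ (T v) v ≤ (lam d 2)⁻¹ * ‖v‖ ^ 2 :=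
  spectral_bound (genSet d) T hT.symm (lam d) (lam_pos hd) (lam_mono hd) (hT.level hd)
    levelSpan_dense v (orth_levels hv ho)

lemma green_pos {d : ℕ} (hd : 3 ≤ d) {x : EuclideanSpace ℝ (Fin d)} (hx : x ≠ 0) :
    0 < greenKernel d x := by
  have hd' : (3 : ℝ) ≤ d := by exact_mod_cast hd
  unfold greenKernel
  have := sphereArea_pos (d := d) (by omega)
  have h2 := Real.rpow_pos_of_pos (norm_pos_iff.mpr hx) ((2 : ℝ) - d)
  exact div_pos h2 (mul_pos (by linarith) this)

lemma invLap_nonmeas {d : ℕ} (hd : 3 ≤ d) {g : EuclideanSpace ℝ (Fin d) → ℝ}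
    (hg : ¬ AEStronglyMeasurable g volume) (x : EuclideanSpace ℝ (Fin d)) :
    invLap d (fun y => g y / (1 + ‖y‖ ^ 2) ^ 2) x = 0 := by
  unfold invLap
  refine integral_undef fun hi => hg ?_
  have hm := hi.aestronglyMeasurable
  have hk : AEStronglyMeasurable (fun y => (greenKernel d (x - y))⁻¹ * rho y ^ 2) volume :=
    (((measurable_greenKernel d).comp (measurable_const.sub measurable_id)).inv.mul
      (continuous_rho.measurable.pow_const 2)).aestronglyMeasurable
  refine (hm.mul hk).congr ?_
  have : ∀ᵐ y ∂(volume : Measure (EuclideanSpace ℝ (Fin d))), y ≠ x := by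
    haveI : Nonempty (Fin d) := ⟨⟨0, by omega⟩⟩
    exact Measure.ae_ne _ x
  filter_upwards [this] with y hy
  have h1 := (green_pos hd (sub_ne_zero.mpr hy.symm)).ne'
  have h2 := (rho_pos y).ne'
  simp only [Pi.mul_apply]
  change greenKernel d (x - y) * (g y / rho y ^ 2) * ((greenKernel d (x - y))⁻¹ * rho y ^ 2) = g y
  field_simp

lemma part_i {d : ℕ} (hd : 3 ≤ d) (g : EuclideanSpace ℝ (Fin d) → ℝ)
    (hi : Integrable (fun x => g x ^ 2 / (1 + ‖x‖ ^ 2) ^ 2)) (ho : orthAT d g) :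
    (∫ x, g x / (1 + ‖x‖ ^ 2) ^ 2 * invLap d (fun y => g y / (1 + ‖y‖ ^ 2) ^ 2) x) ≤
      1 / (((d : ℝ) + 2) * ((d : ℝ) + 4)) * ∫ x, g x ^ 2 / (1 + ‖x‖ ^ 2) ^ 2 := by
  by_cases hm : AEStronglyMeasurable g volume
  · obtain ⟨v, hv⟩ := rep_of_integrable hm hi
    obtain ⟨T, hT⟩ := exists_isT hd
    have := part_i_rep hd hT hv ho
    rw [hT.form hv hv, hv.norm_sq, lam_two] at this
    rw [one_div]; exact this
  · simp only [invLap_nonmeas hd hm, mul_zero, integral_zero]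
    have : 0 ≤ ∫ x, g x ^ 2 / (1 + ‖x‖ ^ 2) ^ 2 := integral_nonneg fun x => by positivity
    positivity

lemma norm_gradient_sq {d : ℕ} (f : EuclideanSpace ℝ (Fin d) → ℝ) (x : EuclideanSpace ℝ (Fin d)) :
    ‖gradient f x‖ ^ 2 = ∑ i, pd i f x ^ 2 := by
  rw [EuclideanSpace.norm_sq_eq]
  refine Finset.sum_congr rfl fun i _ => ?_
  have : gradient f x i = pd i f x := by
    have h := InnerProductSpace.toDual_symm_apply (𝕜 := ℝ) (x := EuclideanSpace.single i (1 : ℝ)) (y := fderiv ℝ f x)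
    unfold pd
    rw [← h, EuclideanSpace.inner_single_right]
    simp [gradient]
  rw [this, Real.norm_eq_abs, sq_abs]

lemma d12_pd_sq {d : ℕ} {f : EuclideanSpace ℝ (Fin d) → ℝ}
    (h : Integrable (fun x => ‖gradient f x‖ ^ 2)) (i : Fin d) :
    Integrable (fun x => pd i f x ^ 2) := by
  refine h.mono' ((measurable_pd i f).pow_const 2).aestronglyMeasurable
    (Filter.Eventually.of_forall fun x => ?_)
  rw [norm_gradient_sq, Real.norm_of_nonneg (sq_nonneg _)]
  exact Finset.single_le_sum (f := fun i => pd i f x ^ 2) (fun i _ => sq_nonneg _) (Finset.mem_univ i)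

lemma integral_grad {d : ℕ} {f : EuclideanSpace ℝ (Fin d) → ℝ}
    (h : ∀ i, Integrable (fun x => pd i f x ^ 2)) :
    ∫ x, ‖gradient f x‖ ^ 2 = ∑ i, ∫ x, pd i f x ^ 2 := by
  simp_rw [norm_gradient_sq]
  exact integral_finsetSum _ fun i _ => h i

lemma d12_int0 {d : ℕ} (hd : 3 ≤ d) {f : EuclideanSpace ℝ (Fin d) → ℝ} (hf : Continuous f)
    (h : Integrable (fun x => |f x| ^ (2 * (d : ℝ) / ((d : ℝ) - 2)))) :
    Integrable (fun x => f x * rho x ^ (-((d : ℝ) / 2))) := by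
  have hd' : (3 : ℝ) ≤ d := by exact_mod_cast hd
  set p : ℝ := 2 * (d : ℝ) / ((d : ℝ) - 2) with hp
  set q : ℝ := 2 * (d : ℝ) / ((d : ℝ) + 2) with hq
  have hpq : p.HolderConjugate q := by
    rw [Real.holderConjugate_iff]
    constructor
    · rw [hp, lt_div_iff₀ (by linarith)]; linarith
    · rw [hp, hq]
      have : (d : ℝ) - 2 ≠ 0 := by linarith
      field_simp; ring
  have hq2 : Integrable (fun x : EuclideanSpace ℝ (Fin d) => (rho x ^ (-((d : ℝ) / 2))) ^ q) := by
    have : (fun x : EuclideanSpace ℝ (Fin d) => (rho x ^ (-((d : ℝ) / 2))) ^ q) =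
        fun x => rho x ^ (-((d : ℝ) / 2) * q) := by
      ext x; rw [Real.rpow_mul (rho_pos x).le]
    rw [this]
    apply integrable_rho
    have : 1 < q := by rw [hq, lt_div_iff₀ (by linarith)]; linarith
    nlinarith
  refine ((h.div_const p).add (hq2.div_const q)).mono'
    (hf.mul (continuous_rho_rpow _)).aestronglyMeasurable (Filter.Eventually.of_forall fun x => ?_)
  have h0 : 0 ≤ rho x ^ (-((d : ℝ) / 2)) := Real.rpow_nonneg (rho_pos x).le _
  rw [norm_mul, Real.norm_of_nonneg h0, Real.norm_eq_abs]
  exact Real.young_inequality_of_nonneg (abs_nonneg _) h0 hpq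

lemma grad_ineq_good {d : ℕ} (hd : 3 ≤ d) {f p q : EuclideanSpace ℝ (Fin d) → ℝ} (hf : MemD12 d f)
    (h : Good d p q) (t : ℝ) :
    0 ≤ (∫ x, ‖gradient f x‖ ^ 2) - 2 * t * (∫ x, f x * (p x / rho x ^ 2)) +
      t ^ 2 * ∫ x, q x * (p x / rho x ^ 2) := by
  obtain ⟨hf1, hf2, hf3⟩ := hf
  have i1 := d12_pd_sq hf2
  have i2 : ∀ i, Integrable (fun x => pd i q x ^ 2) := fun i => by
    have := h.int1 hd h i
    simpa only [pow_two] using this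
  have i3 : ∀ i, Integrable (fun x => pd i f x * pd i q x) := fun i => by
    refine ((i1 i).add (i2 i)).mono'
      ((measurable_pd i f).mul (measurable_pd i q)).aestronglyMeasurable
      (Filter.Eventually.of_forall fun x => ?_)
    rw [Real.norm_eq_abs, abs_le]
    simp only [Pi.add_apply]
    constructor <;> nlinarith [sq_nonneg (pd i f x + pd i q x), sq_nonneg (pd i f x - pd i q x)]
  rw [ibp_good h hf1 (d12_int0 hd hf1.continuous hf3) i3, h.dirichlet hd h, integral_grad i1,
    Finset.mul_sum, Finset.mul_sum, ← Finset.sum_sub_distrib, ← Finset.sum_add_distrib]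
  refine Finset.sum_nonneg fun i _ => ?_
  have e : ∫ x, (pd i f x - t * pd i q x) ^ 2 =
      (∫ x, pd i f x ^ 2) - 2 * t * (∫ x, pd i f x * pd i q x) + t ^ 2 * ∫ x, pd i q x * pd i q x := by
    rw [← integral_const_mul, ← integral_const_mul,
      ← integral_sub (i1 i) ((i3 i).const_mul _)]
    have i4 : Integrable (fun x => pd i f x ^ 2 - 2 * t * (pd i f x * pd i q x)) :=
      (i1 i).sub ((i3 i).const_mul _)
    rw [← integral_add i4 ((h.int1 hd h i).const_mul _)]
    refine integral_congr_ae (Filter.Eventually.of_forall fun x => ?_)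
    simp only; ring
  rw [← e]
  exact integral_nonneg fun x => sq_nonneg _

lemma grad_ineq {d : ℕ} (hd : 3 ≤ d) {T : Lp ℝ 2 (muD d) →L[ℝ] Lp ℝ 2 (muD d)} (hT : IsT T)
    {f : EuclideanSpace ℝ (Fin d) → ℝ} (hf : MemD12 d f) {v : Lp ℝ 2 (muD d)} (hv : RepU v f) (t : ℝ)
    (w : Lp ℝ 2 (muD d)) :
    0 ≤ (∫ x, ‖gradient f x‖ ^ 2) - 2 * t * inner ℝ v w + t ^ 2 * inner ℝ (T w) w := by
  have hc : Continuous fun w : Lp ℝ 2 (muD d) =>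
      (∫ x, ‖gradient f x‖ ^ 2) - 2 * t * inner ℝ v w + t ^ 2 * inner ℝ (T w) w := by
    have : Continuous T := T.continuous
    fun_prop
  have hcl := isClosed_Ici (a := (0 : ℝ)) |>.preimage hc
  have := hcl.closure_subset_iff (s := {v : Lp ℝ 2 (muD d) | ∃ n, v ∈ levelSpan (genSet d) n}) |>.mpr ?_
  · rw [levelSpan_dense.closure_eq] at this
    exact this (Set.mem_univ w)
  · rintro w ⟨n, hw⟩
    obtain ⟨p, q, h, hr⟩ := levelSpan_le_goodSub hd n hw
    obtain ⟨w', hw'⟩ := h.rep_q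
    have := grad_ineq_good hd hf h t
    simp only [Set.mem_preimage, Set.mem_Ici]
    rw [hT.good hd h hr hw', hv.inner_eq hr, hw'.inner_eq hr]
    simpa only [mul_div_assoc] using this

lemma part_ii {d : ℕ} (hd : 3 ≤ d) (f : EuclideanSpace ℝ (Fin d) → ℝ) (hf : MemD12 d f)
    (hi : Integrable (fun x => f x ^ 2 / (1 + ‖x‖ ^ 2) ^ 2)) (ho : orthAT d f) :
    4 / ((d : ℝ) * ((d : ℝ) + 2) * ((d : ℝ) + 4)) * (∫ x, f x ^ 2 / (1 + ‖x‖ ^ 2) ^ 2) ≤ quadG d f ∧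
    quadG d f ≤ 1 / ((d : ℝ) * ((d : ℝ) + 2) ^ 2 * ((d : ℝ) + 4)) * quadF d f := by
  have hd' : (3 : ℝ) ≤ d := by exact_mod_cast hd
  obtain ⟨v, hv⟩ := rep_of_integrable hf.1.continuous.aestronglyMeasurable hi
  obtain ⟨T, hT⟩ := exists_isT hd
  have h1 := part_i hd f hi ho
  have h2 := grad_ineq hd hT hf hv (((d : ℝ) + 2) * ((d : ℝ) + 4)) v
  rw [hT.form hv hv, real_inner_self_eq_norm_sq, hv.norm_sq] at h2
  simp only [rho] at h2
  unfold quadG quadF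
  set A := ∫ x, ‖gradient f x‖ ^ 2
  set B := ∫ x, f x ^ 2 / (1 + ‖x‖ ^ 2) ^ 2
  set C := ∫ x, f x / (1 + ‖x‖ ^ 2) ^ 2 * invLap d (fun y => f y / (1 + ‖y‖ ^ 2) ^ 2) x
  have hd0 : (0 : ℝ) < d := by linarith
  constructor
  · have e : 4 / ((d : ℝ) * ((d : ℝ) + 2) * ((d : ℝ) + 4)) * B =
        1 / ((d : ℝ) * ((d : ℝ) + 2)) * B - 1 / (((d : ℝ) + 2) * ((d : ℝ) + 4)) * B := by
      field_simp; ring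
    rw [e]; linarith
  · have h3 : ((d : ℝ) + 2) * ((d : ℝ) + 4) * C ≤ B := by
      rw [one_div, inv_mul_eq_div, le_div_iff₀ (by positivity)] at h1
      linarith
    have h4 : 0 ≤ 4 * ((d : ℝ) + 2) * (B - ((d : ℝ) + 2) * ((d : ℝ) + 4) * C) :=
      mul_nonneg (by positivity) (by linarith)
    rw [one_div_mul_eq_div (_ * _ * _), le_div_iff₀ (by positivity)]
    have e : (1 / ((d : ℝ) * ((d : ℝ) + 2)) * B - C) * ((d : ℝ) * ((d : ℝ) + 2) ^ 2 * ((d : ℝ) + 4)) =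
      ((d : ℝ) + 2) * ((d : ℝ) + 4) * B - (d : ℝ) * ((d : ℝ) + 2) ^ 2 * ((d : ℝ) + 4) * C := by
      field_simp
    rw [e]
    nlinarith

lemma eig_orth {d : ℕ} (hd : 3 ≤ d) {T : Lp ℝ 2 (muD d) →L[ℝ] Lp ℝ 2 (muD d)} (hT : IsT T)
    {v : Lp ℝ 2 (muD d)} (hv : T (lam d 2 • v) = v) (k : ℕ) (hk : k < 2)
    (ho : ∀ r ∈ levelSpan (genSet d) k, inner ℝ v r = 0) :
    ∀ w ∈ genSet d k, inner ℝ v w = 0 := by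
  intro w hw
  obtain ⟨r, hr, e⟩ := hT.level hd k w hw
  have h1 : lam d 2 * inner ℝ v w = lam d k * inner ℝ v w := by
    calc lam d 2 * inner ℝ v w = inner ℝ (lam d 2 • v) (T (lam d k • w + r)) := by
          rw [real_inner_smul_left, e]
      _ = inner ℝ (T (lam d 2 • v)) (lam d k • w + r) := (hT.symm _ _).symm
      _ = lam d k * inner ℝ v w := by
          rw [hv, inner_add_right, ho r hr, real_inner_smul_right, add_zero]
  have hd' : (3 : ℝ) ≤ d := by exact_mod_cast hd
  have h2 : lam d k < lam d 2 := by
    have hk' : (k : ℝ) ≤ 1 := by exact_mod_cast Nat.lt_succ_iff.mp hk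
    have hk0 : (0 : ℝ) ≤ k := by positivity
    unfold lam
    push_cast
    nlinarith
  have h3 : (lam d 2 - lam d k) * inner ℝ v w = 0 := by linarith
  rcases mul_eq_zero.mp h3 with h | h
  · linarith
  · exact h

lemma eig_orth_all {d : ℕ} (hd : 3 ≤ d) {T : Lp ℝ 2 (muD d) →L[ℝ] Lp ℝ 2 (muD d)} (hT : IsT T)
    {v : Lp ℝ 2 (muD d)} (hv : T (lam d 2 • v) = v) :
    (∀ w ∈ genSet d 0, inner ℝ v w = 0) ∧ (∀ w ∈ genSet d 1, inner ℝ v w = 0) := by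
  have h00 : ∀ r ∈ levelSpan (genSet d) 0, inner ℝ v r = 0 := by
    intro r hr
    have : r = 0 := by simpa [levelSpan] using hr
    rw [this, inner_zero_right]
  have h0 := eig_orth hd hT hv 0 (by norm_num) h00
  refine ⟨h0, eig_orth hd hT hv 1 (by norm_num) ?_⟩
  let M : Submodule ℝ (Lp ℝ 2 (muD d)) := LinearMap.ker (innerSL ℝ v).toLinearMap
  have : levelSpan (genSet d) (0 + 1) ≤ M :=
    levelSpan_succ_induction _ 0 M (fun r hr => h00 r hr) (fun r hr => h0 r hr)
  exact fun r hr => this hr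

lemma part_iii {d : ℕ} (hd : 3 ≤ d) :
    ∃ f : EuclideanSpace ℝ (Fin d) → ℝ,
      Integrable (fun x => f x ^ 2 / (1 + ‖x‖ ^ 2) ^ 2) ∧ orthAT d f ∧
      ¬ (f =ᵐ[volume] (fun _ => 0 : EuclideanSpace ℝ (Fin d) → ℝ)) ∧
      4 / ((d : ℝ) * ((d : ℝ) + 2) * ((d : ℝ) + 4)) *
          (∫ x, f x ^ 2 / (1 + ‖x‖ ^ 2) ^ 2) = quadG d f ∧
      quadG d f = 1 / ((d : ℝ) * ((d : ℝ) + 2) ^ 2 * ((d : ℝ) + 4)) * quadF d f := by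
  have hd' : (3 : ℝ) ≤ d := by exact_mod_cast hd
  let i0 : Fin d := ⟨0, by omega⟩
  let i1 : Fin d := ⟨1, by omega⟩
  have h01 : i0 ≠ i1 := by simp [i0, i1]
  set P : MvPolynomial (Fin d) ℝ := MvPolynomial.X i0 * MvPolynomial.X i1 with hPdef
  have hP : P.IsHomogeneous 2 := (MvPolynomial.isHomogeneous_X _ _).mul (MvPolynomial.isHomogeneous_X _ _)
  have hlap : (∑ i, MvPolynomial.pderiv i (MvPolynomial.pderiv i P)) = 0 := by
    refine Finset.sum_eq_zero fun i _ => ?_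
    rw [hPdef, MvPolynomial.pderiv_mul, map_add, MvPolynomial.pderiv_mul, MvPolynomial.pderiv_mul]
    simp only [MvPolynomial.pderiv_X, Pi.single_apply]
    by_cases a : i0 = i
    · have b : i1 ≠ i := fun b => h01 (a.trans b.symm)
      simp [a, b, b.symm]
    · have a' : i ≠ i0 := fun b => a b.symm
      simp [a, a', apply_ite]
  have hlow : ∀ x, lowPart P 2 2 x = 0 := by
    intro x
    unfold lowPart
    rw [hlap]; simp [gen, evP]
  set f : EuclideanSpace ℝ (Fin d) → ℝ := gen P 2 with hfdef
  have hG : Good d (fun x => lam d 2 * f x) f := by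
    have := good_gen hd hP le_rfl
    simpa only [hlow, add_zero] using this
  obtain ⟨v, hvm, hv⟩ := rep_gen hP le_rfl
  obtain ⟨T, hT⟩ := exists_isT hd
  have hTv : T (lam d 2 • v) = v := hT.good hd hG (hv.smul _) hv
  obtain ⟨o0, o1⟩ := eig_orth_all hd hT hTv
  have hl2 := lam_pos hd 2
  have hIntegr : Integrable (fun x => f x ^ 2 / (1 + ‖x‖ ^ 2) ^ 2) := by
    have h2 := hv.memLp
    have := (integrable_muD _).mp h2.integrable_sq
    refine this.congr (Filter.Eventually.of_forall fun x => ?_)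
    simp only [quo]
    rw [← u_wt, wt]
    have := (u_pos x).ne'
    have h2 := (rho_pos x).ne'
    change _ = f x ^ 2 / rho x ^ 2
    field_simp
    rfl
  have hinv : ∀ x, invLap d (fun y => f y / (1 + ‖y‖ ^ 2) ^ 2) x = (lam d 2)⁻¹ * f x := by
    intro x
    have h := (hG.const_mul (lam d 2)⁻¹).green hd x
    rw [← h]
    unfold invLap
    refine integral_congr_ae (Filter.Eventually.of_forall fun y => ?_)
    simp only [inv_mul_cancel_left₀ hl2.ne']
    rfl
  have hC : (∫ x, f x / (1 + ‖x‖ ^ 2) ^ 2 * invLap d (fun y => f y / (1 + ‖y‖ ^ 2) ^ 2) x) =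
      (lam d 2)⁻¹ * ∫ x, f x ^ 2 / (1 + ‖x‖ ^ 2) ^ 2 := by
    simp_rw [hinv]
    rw [← integral_const_mul]
    refine integral_congr_ae (Filter.Eventually.of_forall fun y => ?_)
    simp only; ring
  have hA : (∫ x, ‖gradient f x‖ ^ 2) = lam d 2 * ∫ x, f x ^ 2 / (1 + ‖x‖ ^ 2) ^ 2 := by
    rw [integral_grad fun i => by simpa only [pow_two] using hG.int1 hd hG i]
    simp_rw [pow_two (pd _ f _)]
    rw [← hG.dirichlet hd hG, ← integral_const_mul]
    refine integral_congr_ae (Filter.Eventually.of_forall fun y => ?_)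
    simp only [rho]; ring
  refine ⟨f, hIntegr, ⟨?_, fun i => ?_, ?_⟩, ?_, ?_, ?_⟩
  · obtain ⟨w0, m0, r0⟩ := rep_gen (d := d) (P := 1) (m := 0) (k := 0) (MvPolynomial.isHomogeneous_one _ _) le_rfl
    rw [← o0 w0 m0, hv.inner_eq r0]; simp only [uAT_eq, rho, hfdef]
  · obtain ⟨w, m, r⟩ := rep_gen (d := d) (P := MvPolynomial.X i) (m := 1) (k := 1) (MvPolynomial.isHomogeneous_X _ _) le_rfl
    rw [← o1 w m, hv.inner_eq r]; simp only [atFi_eq, rho, hfdef]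
  · obtain ⟨w0, m0, r0⟩ := rep_gen (d := d) (P := 1) (m := 0) (k := 0) (MvPolynomial.isHomogeneous_one _ _) le_rfl
    obtain ⟨w1, m1, r1⟩ := rep_gen (d := d) (P := 1) (m := 0) (k := 1) (MvPolynomial.isHomogeneous_one _ _) zero_le_one
    have h1 : inner ℝ v ((2 : ℝ) • w1 + (-1 : ℝ) • w0) = 0 := by
      rw [inner_add_right, real_inner_smul_right, real_inner_smul_right, o0 w0 m0, o1 w1 m1]; ring
    rw [← h1, hv.inner_eq ((r1.smul 2).add (r0.smul (-1)))]; simp only [atFlast_eq, rho, hfdef]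
  · intro h
    have h2 := ((gen_continuous P 2).ae_eq_iff_eq volume continuous_const).mp h
    have h3 := congrFun h2 (EuclideanSpace.single i0 1 + EuclideanSpace.single i1 1)
    simp only [gen_eq, mul_eq_zero, div_eq_zero_iff] at h3
    rcases h3 with (h3 | h3) | h3
    · simp [evP, hPdef, h01, h01.symm] at h3
    · exact (pow_pos (rho_pos _) 2).ne' h3
    · exact (u_pos _).ne' h3
  · unfold quadG
    rw [hC, lam_two]
    have : (0 : ℝ) < d := by linarith
    field_simp; ring
  · unfold quadG quadF
    rw [hC, hA, lam_two]
    have : (0 : ℝ) < d := by linarith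
    field_simp

/-- dual spectral estimates around the Aubin-Talenti function:
(i) dual Poincaré inequality for the inverse Laplacian, (ii) two-sided comparison of
`G` with the weighted `L²` norm and with `F`, both achieved by a nonzero function. -/
theorem dual_spectral_estimates (d : ℕ) (hd : 3 ≤ d) :
    (∀ g : EuclideanSpace ℝ (Fin d) → ℝ,
      Integrable (fun x => g x ^ 2 / (1 + ‖x‖ ^ 2) ^ 2) → orthAT d g →
      (∫ x, g x / (1 + ‖x‖ ^ 2) ^ 2 *
          invLap d (fun y => g y / (1 + ‖y‖ ^ 2) ^ 2) x) ≤
        1 / (((d : ℝ) + 2) * ((d : ℝ) + 4)) * ∫ x, g x ^ 2 / (1 + ‖x‖ ^ 2) ^ 2) ∧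
    (∀ f : EuclideanSpace ℝ (Fin d) → ℝ, MemD12 d f →
      Integrable (fun x => f x ^ 2 / (1 + ‖x‖ ^ 2) ^ 2) → orthAT d f →
      4 / ((d : ℝ) * ((d : ℝ) + 2) * ((d : ℝ) + 4)) *
          (∫ x, f x ^ 2 / (1 + ‖x‖ ^ 2) ^ 2) ≤ quadG d f ∧
        quadG d f ≤ 1 / ((d : ℝ) * ((d : ℝ) + 2) ^ 2 * ((d : ℝ) + 4)) * quadF d f) ∧
    (∃ f : EuclideanSpace ℝ (Fin d) → ℝ,
      Integrable (fun x => f x ^ 2 / (1 + ‖x‖ ^ 2) ^ 2) ∧ orthAT d f ∧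
      ¬ (f =ᵐ[volume] (fun _ => 0 : EuclideanSpace ℝ (Fin d) → ℝ)) ∧
      4 / ((d : ℝ) * ((d : ℝ) + 2) * ((d : ℝ) + 4)) *
          (∫ x, f x ^ 2 / (1 + ‖x‖ ^ 2) ^ 2) = quadG d f ∧
      quadG d f = 1 / ((d : ℝ) * ((d : ℝ) + 2) ^ 2 * ((d : ℝ) + 4)) * quadF d f) := by
  exact ⟨part_i hd, part_ii hd, part_iii hd⟩
end
end

section
/- Let d ≥ 3 be an integer, m = (d−2)/(d+2), and let v : [0,T) × ℝ^d → (0,∞) be a smooth positive solution of the fast diffusion equation ∂v/∂t = Δ(v^m). Assume that J(t) = ∫_{ℝ^d} v(t,x)^{2d/(d+2)} dx and H(t) = ∫ v(t) (−Δ)^{−1} v(t) dx − S_d ‖v(t)‖_{2d/(d+2)}² are finite and twice differentiable, and that the identities J'(t) = −(m+1) ∫ |∇ v(t)^m|² dx and H'(t) = 2 J(t)^{2/d} [ S_d ‖∇u(t)‖_2² − ‖u(t)‖_{2^*}² ] hold, where u = v^{(d−2)/(d+2)}. Then H''(t) · J(t) ≤ H'(t) · J'(t) for all t ∈ (0,T).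 -/
open MeasureTheory Real

noncomputable section

theorem gradient_apply_coord {d : ℕ} (f : EuclideanSpace ℝ (Fin d) → ℝ)
    (x : EuclideanSpace ℝ (Fin d)) (i : Fin d) :
    gradient f x i = fderiv ℝ f x (EuclideanSpace.single i 1) := by
  have h : inner ℝ (gradient f x) (EuclideanSpace.single i (1 : ℝ)) =
      fderiv ℝ f x (EuclideanSpace.single i 1) := by
    simp only [gradient, InnerProductSpace.toDual_symm_apply]
  rw [← h, EuclideanSpace.inner_single_right]
  simp

theorem continuous_gradient {d : ℕ} {f : EuclideanSpace ℝ (Fin d) → ℝ}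
    (hf : ContDiff ℝ (⊤ : ℕ∞) f) : Continuous (gradient f) := by
  unfold gradient
  exact (LinearIsometryEquiv.continuous _).comp (hf.continuous_fderiv (by simp))

theorem integral_mul_lap {d : ℕ} {f g : EuclideanSpace ℝ (Fin d) → ℝ}
    (hf : ContDiff ℝ (⊤ : ℕ∞) f) (hfc : HasCompactSupport f) (hg : ContDiff ℝ (⊤ : ℕ∞) g) :
    ∫ x, f x * lap d g x = - ∫ x, inner ℝ (gradient f x) (gradient g x) := by
  have hg1 : ContDiff ℝ (⊤ : ℕ∞) (fderiv ℝ g) := hg.fderiv_right (by simp)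
  have hg2 : ∀ w, ContDiff ℝ (⊤ : ℕ∞) (fun x => fderiv ℝ g x w) := fun w =>
    hg1.clm_apply contDiff_const
  have hf1 : ∀ w, Continuous (fun x => fderiv ℝ f x w) := fun w =>
    (hf.continuous_fderiv (by simp)).clm_apply continuous_const
  have hfc1 : ∀ w, HasCompactSupport (fun x => fderiv ℝ f x w) := fun w => hfc.fderiv_apply ℝ w
  have hg3 : ∀ w, Continuous (fun x => fderiv ℝ (fun y => fderiv ℝ g y w) x w) := fun w =>
    ((hg2 w).continuous_fderiv (by simp)).clm_apply continuous_const
  have e1 : ∀ x, f x * lap d g x = ∑ i : Fin d, f x *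
      fderiv ℝ (fun y => fderiv ℝ g y (EuclideanSpace.single i 1)) x (EuclideanSpace.single i 1) := by
    intro x
    rw [lap, Finset.mul_sum]
    refine Finset.sum_congr rfl fun i _ => ?_
    rw [iteratedFDeriv_two_apply, fderiv_clm_apply (hg1.differentiable (by simp) x) (by fun_prop)]
    simp
  have e2 : ∀ x, inner ℝ (gradient f x) (gradient g x) = ∑ i : Fin d,
      fderiv ℝ f x (EuclideanSpace.single i 1) * fderiv ℝ g x (EuclideanSpace.single i 1) := by
    intro x
    rw [PiLp.inner_apply]
    refine Finset.sum_congr rfl fun i _ => ?_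
    rw [← gradient_apply_coord, ← gradient_apply_coord]
    simp [mul_comm]
  have i1 : ∀ w, Integrable (fun x => f x * fderiv ℝ (fun y => fderiv ℝ g y w) x w) := fun w =>
    (hf.continuous.mul (hg3 w)).integrable_of_hasCompactSupport hfc.mul_right
  have i2 : ∀ w, Integrable (fun x => fderiv ℝ f x w * fderiv ℝ g x w) := fun w =>
    ((hf1 w).mul (hg2 w).continuous).integrable_of_hasCompactSupport (hfc1 w).mul_right
  simp_rw [e1, e2]
  rw [integral_finsetSum _ (fun i _ => i1 _), integral_finsetSum _ (fun i _ => i2 _),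
    ← Finset.sum_neg_distrib]
  refine Finset.sum_congr rfl fun i _ => ?_
  exact integral_mul_fderiv_eq_neg_fderiv_mul_of_integrable (i2 _) (i1 _)
    ((hf.continuous.mul (hg2 _).continuous).integrable_of_hasCompactSupport hfc.mul_right)
    (fun x _ => hf.differentiable (by simp) x)
    (fun x _ => (hg2 _).differentiable (by simp) x)

theorem hasDerivAt_integral_flow {d : ℕ} {T : ℝ} {v w : ℝ → EuclideanSpace ℝ (Fin d) → ℝ}
    (hsmooth : ContDiffOn ℝ (⊤ : ℕ∞) (fun p : ℝ × EuclideanSpace ℝ (Fin d) => v p.1 p.2)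
      (Set.Ioo (0 : ℝ) T ×ˢ (Set.univ : Set (EuclideanSpace ℝ (Fin d)))))
    (hw : ∀ t ∈ Set.Ioo (0 : ℝ) T, ∀ x, HasDerivAt (fun s => v s x) (w t x) t)
    {f : EuclideanSpace ℝ (Fin d) → ℝ} (hf : Continuous f) (hfc : HasCompactSupport f)
    {t : ℝ} (ht : t ∈ Set.Ioo (0 : ℝ) T) :
    HasDerivAt (fun s => ∫ x, f x * v s x) (∫ x, f x * w t x) t := by
  set V : ℝ × EuclideanSpace ℝ (Fin d) → ℝ := fun p => v p.1 p.2 with hV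
  have hopen : IsOpen (Set.Ioo (0 : ℝ) T ×ˢ (Set.univ : Set (EuclideanSpace ℝ (Fin d)))) :=
    isOpen_Ioo.prod isOpen_univ
  have hcd : ContinuousOn (fun p => fderiv ℝ V p (1, 0))
      (Set.Ioo (0 : ℝ) T ×ˢ (Set.univ : Set (EuclideanSpace ℝ (Fin d)))) :=
    (hsmooth.continuousOn_fderiv_of_isOpen hopen (by simp)).clm_apply continuousOn_const
  have hweq : ∀ s ∈ Set.Ioo (0 : ℝ) T, ∀ x, w s x = fderiv ℝ V (s, x) (1, 0) := by
    intro s hs x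
    have hd : HasFDerivAt V (fderiv ℝ V (s, x)) (s, x) :=
      ((hsmooth.contDiffAt (hopen.mem_nhds ⟨hs, Set.mem_univ _⟩)).differentiableAt
        (by simp)).hasFDerivAt
    have hc : HasDerivAt (fun r : ℝ => (r, x)) ((1 : ℝ), (0 : EuclideanSpace ℝ (Fin d))) s :=
      (hasDerivAt_id s).prodMk (hasDerivAt_const s x)
    have hcomp := HasFDerivAt.comp_hasDerivAt (l := V) s hd hc
    exact (hw s hs x).unique hcomp
  have hwc : ∀ s ∈ Set.Ioo (0 : ℝ) T, Continuous (w s) := by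
    intro s hs
    have : w s = fun x => fderiv ℝ V (s, x) (1, 0) := funext (hweq s hs)
    rw [this, ← continuousOn_univ]
    exact hcd.comp (Continuous.continuousOn (by fun_prop)) (fun x _ => ⟨hs, Set.mem_univ _⟩)
  have hvc : ∀ s ∈ Set.Ioo (0 : ℝ) T, Continuous (v s) := by
    intro s hs
    rw [← continuousOn_univ]
    exact hsmooth.continuousOn.comp (f := fun x => (s, x)) (Continuous.continuousOn (by fun_prop))
      (fun x _ => ⟨hs, Set.mem_univ _⟩)
  obtain ⟨a, b, htab, hab⟩ : ∃ a b, t ∈ Set.Ioo a b ∧ Set.Icc a b ⊆ Set.Ioo (0 : ℝ) T := by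
    refine ⟨t / 2, (t + T) / 2, ⟨by linarith [ht.1], by linarith [ht.2]⟩, fun s hs => ⟨?_, ?_⟩⟩
    · linarith [ht.1, hs.1]
    · linarith [ht.2, hs.2]
  have hK : IsCompact (Set.Icc a b ×ˢ tsupport f) := isCompact_Icc.prod hfc
  obtain ⟨C, hC⟩ := hK.exists_bound_of_continuousOn
    (hcd.mono (Set.prod_mono hab (Set.subset_univ _)))
  refine (hasDerivAt_integral_of_dominated_loc_of_deriv_le (F := fun s x => f x * v s x)
    (F' := fun s x => f x * w s x) (bound := fun x => ‖f x‖ * C) (Ioo_mem_nhds htab.1 htab.2)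
    ?_ ?_ ?_ ?_ ?_ ?_).2
  · filter_upwards [Ioo_mem_nhds ht.1 ht.2] with s hs
    exact (hf.mul (hvc s hs)).aestronglyMeasurable
  · exact (hf.mul (hvc t ht)).integrable_of_hasCompactSupport hfc.mul_right
  · exact (hf.mul (hwc t ht)).aestronglyMeasurable
  · refine ae_of_all _ fun x s hs => ?_
    rw [norm_mul]
    by_cases hx : x ∈ tsupport f
    · refine mul_le_mul_of_nonneg_left ?_ (norm_nonneg _)
      rw [hweq s (hab ⟨hs.1.le, hs.2.le⟩) x]
      exact hC (s, x) ⟨⟨hs.1.le, hs.2.le⟩, hx⟩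
    · simp [image_eq_zero_of_notMem_tsupport hx]
  · exact (hf.norm.integrable_of_hasCompactSupport hfc.norm).mul_const _
  · exact ae_of_all _ fun x s hs => (hw s (hab ⟨hs.1.le, hs.2.le⟩) x).const_mul (f x)
theorem second_order_nonneg {F F' : ℝ → ℝ} {t c δ : ℝ} (hδ : 0 < δ)
    (hF : ∀ s ∈ Set.Ico t (t + δ), HasDerivAt F (F' s) s) (h0 : F t = 0)
    (hge : ∀ s ∈ Set.Ico t (t + δ), 0 ≤ F s) (h0' : F' t = 0) (hc : HasDerivAt F' c t) :
    0 ≤ c := by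
  by_contra hneg
  push Not at hneg
  have h1 := (hasDerivAt_iff_tendsto_slope.1 hc).eventually (gt_mem_nhds hneg)
  have h2 : ∀ᶠ s in nhdsWithin t (Set.Ioi t), slope F' t s < 0 :=
    h1.filter_mono (nhdsWithin_mono _ (fun s hs => ne_of_gt hs))
  obtain ⟨b, hb, hb'⟩ := (mem_nhdsGT_iff_exists_Ioo_subset).1 h2
  have hb0 : t < b := hb
  set s := min ((t + b) / 2) (t + δ / 2) with hs
  have hs1 : t < s := lt_min (by linarith) (by linarith)
  have hs2 : s < b := lt_of_le_of_lt (min_le_left _ _) (by linarith)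
  have hs3 : s < t + δ := lt_of_le_of_lt (min_le_right _ _) (by linarith)
  obtain ⟨r, hr, hr'⟩ := exists_hasDerivAt_eq_slope F F' hs1
    (fun x hx => (hF x ⟨hx.1, lt_of_le_of_lt hx.2 hs3⟩).continuousAt.continuousWithinAt)
    (fun x hx => hF x ⟨hx.1.le, hx.2.trans hs3⟩)
  have h3 : 0 ≤ F' r := by
    rw [hr', h0]
    exact div_nonneg (by linarith [hge s ⟨hs1.le, hs3⟩]) (by linarith)
  have h4 : slope F' t r < 0 := hb' ⟨hr.1, hr.2.trans hs2⟩
  rw [slope_def_field, h0', sub_zero] at h4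
  exact absurd h4 (not_lt.2 (div_nonneg h3 (by linarith [hr.1])))

theorem memLp_of_integrable_rpow {α : Type*} [MeasurableSpace α] {μ : Measure α} {f : α → ℝ}
    {p : ℝ} (hp : 0 < p) (hf : ∀ x, 0 ≤ f x) (hm : AEStronglyMeasurable f μ)
    (hi : Integrable (fun x => f x ^ p) μ) : MemLp f (ENNReal.ofReal p) μ := by
  rw [← integrable_norm_rpow_iff hm (by simpa using hp) ENNReal.ofReal_ne_top,
    ENNReal.toReal_ofReal hp.le]
  refine hi.congr (ae_of_all _ fun x => ?_)
  simp [Real.norm_of_nonneg (hf x)]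

theorem norm_gradient_eq {d : ℕ} (f : EuclideanSpace ℝ (Fin d) → ℝ)
    (x : EuclideanSpace ℝ (Fin d)) : ‖gradient f x‖ = ‖fderiv ℝ f x‖ := by
  simp [gradient]

theorem exists_cutoff {d : ℕ} (hd : 3 ≤ d) {u : EuclideanSpace ℝ (Fin d) → ℝ}
    (hu : Continuous u) (h0 : ∀ x, 0 ≤ u x)
    (hi : Integrable (fun x => u x ^ (2 * (d : ℝ) / ((d : ℝ) - 2)))) :
    ∃ φ : ℕ → EuclideanSpace ℝ (Fin d) → ℝ, (∀ n, ContDiff ℝ (⊤ : ℕ∞) (φ n)) ∧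
      (∀ n, HasCompactSupport (φ n)) ∧ (∀ n x, 0 ≤ φ n x) ∧ (∀ n x, φ n x ≤ 1) ∧
      (∀ x, Filter.Tendsto (fun n => φ n x) Filter.atTop (nhds 1)) ∧
      Filter.Tendsto (fun n => ∫ x, u x ^ 2 * ‖gradient (φ n) x‖ ^ 2) Filter.atTop (nhds 0) := by
  have hd3 : (3 : ℝ) ≤ d := by exact_mod_cast hd
  let η : ContDiffBump (0 : EuclideanSpace ℝ (Fin d)) := ⟨1, 2, by norm_num, by norm_num⟩
  have hη : ContDiff ℝ (⊤ : ℕ∞) η := η.contDiff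
  have hηc : Continuous (fderiv ℝ η) := hη.continuous_fderiv (by simp)
  have hη0 : ∀ x, ‖x‖ < 1 → fderiv ℝ η x = 0 := by
    intro x hx
    have : (η : EuclideanSpace ℝ (Fin d) → ℝ) =ᶠ[nhds x] fun _ => 1 := by
      filter_upwards [Metric.isOpen_ball.mem_nhds
        (show x ∈ Metric.ball (0 : EuclideanSpace ℝ (Fin d)) 1 by simpa using hx)] with y hy
      exact η.one_of_mem_closedBall (Metric.ball_subset_closedBall hy)
    rw [this.fderiv_eq]; simp
  set c : ℕ → ℝ := fun n => ((n : ℝ) + 1)⁻¹ with hc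
  have hcpos : ∀ n, 0 < c n := fun n => by positivity
  have hclim : Filter.Tendsto c Filter.atTop (nhds 0) := by
    simpa [hc, one_div] using tendsto_one_div_add_atTop_nhds_zero_nat (𝕜 := ℝ)
  have hsm : ∀ n, ContDiff ℝ (⊤ : ℕ∞) (fun x => η (c n • x)) := fun n =>
    hη.comp (contDiff_const_smul (c n))
  have hcs : ∀ n, HasCompactSupport (fun x => η (c n • x)) := fun n =>
    η.hasCompactSupport.comp_smul (hcpos n).ne'
  refine ⟨fun n x => η (c n • x), hsm, hcs, fun n x => η.nonneg, fun n x => η.le_one, ?_, ?_⟩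
  · intro x
    have h1 : Filter.Tendsto (fun n => η (c n • x)) Filter.atTop (nhds (η ((0 : ℝ) • x))) :=
      (hη.continuous.tendsto _).comp (hclim.smul_const x)
    have h2 : η ((0 : ℝ) • x) = 1 := by
      rw [zero_smul]; exact η.one_of_mem_closedBall (by simp [η])
    rwa [h2] at h1
  set p : ℝ := (d : ℝ) / ((d : ℝ) - 2) with hp
  set q : ℝ := (d : ℝ) / 2 with hq
  have hp0 : 0 < p := by apply div_pos <;> linarith
  have hq0 : 0 < q := by positivity
  have hpq : p.HolderConjugate q := by
    refine ⟨?_, hp0, hq0⟩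
    rw [hp, hq]
    have : (d : ℝ) - 2 ≠ 0 := by linarith
    have : (d : ℝ) ≠ 0 := by linarith
    field_simp
    ring
  set A : ℕ → EuclideanSpace ℝ (Fin d) → ℝ := fun n =>
    Set.indicator {x | (n : ℝ) + 1 ≤ ‖x‖} (fun x => u x ^ 2) with hA
  have hms : ∀ n : ℕ, MeasurableSet {x : EuclideanSpace ℝ (Fin d) | (n : ℝ) + 1 ≤ ‖x‖} := fun n =>
    measurableSet_le measurable_const measurable_norm
  have hA0 : ∀ n x, 0 ≤ A n x := fun n x => Set.indicator_nonneg (fun y _ => sq_nonneg _) x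
  have hApow : ∀ n x, A n x ^ p = Set.indicator {x | (n : ℝ) + 1 ≤ ‖x‖}
      (fun x => u x ^ (2 * (d : ℝ) / ((d : ℝ) - 2))) x := by
    intro n x
    by_cases hx : (n : ℝ) + 1 ≤ ‖x‖
    · simp only [hA, Set.indicator_of_mem (show x ∈ {x | (n : ℝ) + 1 ≤ ‖x‖} from hx)]
      rw [← Real.rpow_natCast, ← Real.rpow_mul (h0 x)]
      congr 1
      rw [hp]; push_cast; ring
    · simp only [hA, Set.indicator_of_notMem (show x ∉ {x | (n : ℝ) + 1 ≤ ‖x‖} from hx)]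
      exact Real.zero_rpow hp0.ne'
  have hAi : ∀ n, Integrable (fun x => A n x ^ p) := by
    intro n
    simp_rw [hApow]
    exact hi.indicator (hms n)
  have hAlim : Filter.Tendsto (fun n => ∫ x, A n x ^ p) Filter.atTop (nhds 0) := by
    rw [← integral_zero (EuclideanSpace ℝ (Fin d)) ℝ]
    refine tendsto_integral_of_dominated_convergence
      (fun x => u x ^ (2 * (d : ℝ) / ((d : ℝ) - 2))) (fun n => (hAi n).aestronglyMeasurable) hi ?_ ?_
    · intro n
      refine ae_of_all _ fun x => ?_
      rw [hApow, Real.norm_of_nonneg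
        (Set.indicator_nonneg (fun y _ => Real.rpow_nonneg (h0 y) _) x)]
      exact Set.indicator_le_self' (fun y _ => Real.rpow_nonneg (h0 y) _) x
    · refine ae_of_all _ fun x => ?_
      refine tendsto_const_nhds.congr' ?_
      obtain ⟨N, hN⟩ := exists_nat_gt ‖x‖
      filter_upwards [Filter.eventually_ge_atTop N] with n hn
      have hn' : (N : ℝ) ≤ n := by exact_mod_cast hn
      rw [hApow, Set.indicator_of_notMem]
      simp only [Set.mem_ofPred_eq, not_le]
      linarith
  set B : ℕ → EuclideanSpace ℝ (Fin d) → ℝ := fun n x =>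
    ‖fderiv ℝ (fun y => η (c n • y)) x‖ ^ 2 with hB
  have hBf : ∀ n x, fderiv ℝ (fun y => η (c n • y)) x = c n • fderiv ℝ η (c n • x) := by
    intro n x
    exact fderiv_comp_smul (f := η) (x := x) (c n)
  have hBpow : ∀ n x, B n x ^ q = ‖fderiv ℝ (fun y => η (c n • y)) x‖ ^ d := by
    intro n x
    simp only [hB]
    rw [← Real.rpow_natCast, ← Real.rpow_mul (norm_nonneg _), ← Real.rpow_natCast]
    congr 1
    rw [hq]; push_cast; ring
  have hBc : ∀ n, Continuous (fun x => ‖fderiv ℝ (fun y => η (c n • y)) x‖) := fun n =>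
    ((hsm n).continuous_fderiv (by simp)).norm
  have hBcs : ∀ n, HasCompactSupport (fun x => ‖fderiv ℝ (fun y => η (c n • y)) x‖) := fun n =>
    ((hcs n).fderiv ℝ).norm
  have hBi : ∀ n, Integrable (fun x => B n x ^ q) := by
    intro n
    simp_rw [hBpow]
    refine ((hBc n).pow d).integrable_of_hasCompactSupport ?_
    exact (hBcs n).comp_left (g := fun y => y ^ d) (by simp; omega)
  have hBint : ∀ n, ∫ x, B n x ^ q = ∫ x, ‖fderiv ℝ η x‖ ^ d := by
    intro n
    simp_rw [hBpow, hBf, norm_smul, mul_pow]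
    rw [integral_const_mul, Measure.integral_comp_smul_of_nonneg volume
      (fun x => ‖fderiv ℝ η x‖ ^ d) (c n) (hR := (hcpos n).le)]
    simp only [finrank_euclideanSpace, Fintype.card_fin, smul_eq_mul]
    rw [Real.norm_of_nonneg (hcpos n).le, ← mul_assoc, mul_inv_cancel₀, one_mul]
    exact pow_ne_zero _ (hcpos n).ne'
  have hkey : ∀ n, ∫ x, u x ^ 2 * ‖gradient (fun x => η (c n • x)) x‖ ^ 2 ≤
      (∫ x, A n x ^ p) ^ (1 / p) * (∫ x, ‖fderiv ℝ η x‖ ^ d) ^ (1 / q) := by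
    intro n
    have e : ∀ x, u x ^ 2 * ‖gradient (fun x => η (c n • x)) x‖ ^ 2 = A n x * B n x := by
      intro x
      rw [norm_gradient_eq]
      by_cases hx : (n : ℝ) + 1 ≤ ‖x‖
      · simp only [hA, Set.indicator_of_mem (show x ∈ {x | (n : ℝ) + 1 ≤ ‖x‖} from hx), hB]
      · have : fderiv ℝ (fun y => η (c n • y)) x = 0 := by
          rw [hBf, hη0, smul_zero]
          rw [norm_smul, Real.norm_of_nonneg (hcpos n).le, hc]
          push Not at hx
          rw [inv_mul_lt_one₀ (by positivity)]
          exact hx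
        simp [hB, this]
    simp_rw [e]
    rw [← hBint n]
    refine integral_mul_le_Lp_mul_Lq_of_nonneg hpq (ae_of_all _ (hA0 n))
      (ae_of_all _ fun x => sq_nonneg _) ?_ ?_
    · exact memLp_of_integrable_rpow hp0 (hA0 n)
        ((hu.pow 2).aestronglyMeasurable.indicator (hms n)) (hAi n)
    · exact memLp_of_integrable_rpow hq0 (fun x => sq_nonneg _)
        ((hBc n).pow 2).aestronglyMeasurable (hBi n)
  refine squeeze_zero (fun n => integral_nonneg fun x => by positivity) hkey ?_
  have h3 := (hAlim.rpow_const (p := 1 / p) (Or.inr (by positivity))).mul_const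
    ((∫ x, ‖fderiv ℝ η x‖ ^ d) ^ (1 / q))
  rwa [Real.zero_rpow (by positivity), zero_mul] at h3

theorem inner_gradient_mul_le {d : ℕ} {f g h : EuclideanSpace ℝ (Fin d) → ℝ}
    (hf : ContDiff ℝ (⊤ : ℕ∞) f) (hg : ContDiff ℝ (⊤ : ℕ∞) g)
    (hf0 : ∀ x, 0 ≤ f x) (hf1 : ∀ x, f x ≤ 1) (hg0 : ∀ x, 0 ≤ g x)
    {ε : ℝ} (hε : 0 < ε) (x : EuclideanSpace ℝ (Fin d)) :
    inner ℝ (gradient (fun y => f y * g y) x) (gradient h x) ≤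
      (1 + ε) / 2 * ‖gradient h x‖ ^ 2 + 1 / 2 * ‖gradient g x‖ ^ 2 +
        1 / (2 * ε) * (g x ^ 2 * ‖gradient f x‖ ^ 2) := by
  have e : inner ℝ (gradient (fun y => f y * g y) x) (gradient h x) =
      f x * inner ℝ (gradient g x) (gradient h x) + g x * inner ℝ (gradient f x) (gradient h x) := by
    simp only [gradient, InnerProductSpace.toDual_symm_apply]
    have := fderiv_fun_mul (hf.differentiable (by simp) x) (hg.differentiable (by simp) x)
    rw [this]
    simp
  rw [e]
  set a := ‖gradient g x‖
  set b := ‖gradient h x‖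
  set k := ‖gradient f x‖
  have ha : 0 ≤ a := norm_nonneg _
  have hb : 0 ≤ b := norm_nonneg _
  have hk : 0 ≤ k := norm_nonneg _
  have h1 : f x * inner ℝ (gradient g x) (gradient h x) ≤ a * b := by
    calc f x * inner ℝ (gradient g x) (gradient h x) ≤ f x * (a * b) :=
          mul_le_mul_of_nonneg_left (real_inner_le_norm _ _) (hf0 x)
      _ ≤ 1 * (a * b) := mul_le_mul_of_nonneg_right (hf1 x) (by positivity)
      _ = a * b := one_mul _
  have h2 : g x * inner ℝ (gradient f x) (gradient h x) ≤ g x * k * b := by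
    rw [mul_assoc]
    exact mul_le_mul_of_nonneg_left (real_inner_le_norm _ _) (hg0 x)
  have h3 : g x * k * b ≤ ε / 2 * b ^ 2 + 1 / (2 * ε) * (g x ^ 2 * k ^ 2) := by
    have : ε / 2 * b ^ 2 + 1 / (2 * ε) * (g x ^ 2 * k ^ 2) - g x * k * b =
        1 / (2 * ε) * (ε * b - g x * k) ^ 2 := by
      field_simp
      ring
    have h4 : 0 ≤ 1 / (2 * ε) * (ε * b - g x * k) ^ 2 := by positivity
    linarith
  nlinarith [sq_nonneg (a - b)]

theorem hasCompactSupport_gradient {d : ℕ} {f : EuclideanSpace ℝ (Fin d) → ℝ}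
    (hf : HasCompactSupport f) : HasCompactSupport (gradient f) := by
  refine (hf.fderiv ℝ).mono fun x hx => ?_
  simp only [Function.mem_support] at hx ⊢
  intro h0
  exact hx (by rw [← norm_eq_zero, norm_gradient_eq, h0, norm_zero])

theorem integral_inner_gradient_mul_le {d : ℕ} {f g h : EuclideanSpace ℝ (Fin d) → ℝ}
    (hf : ContDiff ℝ (⊤ : ℕ∞) f) (hg : ContDiff ℝ (⊤ : ℕ∞) g) (hh : ContDiff ℝ (⊤ : ℕ∞) h)
    (hfc : HasCompactSupport f)
    (hf0 : ∀ x, 0 ≤ f x) (hf1 : ∀ x, f x ≤ 1) (hg0 : ∀ x, 0 ≤ g x)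
    (i2 : Integrable (fun x => ‖gradient g x‖ ^ 2))
    (i1 : Integrable (fun x => ‖gradient h x‖ ^ 2))
    {ε : ℝ} (hε : 0 < ε) :
    ∫ x, inner ℝ (gradient (fun y => f y * g y) x) (gradient h x) ≤
      (1 + ε) / 2 * (∫ x, ‖gradient h x‖ ^ 2) + 1 / 2 * (∫ x, ‖gradient g x‖ ^ 2) +
        1 / (2 * ε) * ∫ x, g x ^ 2 * ‖gradient f x‖ ^ 2 := by
  have i3 : Integrable (fun x => g x ^ 2 * ‖gradient f x‖ ^ 2) := by
    refine ((hg.continuous.pow 2).mul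
      ((continuous_gradient hf).norm.pow 2)).integrable_of_hasCompactSupport ?_
    refine (hasCompactSupport_gradient hfc).mono fun x hx => ?_
    simp only [Function.mem_support] at hx ⊢
    intro h0
    exact hx (by simp [h0])
  have i4 : Integrable (fun x => inner ℝ (gradient (fun y => f y * g y) x) (gradient h x)) := by
    have hfg : ContDiff ℝ (⊤ : ℕ∞) (fun y => f y * g y) := hf.mul hg
    have hfgc : HasCompactSupport (fun y => f y * g y) := hfc.mul_right
    refine ((continuous_gradient hfg).inner
      (continuous_gradient hh)).integrable_of_hasCompactSupport ?_
    refine (hasCompactSupport_gradient hfgc).mono fun x hx => ?_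
    simp only [Function.mem_support] at hx ⊢
    intro h0
    exact hx (by rw [h0, inner_zero_left])
  have j1 := i1.const_mul ((1 + ε) / 2)
  have j2 := i2.const_mul (1 / 2)
  have j3 := i3.const_mul (1 / (2 * ε))
  have h6 := integral_mono i4 ((j1.add j2).add j3)
    (fun x => inner_gradient_mul_le hf hg hf0 hf1 hg0 hε x)
  refine h6.trans (le_of_eq ?_)
  rw [integral_add' (j1.add j2) j3, integral_add' j1 j2, integral_const_mul, integral_const_mul,
    integral_const_mul]

theorem flow_ineq {d : ℕ} (hd : 3 ≤ d) {T : ℝ}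
    {v : ℝ → EuclideanSpace ℝ (Fin d) → ℝ} {m p : ℝ}
    (hm : m = ((d : ℝ) - 2) / ((d : ℝ) + 2)) (hp : p = 2 * (d : ℝ) / ((d : ℝ) + 2))
    (hpos : ∀ t ∈ Set.Ioo (0 : ℝ) T, ∀ x, 0 < v t x)
    (hsmooth : ContDiffOn ℝ (⊤ : ℕ∞) (fun p : ℝ × EuclideanSpace ℝ (Fin d) => v p.1 p.2)
      (Set.Ioo (0 : ℝ) T ×ˢ (Set.univ : Set (EuclideanSpace ℝ (Fin d)))))
    (hpde : ∀ t ∈ Set.Ioo (0 : ℝ) T, ∀ x,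
      HasDerivAt (fun s => v s x) (lap d (fun y => v t y ^ m) x) t)
    {J K : ℝ → ℝ}
    (hint : ∀ t ∈ Set.Ioo (0 : ℝ) T, Integrable (fun x => v t x ^ p))
    (hJ : ∀ t ∈ Set.Ioo (0 : ℝ) T, J t = ∫ x, v t x ^ p)
    (hK : ∀ t ∈ Set.Ioo (0 : ℝ) T, K t = ∫ x, ‖gradient (fun y => v t y ^ m) x‖ ^ 2)
    (hJ' : ∀ t ∈ Set.Ioo (0 : ℝ) T, HasDerivAt J (-p * K t) t)
    {t s : ℝ} (ht : 0 < t) (hts : t ≤ s) (hs : s < T)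
    (hgi : ∀ r ∈ Set.Icc t s, Integrable (fun x => ‖gradient (fun y => v r y ^ m) x‖ ^ 2)) :
    J t - 1 / 2 * ((J t - J s) / p + K t * (s - t)) ≤ J s ^ (1 / p) * J t ^ (1 - 1 / p) := by
  have hd3 : (3 : ℝ) ≤ d := by exact_mod_cast hd
  have hd2 : (d : ℝ) - 2 ≠ 0 := by linarith
  have hd0 : (d : ℝ) ≠ 0 := by linarith
  have hd4 : (d : ℝ) + 2 ≠ 0 := by linarith
  have hp0 : 0 < p := by rw [hp]; positivity
  have hsub : ∀ r ∈ Set.Icc t s, r ∈ Set.Ioo (0 : ℝ) T := fun r hr =>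
    ⟨ht.trans_le hr.1, hr.2.trans_lt hs⟩
  have htm : t ∈ Set.Icc t s := ⟨le_rfl, hts⟩
  have hsm : s ∈ Set.Icc t s := ⟨hts, le_rfl⟩
  have ht' := hsub t htm
  have hs' := hsub s hsm
  have hvs : ∀ r ∈ Set.Icc t s, ContDiff ℝ (⊤ : ℕ∞) (v r) := by
    intro r hr
    rw [← contDiffOn_univ]
    exact hsmooth.comp (f := fun x => (r, x)) (ContDiff.contDiffOn (by fun_prop))
      (fun x _ => ⟨hsub r hr, Set.mem_univ _⟩)
  have hus : ∀ r ∈ Set.Icc t s, ContDiff ℝ (⊤ : ℕ∞) (fun y => v r y ^ m) := fun r hr =>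
    (hvs r hr).rpow_const_of_ne (fun x => (hpos r (hsub r hr) x).ne')
  set u : EuclideanSpace ℝ (Fin d) → ℝ := fun y => v t y ^ m with hu
  have hu0 : ∀ x, 0 ≤ u x := fun x => Real.rpow_nonneg (hpos t ht' x).le _
  have hustar : ∀ x, u x ^ (2 * (d : ℝ) / ((d : ℝ) - 2)) = v t x ^ p := by
    intro x
    rw [hu]
    simp only
    rw [← Real.rpow_mul (hpos t ht' x).le]
    congr 1
    rw [hm, hp]
    field_simp
  have huv : ∀ x, u x * v t x = v t x ^ p := by
    intro x
    rw [hu]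
    simp only
    rw [← Real.rpow_add_one (hpos t ht' x).ne']
    congr 1
    rw [hm, hp]
    field_simp
    ring
  have hui : Integrable (fun x => u x ^ (2 * (d : ℝ) / ((d : ℝ) - 2))) := by
    simp_rw [hustar]; exact hint t ht'
  have hpq : p.HolderConjugate (2 * (d : ℝ) / ((d : ℝ) - 2)) := by
    refine ⟨?_, hp0, div_pos (by linarith) (by linarith)⟩
    rw [hp]
    field_simp
    ring
  have hq0 : 0 < 2 * (d : ℝ) / ((d : ℝ) - 2) := hpq.symm.pos
  -- Hölder
  have hmem1 : MemLp (v s) (ENNReal.ofReal p) :=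
    memLp_of_integrable_rpow hp0 (fun x => (hpos s hs' x).le)
      (hvs s hsm).continuous.aestronglyMeasurable (hint s hs')
  have hmem2 : MemLp u (ENNReal.ofReal (2 * (d : ℝ) / ((d : ℝ) - 2))) :=
    memLp_of_integrable_rpow hq0 hu0 (hus t htm).continuous.aestronglyMeasurable hui
  have hholder : ∫ x, v s x * u x ≤ J s ^ (1 / p) * J t ^ (1 - 1 / p) := by
    have h1 := integral_mul_le_Lp_mul_Lq_of_nonneg hpq
      (ae_of_all _ fun x => (hpos s hs' x).le) (ae_of_all _ hu0) hmem1 hmem2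
    simp_rw [hustar] at h1
    rw [← hJ s hs', ← hJ t ht'] at h1
    have h2 : 1 / (2 * (d : ℝ) / ((d : ℝ) - 2)) = 1 - 1 / p := by
      rw [hp]; field_simp; ring
    rwa [h2] at h1
  have hvui : Integrable (fun x => v s x * u x) := by
    have : ENNReal.HolderConjugate (ENNReal.ofReal p)
        (ENNReal.ofReal (2 * (d : ℝ) / ((d : ℝ) - 2))) := hpq.ennrealOfReal
    exact hmem1.integrable_mul hmem2
  obtain ⟨φ, hφ, hφc, hφ0, hφ1, hφl, hφe⟩ := exists_cutoff hd (hus t htm).continuous hu0 hui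
  -- the cut-off inequality
  have hcut : ∀ n, ∀ ε > 0, (∫ x, φ n x * u x * v t x) - ((1 + ε) / 2 * ((J t - J s) / p) +
      (1 / 2 * K t + 1 / (2 * ε) * ∫ x, u x ^ 2 * ‖gradient (φ n) x‖ ^ 2) * (s - t)) ≤
      J s ^ (1 / p) * J t ^ (1 - 1 / p) := by
    intro n ε hε
    set e := ∫ x, u x ^ 2 * ‖gradient (φ n) x‖ ^ 2 with he
    have hfs : ContDiff ℝ (⊤ : ℕ∞) (fun x => φ n x * u x) := (hφ n).mul (hus t htm)
    have hfc : HasCompactSupport (fun x => φ n x * u x) := (hφc n).mul_right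
    have hqd : ∀ r ∈ Set.Icc t s, HasDerivAt (fun r => ∫ x, φ n x * u x * v r x)
        (∫ x, φ n x * u x * lap d (fun y => v r y ^ m) x) r := fun r hr =>
      hasDerivAt_integral_flow hsmooth hpde hfs.continuous hfc (hsub r hr)
    have hqb : ∀ r ∈ Set.Icc t s, -((1 + ε) / 2 * K r + 1 / 2 * K t + 1 / (2 * ε) * e) ≤
        ∫ x, φ n x * u x * lap d (fun y => v r y ^ m) x := by
      intro r hr
      rw [integral_mul_lap hfs hfc (hus r hr), neg_le_neg_iff]
      rw [hK r (hsub r hr), hK t ht']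
      exact integral_inner_gradient_mul_le (hφ n) (hus t htm) (hus r hr) (hφc n) (hφ0 n) (hφ1 n)
        hu0 (hgi t htm) (hgi r hr) hε
    set g : ℝ → ℝ := fun r => (∫ x, φ n x * u x * v r x) + ((1 + ε) / 2 * ((J t - J r) / p) +
      (1 / 2 * K t + 1 / (2 * ε) * e) * (r - t)) with hg
    have hgd : ∀ r ∈ Set.Icc t s, HasDerivAt g
        ((∫ x, φ n x * u x * lap d (fun y => v r y ^ m) x) +
          ((1 + ε) / 2 * ((-(-p * K r)) / p) + (1 / 2 * K t + 1 / (2 * ε) * e) * 1)) r := by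
      intro r hr
      exact (hqd r hr).add (((((hJ' r (hsub r hr)).const_sub (J t)).div_const p).const_mul _).add
        (((hasDerivAt_id r).sub_const t).const_mul _))
    have hmono : MonotoneOn g (Set.Icc t s) := by
      refine monotoneOn_of_deriv_nonneg (convex_Icc t s)
        (fun r hr => (hgd r hr).continuousAt.continuousWithinAt)
        (fun r hr => (hgd r (interior_subset hr)).differentiableAt.differentiableWithinAt) ?_
      intro r hr
      rw [(hgd r (interior_subset hr)).deriv]
      have h7 := hqb r (interior_subset hr)
      have h8 : (-(-p * K r)) / p = K r := by field_simp
      rw [h8]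
      linarith
    have h9 := hmono htm hsm hts
    have h10 : ∫ x, φ n x * u x * v s x ≤ ∫ x, v s x * u x := by
      refine integral_mono ((hfs.continuous.mul
        (hvs s hsm).continuous).integrable_of_hasCompactSupport hfc.mul_right) hvui ?_
      intro x
      have := mul_le_mul_of_nonneg_right (hφ1 n x) (mul_nonneg (hu0 x) (hpos s hs' x).le)
      simp only
      nlinarith
    simp only [hg, sub_self, zero_div, mul_zero, add_zero] at h9
    linarith
  -- pass to the limit
  have hlim1 : Filter.Tendsto (fun n => ∫ x, φ n x * u x * v t x) Filter.atTop (nhds (J t)) := by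
    rw [hJ t ht']
    refine tendsto_integral_of_dominated_convergence (fun x => v t x ^ p) ?_ (hint t ht') ?_ ?_
    · intro n
      exact (((hφ n).continuous.mul (hus t htm).continuous).mul
        (hvs t htm).continuous).aestronglyMeasurable
    · intro n
      refine ae_of_all _ fun x => ?_
      have hnn : 0 ≤ v t x ^ p := Real.rpow_nonneg (hpos t ht' x).le _
      rw [mul_assoc, huv, Real.norm_of_nonneg (mul_nonneg (hφ0 n x) hnn)]
      exact mul_le_of_le_one_left hnn (hφ1 n x)
    · refine ae_of_all _ fun x => ?_
      simp_rw [mul_assoc, huv]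
      simpa using (hφl x).mul_const (v t x ^ p)
  have hε : ∀ ε > 0, J t - ((1 + ε) / 2 * ((J t - J s) / p) + 1 / 2 * K t * (s - t)) ≤
      J s ^ (1 / p) * J t ^ (1 - 1 / p) := by
    intro ε hε
    have h1 := hlim1.sub (((((hφe.const_mul (1 / (2 * ε))).const_add (1 / 2 * K t)).mul_const
      (s - t)).const_add ((1 + ε) / 2 * ((J t - J s) / p))))
    have h2 := le_of_tendsto' h1 (fun n => hcut n ε hε)
    simpa using h2
  have hlim2 : Filter.Tendsto (fun ε : ℝ => J t - ((1 + ε) / 2 * ((J t - J s) / p) +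
      1 / 2 * K t * (s - t))) (nhdsWithin 0 (Set.Ioi 0))
      (nhds (J t - ((1 + 0) / 2 * ((J t - J s) / p) + 1 / 2 * K t * (s - t)))) := by
    have : Continuous (fun ε : ℝ => J t - ((1 + ε) / 2 * ((J t - J s) / p) +
      1 / 2 * K t * (s - t))) := by fun_prop
    exact (this.tendsto 0).mono_left nhdsWithin_le_nhds
  have h3 := le_of_tendsto hlim2 (by filter_upwards [self_mem_nhdsWithin] with ε h using hε ε h)
  linarith

/-- the key concavity estimate `H'' J ≤ H' J'` along the fast diffusion
flow `∂v/∂t = Δ(v^m)`, `m = (d−2)/(d+2)`, for all dimensions `d ≥ 3`. -/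
theorem flow_concavity (d : ℕ) (hd : 3 ≤ d) (T : ℝ) (hT : 0 < T)
    (v : ℝ → EuclideanSpace ℝ (Fin d) → ℝ)
    (hpos : ∀ t ∈ Set.Ico (0 : ℝ) T, ∀ x, 0 < v t x)
    (hsmooth : ContDiffOn ℝ (⊤ : ℕ∞) (fun p : ℝ × EuclideanSpace ℝ (Fin d) => v p.1 p.2)
      (Set.Ico (0 : ℝ) T ×ˢ (Set.univ : Set (EuclideanSpace ℝ (Fin d)))))
    (hpde : ∀ t ∈ Set.Ico (0 : ℝ) T, ∀ x,
      HasDerivAt (fun s => v s x)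
        (lap d (fun y => v t y ^ (((d : ℝ) - 2) / ((d : ℝ) + 2))) x) t)
    (J J' H H' H'' : ℝ → ℝ)
    (hint1 : ∀ t ∈ Set.Ico (0 : ℝ) T,
      Integrable (fun x => v t x ^ (2 * (d : ℝ) / ((d : ℝ) + 2))))
    (hint2 : ∀ t ∈ Set.Ico (0 : ℝ) T,
      Integrable (fun x => v t x * invLap d (v t) x))
    (hJdef : ∀ t ∈ Set.Ico (0 : ℝ) T,
      J t = ∫ x, v t x ^ (2 * (d : ℝ) / ((d : ℝ) + 2)))
    (hHdef : ∀ t ∈ Set.Ico (0 : ℝ) T,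
      H t = (∫ x, v t x * invLap d (v t) x) -
        sobolevConst d *
          (∫ x, v t x ^ (2 * (d : ℝ) / ((d : ℝ) + 2))) ^ (((d : ℝ) + 2) / (d : ℝ)))
    (hJ' : ∀ t ∈ Set.Ico (0 : ℝ) T, HasDerivAt J (J' t) t)
    (hJ'eq : ∀ t ∈ Set.Ico (0 : ℝ) T,
      J' t = -((((d : ℝ) - 2) / ((d : ℝ) + 2)) + 1) *
        ∫ x, ‖gradient (fun y => v t y ^ (((d : ℝ) - 2) / ((d : ℝ) + 2))) x‖ ^ 2)
    (hH' : ∀ t ∈ Set.Ico (0 : ℝ) T, HasDerivAt H (H' t) t)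
    (hH'' : ∀ t ∈ Set.Ico (0 : ℝ) T, HasDerivAt H' (H'' t) t)
    (hH'eq : ∀ t ∈ Set.Ico (0 : ℝ) T,
      H' t = 2 * J t ^ ((2 : ℝ) / (d : ℝ)) *
        (sobolevConst d *
            (∫ x, ‖gradient (fun y => v t y ^ (((d : ℝ) - 2) / ((d : ℝ) + 2))) x‖ ^ 2) -
          J t ^ (((d : ℝ) - 2) / (d : ℝ)))) :
    ∀ t ∈ Set.Ioo (0 : ℝ) T, H'' t * J t ≤ H' t * J' t := by
  have hd3 : (3 : ℝ) ≤ d := by exact_mod_cast hd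
  have hd2 : (d : ℝ) - 2 ≠ 0 := by linarith
  have hd0 : (d : ℝ) ≠ 0 := by linarith
  have hd4 : (d : ℝ) + 2 ≠ 0 := by linarith
  have hIoo : ∀ t ∈ Set.Ioo (0 : ℝ) T, t ∈ Set.Ico (0 : ℝ) T := fun t ht => ⟨ht.1.le, ht.2⟩
  have hS : 0 < sobolevConst d := by
    unfold sobolevConst
    have h1 : 0 < Real.Gamma (d : ℝ) := Real.Gamma_pos_of_pos (by linarith)
    have h2 : 0 < Real.Gamma ((d : ℝ) / 2) := Real.Gamma_pos_of_pos (by linarith)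
    have h3 : 0 < (d : ℝ) - 2 := by linarith
    have h4 : 0 < (d : ℝ) := by linarith
    positivity
  set S := sobolevConst d with hSdef
  obtain ⟨m, hm⟩ : ∃ m, m = ((d : ℝ) - 2) / ((d : ℝ) + 2) := ⟨_, rfl⟩
  obtain ⟨p, hp⟩ : ∃ p, p = 2 * (d : ℝ) / ((d : ℝ) + 2) := ⟨_, rfl⟩
  have hmp : m + 1 = p := by rw [hm, hp]; field_simp; ring
  have hp0 : 0 < p := by rw [hp]; positivity
  rw [← hm] at hpde hJ'eq hH'eq
  rw [← hp] at hint1 hJdef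
  rw [hmp] at hJ'eq
  obtain ⟨K, hK⟩ : ∃ K : ℝ → ℝ, ∀ t, K t = ∫ x, ‖gradient (fun y => v t y ^ m) x‖ ^ 2 :=
    ⟨_, fun _ => rfl⟩
  simp_rw [← hK] at hJ'eq hH'eq
  have hK0 : ∀ t, 0 ≤ K t := fun t => by
    rw [hK]; exact integral_nonneg fun x => sq_nonneg _
  have hvc : ∀ t ∈ Set.Ico (0 : ℝ) T, 0 < J t := by
    intro t ht
    rw [hJdef t ht, integral_pos_iff_support_of_nonneg
      (fun x => Real.rpow_nonneg (hpos t ht x).le _) (hint1 t ht)]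
    have : Function.support (fun x => v t x ^ p) = Set.univ := by
      ext x
      simp only [Function.mem_support, Set.mem_univ, iff_true]
      exact (Real.rpow_pos_of_pos (hpos t ht x) _).ne'
    rw [this]
    exact isOpen_univ.measure_pos _ Set.univ_nonempty
  have hJd : ∀ t ∈ Set.Ioo (0 : ℝ) T, HasDerivAt J (-p * K t) t := fun t ht => by
    rw [← hJ'eq t (hIoo t ht)]; exact hJ' t (hIoo t ht)
  intro t ht
  have ht1 := hIoo t ht
  have hJ0 := hvc t ht1
  have hJt := hJd t ht
  have hnear : ∀ᶠ r in nhds t, r ∈ Set.Ioo (0 : ℝ) T := Ioo_mem_nhds ht.1 ht.2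
  obtain ⟨a, ha⟩ : ∃ a, a = (2 : ℝ) / d := ⟨_, rfl⟩
  obtain ⟨b, hb⟩ : ∃ b, b = ((d : ℝ) - 2) / d := ⟨_, rfl⟩
  have hab : b = 1 - a := by rw [ha, hb]; field_simp
  rw [← ha, ← hb] at hH'eq
  have hKd : DifferentiableAt ℝ K t := by
    have e : K =ᶠ[nhds t] fun r => (H' r / (2 * J r ^ a) + J r ^ b) / S := by
      filter_upwards [hnear] with r hr
      have h1 := Real.rpow_pos_of_pos (hvc r (hIoo r hr)) a
      rw [hH'eq r (hIoo r hr)]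
      field_simp
      ring
    have hJa := hJt.differentiableAt.rpow_const (p := a) (Or.inl hJ0.ne')
    have hJb := hJt.differentiableAt.rpow_const (p := b) (Or.inl hJ0.ne')
    have h1 := Real.rpow_pos_of_pos hJ0 a
    exact ((((hH'' t ht1).differentiableAt.div (hJa.const_mul 2) (by positivity)).add
      hJb).div_const S).congr_of_eventuallyEq e
  obtain ⟨k, hk⟩ : ∃ k, HasDerivAt K k t := ⟨_, hKd.hasDerivAt⟩
  -- the main estimate
  have hmain : k * J t + 2 * m * K t ^ 2 ≤ 0 := by
    rcases (hK0 t).eq_or_lt with h0 | hKpos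
    · have hmin : IsLocalMin K t := Filter.Eventually.of_forall fun r => by rw [← h0]; exact hK0 r
      have : k = 0 := hmin.hasDerivAt_eq_zero hk
      rw [this, ← h0]; simp
    · have hev : ∀ᶠ r in nhds t, 0 < K r ∧ r ∈ Set.Ioo (0 : ℝ) T :=
        (hk.continuousAt.eventually (lt_mem_nhds hKpos)).and hnear
      obtain ⟨δ, hδ, hball⟩ := Metric.eventually_nhds_iff.1 hev
      have hev' : ∀ r ∈ Set.Ico t (t + δ), 0 < K r ∧ r ∈ Set.Ioo (0 : ℝ) T := by
        intro r hr
        refine hball ?_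
        rw [Real.dist_eq, abs_of_nonneg (by linarith [hr.1])]
        linarith [hr.2]
      have hgi : ∀ r ∈ Set.Ico t (t + δ),
          Integrable (fun x => ‖gradient (fun y => v r y ^ m) x‖ ^ 2) := by
        intro r hr
        by_contra hni
        have h1 := (hev' r hr).1
        rw [hK, integral_undef hni] at h1
        exact lt_irrefl _ h1
      obtain ⟨θ, hθ⟩ : ∃ θ, θ = 1 / p := ⟨_, rfl⟩
      have hθp : θ * p = 1 := by rw [hθ]; field_simp
      have hone : J t ^ (θ - 1) * J t ^ (1 - θ) = 1 := by
        rw [← Real.rpow_add hJ0]; simp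
      have htwo : J t ^ (θ - 1 - 1) * J t ^ (1 - θ) * J t = 1 := by
        rw [← Real.rpow_add hJ0, ← Real.rpow_add_one hJ0.ne',
          show θ - 1 - 1 + (1 - θ) + 1 = 0 by ring, Real.rpow_zero]
      have hc := second_order_nonneg (t := t)
        (F := fun s => J s ^ θ * J t ^ (1 - θ) -
          (J t - 1 / 2 * ((J t - J s) / p + K t * (s - t))))
        (F' := fun s => -(K s * J s ^ (θ - 1)) * J t ^ (1 - θ) + 1 / 2 * (K s + K t))
        (c := -(k * J t ^ (θ - 1) + K t * (-p * K t * (θ - 1) * J t ^ (θ - 1 - 1))) *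
          J t ^ (1 - θ) + 1 / 2 * k) hδ ?_ ?_ ?_ ?_ ?_
      · have e : (-(k * J t ^ (θ - 1) + K t * (-p * K t * (θ - 1) * J t ^ (θ - 1 - 1))) *
          J t ^ (1 - θ) + 1 / 2 * k) * J t = -(k * J t) / 2 - m * K t ^ 2 := by
          have hm' : m = p - 1 := by linarith
          rw [hm']
          linear_combination (-k * J t) * hone + (K t ^ 2 * p * (θ - 1)) * htwo + K t ^ 2 * hθp
        have := mul_nonneg hc hJ0.le
        rw [e] at this
        linarith
      · intro s hs
        have hs1 := (hev' s hs).2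
        have hJs := hvc s (hIoo s hs1)
        have h1 := ((hJd s hs1).rpow_const (p := θ) (Or.inl hJs.ne')).mul_const (J t ^ (1 - θ))
        have h2 := (((((hJd s hs1).const_sub (J t)).div_const p).add
          (((hasDerivAt_id s).sub_const t).const_mul (K t))).const_mul (1 / 2)).const_sub (J t)
        refine (h1.sub h2).congr_deriv ?_
        have h3 : (-(-p * K s)) / p = K s := by field_simp
        rw [h3]
        linear_combination (-K s * J s ^ (θ - 1) * J t ^ (1 - θ)) * hθp
      · simp only [sub_self, zero_div, mul_zero, add_zero, sub_zero]
        rw [← Real.rpow_add hJ0]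
        simp
      · intro s hs
        have hs1 := (hev' s hs).2
        have h1 := flow_ineq hd hm hp (fun t ht => hpos t (hIoo t ht))
          (hsmooth.mono (Set.prod_mono Set.Ioo_subset_Ico_self (Set.Subset.refl _)))
          (fun t ht => hpde t (hIoo t ht)) (fun t ht => hint1 t (hIoo t ht))
          (fun t ht => hJdef t (hIoo t ht)) (fun t _ => hK t) hJd ht.1 hs.1 hs1.2
          (fun r hr => hgi r ⟨hr.1, lt_of_le_of_lt hr.2 hs.2⟩)
        rw [← hθ] at h1
        linarith
      · linear_combination (-K t) * hone
      · exact ((hk.mul (hJt.rpow_const (p := θ - 1) (Or.inl hJ0.ne'))).neg.mul_const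
          (J t ^ (1 - θ))).add ((hk.add_const (K t)).const_mul (1 / 2))
  -- conclusion
  have hH2 : H'' t = 2 * (-p * K t * a * J t ^ (a - 1)) * (S * K t - J t ^ b) +
      2 * J t ^ a * (S * k - -p * K t * b * J t ^ (b - 1)) := by
    have e : H' =ᶠ[nhds t] fun r => 2 * J r ^ a * (S * K r - J r ^ b) := by
      filter_upwards [hnear] with r hr using hH'eq r (hIoo r hr)
    have h1 := ((hJt.rpow_const (p := a) (Or.inl hJ0.ne')).const_mul 2).mul
      ((hk.const_mul S).sub (hJt.rpow_const (p := b) (Or.inl hJ0.ne')))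
    exact (hH'' t ht1).unique (h1.congr_of_eventuallyEq e)
  have ea : J t ^ (a - 1) * J t = J t ^ a := by
    rw [← Real.rpow_add_one hJ0.ne']; simp
  have eb : J t ^ (b - 1) * J t = J t ^ b := by
    rw [← Real.rpow_add_one hJ0.ne']; simp
  have hpa : p * (1 - a) = 2 * m := by
    rw [hp, ha, hm]; field_simp
  have hfin : H'' t * J t - H' t * J' t =
      2 * S * J t ^ a * (k * J t + 2 * m * K t ^ 2) := by
    rw [hH2, hH'eq t ht1, hJ'eq t ht1]
    linear_combination (2 * (-p * K t * a) * (S * K t - J t ^ b)) * ea +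
      (2 * J t ^ a * (p * K t * b)) * eb + (2 * S * J t ^ a * K t ^ 2) * hpa +
      (2 * J t ^ a * p * K t * J t ^ b) * hab
  have hneg : 2 * S * J t ^ a * (k * J t + 2 * m * K t ^ 2) ≤ 0 :=
    mul_nonpos_of_nonneg_of_nonpos
      (by have := Real.rpow_pos_of_pos hJ0 a; positivity) hmain
  linarith
end
end
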